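/- arXiv:math/0703695 — 11 statements merged into one kernel-verified Lean document; each statement's English description precedes it below -/
import Mathlib

section
/- Assume μ_i ≥ i − 1 for all i = 1,…,n. Then the ideals I_{λ−μ} and Ī_{λ−μ} have the same number of minimal generators; namely, the smallest cardinality of a generating set of the specialized ideal Ī_{λ−μ} of S equals |λ| − |μ| = (λ_1 − μ_1) + (λ_2 − μ_2) + ⋯ + (λ_n − μ_n). -/
open MvPolynomial

lemma pair_exponent_inj {α : Type*} [LinearOrder α] {a b c d : α} (hab : a ≤ b) (hcd : c ≤ d)
    (h : Finsupp.single a 1 + Finsupp.single b 1 =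
      (Finsupp.single c 1 + Finsupp.single d 1 : α →₀ ℕ)) : a = c ∧ b = d := by
  classical
  have h' := congrArg Finsupp.toMultiset h
  simp only [map_add, Finsupp.toMultiset_single, one_smul] at h'
  have h2 : a ::ₘ {b} = c ::ₘ ({d} : Multiset α) := h'
  rcases Multiset.cons_eq_cons.1 h2 with ⟨rfl, h3⟩ | ⟨h3, cs, h4, h5⟩
  · exact ⟨rfl, Multiset.singleton_inj.1 h3⟩
  · have hc : c ∈ ({b} : Multiset α) := by rw [h4]; simp
    have ha : a ∈ ({d} : Multiset α) := by rw [h5]; simp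
    rw [Multiset.mem_singleton] at hc ha
    subst hc ha
    exact absurd (le_antisymm hab hcd) h3

lemma coeff_mul_of_mem_span {σ K : Type*} [Field K] (T : Finset (σ →₀ ℕ)) (d : ℕ)
    (hT : ∀ t ∈ T, t.degree = d) (q : MvPolynomial σ K)
    (hq : q ∈ Ideal.span ((fun t => monomial t (1 : K)) '' (T : Set (σ →₀ ℕ)))) :
    ∀ t ∈ T, ∀ r : MvPolynomial σ K, coeff t (r * q) = coeff 0 r * coeff t q := by
  classical
  intro t ht
  induction hq using Submodule.span_induction with
  | mem x hx =>
    obtain ⟨t', ht', rfl⟩ := hx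
    intro r
    simp only [coeff_mul_monomial', coeff_monomial, mul_one]
    by_cases h : t' = t
    · subst h; simp
    · rw [if_neg h, if_neg]
      · simp
      · intro hle
        apply h
        obtain ⟨c, rfl⟩ := exists_add_of_le hle
        have h1 := hT _ ht
        have h2 := hT _ ht'
        rw [map_add, h2] at h1
        have : c = 0 := (Finsupp.degree_eq_zero_iff c).1 (by omega)
        simp [this]
  | zero => simp
  | add x y _ _ hx hy => intro r; rw [mul_add, coeff_add, coeff_add, hx, hy, mul_add]
  | smul a x _ hx =>
    intro r
    rw [smul_eq_mul, ← mul_assoc, hx, hx, ← mul_assoc]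
    congr 1
    simp only [← constantCoeff_eq, map_mul]

lemma card_le_of_span_eq {σ K : Type*} [Field K] (T : Finset (σ →₀ ℕ)) (d : ℕ)
    (hT : ∀ t ∈ T, t.degree = d) (s : Finset (MvPolynomial σ K))
    (hs : Ideal.span (s : Set (MvPolynomial σ K)) =
      Ideal.span ((fun t => monomial t (1 : K)) '' (T : Set (σ →₀ ℕ)))) :
    T.card ≤ s.card := by
  classical
  let φ : MvPolynomial σ K →ₗ[K] (T → K) := LinearMap.pi (fun t => lcoeff K (t : σ →₀ ℕ))
  have hφ : ∀ p t, φ p t = coeff (t : σ →₀ ℕ) p := fun p t => rfl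
  have key : ∀ p ∈ Ideal.span (s : Set (MvPolynomial σ K)),
      φ p ∈ Submodule.span K ((s.image φ : Finset (T → K)) : Set (T → K)) := by
    intro p hp
    induction hp using Submodule.span_induction with
    | mem x hx => exact Submodule.subset_span (by simpa using ⟨x, hx, rfl⟩)
    | zero => simp
    | add x y _ _ hx hy => rw [map_add]; exact add_mem hx hy
    | smul a x hxs hx =>
      have : φ (a • x) = coeff 0 a • φ x := by
        funext t
        rw [Pi.smul_apply, hφ, hφ, smul_eq_mul, smul_eq_mul]
        exact coeff_mul_of_mem_span T d hT x (hs ▸ hxs) t t.2 a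
      rw [this]
      exact Submodule.smul_mem _ _ hx
  have top : Submodule.span K ((s.image φ : Finset (T → K)) : Set (T → K)) = ⊤ := by
    rw [eq_top_iff, ← (Pi.basisFun K T).span_eq, Submodule.span_le]
    rintro _ ⟨t, rfl⟩
    have h := key (monomial (t : σ →₀ ℕ) 1) (hs ▸ Ideal.subset_span ⟨t, t.2, rfl⟩)
    suffices h2 : (Pi.basisFun K T) t = φ (monomial (t : σ →₀ ℕ) 1) by rw [h2]; exact h
    funext u
    rw [hφ, coeff_monomial, Pi.basisFun_apply, Pi.single_apply]
    by_cases hut : u = t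
    · rw [if_pos hut, if_pos (by rw [hut])]
    · rw [if_neg hut, if_neg (fun h3 => hut (Subtype.ext h3.symm))]
  have h1 := finrank_span_finset_le_card (R := K) (s.image φ)
  rw [Set.finrank, top, finrank_top, Module.finrank_fintype_fun_eq_card, Fintype.card_coe] at h1
  exact h1.trans Finset.card_image_le

/-- Assume `μ_i ≥ i − 1` for all `i`. Then the specialized ideal
`Ī_{λ−μ} ⊆ S = K[x_1,…,x_m]` has the same number of minimal generators as
`I_{λ−μ}`: the smallest cardinality of a generating set of `Ī_{λ−μ}` equals
`|λ| − |μ| = ∑ (λ_i − μ_i)`.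
Indices: `i : Fin n` corresponds to the 1-based index `i.val + 1`, and
`j : Fin m` to `j.val + 1`. -/
theorem specialized_ferrers_min_generators
    (K : Type*) [Field K] (n m : ℕ) (hn : 1 ≤ n) (hnm : n ≤ m)
    (lam mu : Fin n → ℕ)
    (hlam_top : lam ⟨0, hn⟩ = m)
    (hlam_anti : Antitone lam)
    (hlam_pos : 1 ≤ lam ⟨n - 1, by omega⟩)
    (hmu_mono : Monotone mu)
    (hmu_lt : mu ⟨n - 1, by omega⟩ < lam ⟨n - 1, by omega⟩)
    (hmu_ge : ∀ i : Fin n, i.val ≤ mu i) :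
    sInf {k : ℕ | ∃ s : Finset (MvPolynomial (Fin m) K),
        s.card = k ∧
        Ideal.span (s : Set (MvPolynomial (Fin m) K)) =
          Ideal.span {p : MvPolynomial (Fin m) K |
            ∃ (i : Fin n) (j : Fin m), mu i ≤ j.val ∧ j.val < lam i ∧
              p = X (Fin.castLE hnm i) * X j}} =
      ∑ i : Fin n, (lam i - mu i) := by
  classical
  let P : Finset (Fin n × Fin m) :=
    Finset.univ.filter (fun a => mu a.1 ≤ a.2.val ∧ a.2.val < lam a.1)
  let e : Fin n × Fin m → (Fin m →₀ ℕ) := fun a =>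
    Finsupp.single (Fin.castLE hnm a.1) 1 + Finsupp.single a.2 1
  have hlam_le : ∀ i, lam i ≤ m := fun i => hlam_top ▸ hlam_anti (Fin.mk_le_of_le_val (Nat.zero_le _))
  have hinj : Set.InjOn e P := by
    rintro ⟨i, j⟩ h ⟨i', j'⟩ h' heq
    simp only [P, Finset.coe_filter, Finset.mem_univ, true_and, Set.mem_ofPred_eq] at h h'
    have g1 := hmu_ge i
    have g2 := hmu_ge i'
    have hh := pair_exponent_inj (a := Fin.castLE hnm i) (b := j) (c := Fin.castLE hnm i') (d := j')
      (Fin.le_def.2 (g1.trans h.1)) (Fin.le_def.2 (g2.trans h'.1)) heq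
    exact Prod.ext (Fin.castLE_injective hnm hh.1) hh.2
  have hcardP : P.card = ∑ i : Fin n, (lam i - mu i) := by
    rw [Finset.card_filter, Fintype.sum_prod_type]
    refine Finset.sum_congr rfl fun i _ => ?_
    rw [← Finset.card_filter, ← Nat.card_Ico,
      ← Finset.card_map (Fin.valEmbedding)]
    congr 1
    ext k
    simp only [Finset.mem_map, Finset.mem_filter, Finset.mem_univ, true_and, Fin.valEmbedding_apply,
      Finset.mem_Ico]
    constructor
    · rintro ⟨j, h, rfl⟩; exact h
    · intro h
      exact ⟨⟨k, h.2.trans_le (hlam_le i)⟩, h, rfl⟩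
  let T : Finset (Fin m →₀ ℕ) := P.image e
  have hTcard : T.card = ∑ i : Fin n, (lam i - mu i) := by
    rw [← hcardP]; exact Finset.card_image_of_injOn hinj
  have hT : ∀ t ∈ T, t.degree = 2 := by
    intro t ht
    obtain ⟨a, _, rfl⟩ := Finset.mem_image.1 ht
    simp [e, map_add, Finsupp.degree_single]
  have hset : {p : MvPolynomial (Fin m) K |
            ∃ (i : Fin n) (j : Fin m), mu i ≤ j.val ∧ j.val < lam i ∧
              p = X (Fin.castLE hnm i) * X j} =
      (fun t => monomial t (1 : K)) '' (T : Set (Fin m →₀ ℕ)) := by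
    have hX : ∀ a b : Fin m, (X a * X b : MvPolynomial (Fin m) K) =
        monomial (Finsupp.single a 1 + Finsupp.single b 1) 1 := by
      intro a b
      simp [X, monomial_mul]
    ext p
    simp only [Set.mem_ofPred_eq, T, P, e, Finset.coe_image, Set.mem_image, Finset.coe_filter,
      Finset.mem_univ, true_and, Prod.exists, hX]
    constructor
    · rintro ⟨i, j, h1, h2, rfl⟩
      exact ⟨_, ⟨i, j, ⟨h1, h2⟩, rfl⟩, rfl⟩
    · rintro ⟨_, ⟨i, j, ⟨h1, h2⟩, rfl⟩, rfl⟩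
      exact ⟨i, j, h1, h2, rfl⟩
  rw [hset, ← hTcard]
  apply le_antisymm
  · apply Nat.sInf_le
    refine ⟨T.image (fun t => monomial t (1 : K)), ?_, by rw [Finset.coe_image]⟩
    exact Finset.card_image_of_injective _ (monomial_left_injective one_ne_zero)
  · apply le_csInf
    · exact ⟨_, T.image (fun t => monomial t (1 : K)), rfl, by rw [Finset.coe_image]⟩
    · rintro k ⟨s, rfl, hs⟩
      exact card_le_of_span_eq T 2 hT s hs
end

section
/- There exists a permutation π of {1,…,m} such that the K-algebra automorphism of R that fixes each variable x_i and sends y_j to y_{π(j)} maps the generalized Ferrers ideal I_{λ−μ} onto the Ferrers ideal I_{λ'}, where λ' := (λ_1 − μ_1, λ_2 − μ_2, …, λ_n − μ_n) (which is a partition, since λ is nonincreasing and μ is nondecreasing) and I_{λ'} is the ideal of R generated by the monomials x_i·y_j with 1 ≤ i ≤ n and 1 ≤ j ≤ λ_i − μ_i. -/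
open MvPolynomial

theorem ferrers_perm_exists (n m : ℕ) (lam mu : Fin n → ℕ) (hle : ∀ i, lam i ≤ m)
    (ha : Antitone lam) (hm : Monotone mu) :
    ∃ π : Equiv.Perm (Fin m), ∀ (i : Fin n) (j : Fin m),
      (mu i ≤ j.val ∧ j.val < lam i) ↔ (π j).val < lam i - mu i := by
  classical
  let w : Fin m → ℕ := fun j =>
    (Finset.univ.filter (fun i : Fin n => ¬ (mu i ≤ j.val ∧ j.val < lam i))).card
  have hw : ∀ (i : Fin n) (j : Fin m), (mu i ≤ j.val ∧ j.val < lam i) ↔ w j < n - i.val := by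
    intro i j
    constructor
    · rintro ⟨h1, h2⟩
      have hsub : (Finset.univ.filter (fun i : Fin n => ¬ (mu i ≤ j.val ∧ j.val < lam i)))
          ⊆ Finset.Ioi i := by
        intro k hk
        rw [Finset.mem_filter] at hk
        rw [Finset.mem_Ioi]
        by_contra hki
        have hki : k ≤ i := not_lt.mp hki
        exact hk.2 ⟨(hm hki).trans h1, h2.trans_le (ha hki)⟩
      have := Finset.card_le_card hsub
      rw [Fin.card_Ioi] at this
      have hi := i.isLt
      change (Finset.card _) < _
      omega
    · intro h
      by_contra hn
      have hsub : Finset.Ici i ⊆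
          (Finset.univ.filter (fun i : Fin n => ¬ (mu i ≤ j.val ∧ j.val < lam i))) := by
        intro k hk
        rw [Finset.mem_Ici] at hk
        rw [Finset.mem_filter]
        refine ⟨Finset.mem_univ _, fun hh => hn ⟨(hm hk).trans hh.1, hh.2.trans_le (ha hk)⟩⟩
      have := Finset.card_le_card hsub
      rw [Fin.card_Ici] at this
      change (Finset.card _) < _ at h
      omega
  have hmono : Monotone (w ∘ Tuple.sort w) := Tuple.monotone_sort w
  refine ⟨(Tuple.sort w).symm, fun i j => ?_⟩
  obtain ⟨k, rfl⟩ := (Tuple.sort w).surjective j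
  rw [Equiv.symm_apply_apply, hw]
  have hcS : (Finset.univ.filter (fun j : Fin m => mu i ≤ j.val ∧ j.val < lam i)).card
      = lam i - mu i := by
    rw [← Nat.card_Ico, ← Finset.card_map Fin.valEmbedding]
    congr 1
    ext x
    simp only [Finset.mem_map, Finset.mem_filter, Finset.mem_univ, true_and,
      Fin.valEmbedding_apply, Finset.mem_Ico]
    constructor
    · rintro ⟨a, h, rfl⟩
      exact h
    · intro h
      exact ⟨⟨x, h.2.trans_le (hle i)⟩, h, rfl⟩
  have hcT : (Finset.univ.filter (fun k : Fin m => w (Tuple.sort w k) < n - i.val)).card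
      = lam i - mu i := by
    rw [← hcS, ← Finset.card_map (Tuple.sort w).toEmbedding]
    congr 1
    ext x
    simp only [Finset.mem_map, Finset.mem_filter, Finset.mem_univ, true_and,
      Equiv.coe_toEmbedding, hw]
    constructor
    · rintro ⟨a, h, rfl⟩
      exact h
    · intro h
      exact ⟨(Tuple.sort w).symm x, by simpa using h, by simp⟩
  constructor
  · intro h
    have hsub : Finset.Iic k ⊆
        Finset.univ.filter (fun k : Fin m => w (Tuple.sort w k) < n - i.val) := by
      intro l hl
      rw [Finset.mem_Iic] at hl
      rw [Finset.mem_filter]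
      exact ⟨Finset.mem_univ _, (hmono hl).trans_lt h⟩
    have := Finset.card_le_card hsub
    rw [hcT, Fin.card_Iic] at this
    omega
  · intro h
    by_contra hk
    have hsub : Finset.univ.filter (fun k : Fin m => w (Tuple.sort w k) < n - i.val)
        ⊆ Finset.Iio k := by
      intro l hl
      rw [Finset.mem_filter] at hl
      rw [Finset.mem_Iio]
      by_contra hlk
      exact hk ((hmono (not_lt.mp hlk)).trans_lt hl.2)
    have := Finset.card_le_card hsub
    rw [hcT, Fin.card_Iio] at this
    omega

/-- There is a permutation `π` of `{1,…,m}` such that the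
`K`-algebra automorphism of `R = K[x_1,…,x_n,y_1,…,y_m]` fixing each `x_i` and
sending `y_j ↦ y_{π(j)}` maps the generalized Ferrers ideal `I_{λ−μ}` onto the
Ferrers ideal `I_{λ'}` with `λ' = (λ_1−μ_1,…,λ_n−μ_n)`, i.e. the ideal generated
by the `x_i y_j` with `1 ≤ i ≤ n`, `1 ≤ j ≤ λ_i − μ_i`.
Indices: `i : Fin n`/`j : Fin m` correspond to the 1-based indices `i.val+1`/`j.val+1`. -/
theorem generalized_ferrers_isomorphic_to_ferrers
    (K : Type*) [Field K] (n m : ℕ) (hn : 1 ≤ n) (hnm : n ≤ m)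
    (lam mu : Fin n → ℕ)
    (hlam_top : lam ⟨0, hn⟩ = m)
    (hlam_anti : Antitone lam)
    (hlam_pos : 1 ≤ lam ⟨n - 1, by omega⟩)
    (hmu_mono : Monotone mu)
    (hmu_lt : mu ⟨n - 1, by omega⟩ < lam ⟨n - 1, by omega⟩) :
    ∃ π : Equiv.Perm (Fin m),
      Ideal.map
        (MvPolynomial.renameEquiv K
          (Equiv.sumCongr (Equiv.refl (Fin n)) π) :
            MvPolynomial (Fin n ⊕ Fin m) K ≃ₐ[K] MvPolynomial (Fin n ⊕ Fin m) K)
        (Ideal.span {p : MvPolynomial (Fin n ⊕ Fin m) K |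
          ∃ (i : Fin n) (j : Fin m), mu i ≤ j.val ∧ j.val < lam i ∧
            p = X (Sum.inl i) * X (Sum.inr j)}) =
      Ideal.span {p : MvPolynomial (Fin n ⊕ Fin m) K |
        ∃ (i : Fin n) (j : Fin m), j.val < lam i - mu i ∧
          p = X (Sum.inl i) * X (Sum.inr j)} := by
  obtain ⟨π, hπ⟩ := ferrers_perm_exists n m lam mu
    (fun i => hlam_top ▸ hlam_anti (Fin.mk_le_of_le_val (Nat.zero_le _))) hlam_anti hmu_mono
  refine ⟨π, ?_⟩
  rw [Ideal.map_span]
  congr 1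
  ext p
  simp only [Set.mem_image, Set.mem_ofPred_eq]
  constructor
  · rintro ⟨q, ⟨i, j, h1, h2, rfl⟩, rfl⟩
    exact ⟨i, π j, (hπ i j).1 ⟨h1, h2⟩, by simp⟩
  · rintro ⟨i, j, h, rfl⟩
    have h' := (hπ i (π.symm j)).2 (by simpa using h)
    exact ⟨_, ⟨i, π.symm j, h'.1, h'.2, rfl⟩, by simp⟩
end

section
/- Assume μ_i ≥ i − 1 for all i = 1,…,n. Then in the polynomial ring R' = K[x_1,…,x_m,y_1,…,y_m], the sequence y_1 − x_1, y_2 − x_2, …, y_m − x_m is a regular sequence on the module R'/(I_{λ−μ}R'). -/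
open MvPolynomial

lemma ferrers_key {σ K : Type*} [Field K] (S : Set (σ →₀ ℕ)) (a b : σ) (hab : a ≠ b)
    (ha : ∀ e ∈ S, e a ≤ 1) (f : MvPolynomial σ K)
    (h : (X a - X b) * f ∈ Ideal.span ((fun s => monomial s (1 : K)) '' S)) :
    ∀ w ∈ f.support, ∃ e ∈ S, e ≤ w + Finsupp.single a 1 := by
  classical
  rw [mem_ideal_span_monomial_image] at h
  have main : ∀ (N : ℕ) (w : σ →₀ ℕ), w ∈ f.support → f.totalDegree ≤ w a + N →
      ∃ e ∈ S, e ≤ w + Finsupp.single a 1 := by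
    intro N
    induction N with
    | zero =>
      intro w hw hN
      by_cases hc : w + Finsupp.single a 1 ∈ ((X a - X b) * f).support
      · exact h _ hc
      · exfalso
        rw [notMem_support_iff, sub_mul, coeff_sub, add_comm w, coeff_X_mul, coeff_X_mul',
          sub_eq_zero] at hc
        rw [mem_support_iff] at hw
        split_ifs at hc with hb
        · rw [hc, ← mem_support_iff] at hw
          have h1 := le_totalDegree hw
          have h2 : (Finsupp.single a 1 + w - Finsupp.single b 1 : σ →₀ ℕ) a = w a + 1 := by
            simp [Finsupp.single_apply, hab.symm, add_comm]
          have h3 : (Finsupp.single a 1 + w - Finsupp.single b 1 : σ →₀ ℕ) a ≤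
              (Finsupp.single a 1 + w - Finsupp.single b 1 : σ →₀ ℕ).sum fun _ e => e :=
            by
              rw [Finsupp.sum]
              exact Finset.single_le_sum (f := fun i => (Finsupp.single a 1 + w - Finsupp.single b 1 : σ →₀ ℕ) i) (fun _ _ => Nat.zero_le _)
                (by rw [Finsupp.mem_support_iff, h2]; omega)
          omega
        · exact hw hc
    | succ N ih =>
      intro w hw hN
      by_cases hc : w + Finsupp.single a 1 ∈ ((X a - X b) * f).support
      · exact h _ hc
      · rw [notMem_support_iff, sub_mul, coeff_sub, add_comm w, coeff_X_mul, coeff_X_mul',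
          sub_eq_zero] at hc
        rw [mem_support_iff] at hw
        split_ifs at hc with hb
        · rw [hc, ← mem_support_iff] at hw
          have h2 : (Finsupp.single a 1 + w - Finsupp.single b 1 : σ →₀ ℕ) a = w a + 1 := by
            simp [Finsupp.single_apply, hab.symm, add_comm]
          obtain ⟨e, he, hle⟩ := ih _ hw (by omega)
          refine ⟨e, he, fun t => ?_⟩
          have h4 := hle t
          by_cases hta : t = a
          · subst hta
            have := ha e he
            simp
            omega
          · simp [Finsupp.single_apply, Ne.symm hta] at h4 ⊢
            omega
        · exact absurd hc hw
  intro w hw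
  exact main _ w hw (Nat.le_add_left _ _)

lemma ferrers_nzd {σ K : Type*} [Field K] (S : Set (σ →₀ ℕ)) (a b : σ) (hab : a ≠ b)
    (ha : ∀ e ∈ S, e a ≤ 1) (hb : ∀ e ∈ S, e b ≤ 1)
    (h3 : ∀ w : σ →₀ ℕ, (∃ e ∈ S, e ≤ w + Finsupp.single a 1) →
      (∃ e ∈ S, e ≤ w + Finsupp.single b 1) → ∃ e ∈ S, e ≤ w)
    (f : MvPolynomial σ K)
    (h : (X a - X b) * f ∈ Ideal.span ((fun s => monomial s (1 : K)) '' S)) :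
    f ∈ Ideal.span ((fun s => monomial s (1 : K)) '' S) := by
  have h' : (X b - X a) * f ∈ Ideal.span ((fun s => monomial s (1 : K)) '' S) := by
    have := neg_mem h
    rwa [← neg_mul, neg_sub] at this
  rw [mem_ideal_span_monomial_image]
  intro w hw
  exact h3 w (ferrers_key S a b hab ha f h w hw) (ferrers_key S b a hab.symm hb f h' w hw)

/-- The variable replacing `y_j` after the first `k` identifications. -/
def ferrersZ {m : ℕ} (k : ℕ) (j : Fin m) : Fin m ⊕ Fin m :=
  if j.val < k then Sum.inl j else Sum.inr j

/-- Exponents of the generators after the first `k` identifications. -/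
def ferrersS {n m : ℕ} (hnm : n ≤ m) (lam mu : Fin n → ℕ) (k : ℕ) :
    Set (Fin m ⊕ Fin m →₀ ℕ) :=
  {e | ∃ (i : Fin n) (j : Fin m), mu i ≤ j.val ∧ j.val < lam i ∧
    e = Finsupp.single (Sum.inl (Fin.castLE hnm i)) 1 + Finsupp.single (ferrersZ k j) 1}

lemma ferrersS_step {n m : ℕ} (hnm : n ≤ m) (lam mu : Fin n → ℕ)
    (hlam_anti : Antitone lam) (hmu_ge : ∀ i : Fin n, i.val ≤ mu i) (k : Fin m) :
    (∀ e ∈ ferrersS hnm lam mu k, e (Sum.inr k) ≤ 1) ∧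
    (∀ e ∈ ferrersS hnm lam mu k, e (Sum.inl k) ≤ 1) ∧
    ∀ w : Fin m ⊕ Fin m →₀ ℕ,
      (∃ e ∈ ferrersS hnm lam mu k, e ≤ w + Finsupp.single (Sum.inr k) 1) →
      (∃ e ∈ ferrersS hnm lam mu k, e ≤ w + Finsupp.single (Sum.inl k) 1) →
      ∃ e ∈ ferrersS hnm lam mu k, e ≤ w := by
  classical
  have hz : ∀ j : Fin m, ferrersZ k.val j ≠ Sum.inl k := by
    intro j hj
    unfold ferrersZ at hj
    split_ifs at hj with h
    have := Sum.inl.inj hj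
    subst this
    omega
  refine ⟨?_, ?_, ?_⟩
  · rintro e ⟨i, j, h1, h2, rfl⟩
    simp [Finsupp.single_apply]
    split_ifs <;> simp
  · rintro e ⟨i, j, h1, h2, rfl⟩
    simp [Finsupp.single_apply, hz]
    split_ifs <;> simp
  · rintro w ⟨_, ⟨i, j, h1, h2, rfl⟩, hle⟩ ⟨_, ⟨i', j', h1', h2', rfl⟩, hle'⟩
    by_contra hcon
    have hno : ∀ (i : Fin n) (j : Fin m), mu i ≤ j.val → j.val < lam i →
        ¬ (Finsupp.single (Sum.inl (Fin.castLE hnm i)) 1 +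
          Finsupp.single (ferrersZ k.val j) 1 ≤ w) :=
      fun i j h1 h2 h => hcon ⟨_, ⟨i, j, h1, h2, rfl⟩, h⟩
    -- first generator involves `y_k`
    have hwy : w (Sum.inr k) = 0 ∧ ferrersZ k.val j = Sum.inr k := by
      by_contra hc
      refine hno i j h1 h2 fun t => ?_
      have ht := hle t
      by_cases htk : t = Sum.inr k
      · subst htk
        simp [Finsupp.single_apply] at ht ⊢
        by_cases hj : ferrersZ k.val j = Sum.inr k
        · simp [hj] at hc ⊢
          omega
        · simp [hj]
      · simpa [Finsupp.single_apply, Ne.symm htk] using ht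
    have hwx : w (Sum.inl k) = 0 ∧ Fin.castLE hnm i' = k := by
      by_contra hc
      refine hno i' j' h1' h2' fun t => ?_
      have ht := hle' t
      by_cases htk : t = Sum.inl k
      · subst htk
        simp [Finsupp.single_apply, hz] at ht ⊢
        by_cases hj : Fin.castLE hnm i' = k
        · simp [hj] at hc ⊢
          omega
        · simp [hj]
      · simpa [Finsupp.single_apply, Ne.symm htk] using ht
    obtain ⟨hwy, hj⟩ := hwy
    obtain ⟨hwx, hi'⟩ := hwx
    have hjk : j = k := by
      unfold ferrersZ at hj
      split_ifs at hj
      exact Sum.inr.inj hj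
    subst hjk
    have hik : i'.val = j.val := by rw [← hi']; rfl
    have hj'k : j.val ≤ j'.val := by have := hmu_ge i'; omega
    have hzj' : ferrersZ j.val j' = Sum.inr j' := by
      unfold ferrersZ
      rw [if_neg (by omega)]
    have hik2 : i.val ≤ i'.val := by have := hmu_ge i; omega
    have hlam : lam i' ≤ lam i := hlam_anti hik2
    have hxi : 1 ≤ w (Sum.inl (Fin.castLE hnm i)) := by
      have := hle (Sum.inl (Fin.castLE hnm i))
      simp [Finsupp.single_apply, hj] at this
      omega
    have hyj : 1 ≤ w (Sum.inr j') := by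
      have := hle' (Sum.inr j')
      simp [Finsupp.single_apply, hzj'] at this
      omega
    refine hno i j' (by omega) (by omega) fun t => ?_
    rw [hzj']
    by_cases h1 : t = Sum.inl (Fin.castLE hnm i)
    · subst h1
      simpa [Finsupp.single_apply] using hxi
    · by_cases h2 : t = Sum.inr j'
      · subst h2
        simpa [Finsupp.single_apply] using hyj
      · simp [Finsupp.single_apply, Ne.symm h1, Ne.symm h2]

/-- The substitution `y_j ↦ x_j` for `j < k`. -/
noncomputable def ferrersPhi (K : Type*) [Field K] (m k : ℕ) :
    MvPolynomial (Fin m ⊕ Fin m) K →ₐ[K] MvPolynomial (Fin m ⊕ Fin m) K :=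
  aeval (Sum.elim (fun j => X (Sum.inl j)) (fun j => X (ferrersZ k j)))

lemma ferrers_mem_iff {K : Type*} [Field K] {n m : ℕ} (hnm : n ≤ m) (lam mu : Fin n → ℕ) (k : ℕ)
    (f : MvPolynomial (Fin m ⊕ Fin m) K) :
    f ∈ Ideal.span {p : MvPolynomial (Fin m ⊕ Fin m) K |
          ∃ (i : Fin n) (j : Fin m), mu i ≤ j.val ∧ j.val < lam i ∧
            p = X (Sum.inl (Fin.castLE hnm i)) * X (Sum.inr j)} ⊔
        Ideal.span {p | ∃ j : Fin m, j.val < k ∧ p = X (Sum.inr j) - X (Sum.inl j)} ↔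
      ferrersPhi K m k f ∈ Ideal.span ((fun s => monomial s (1 : K)) '' ferrersS hnm lam mu k) := by
  set I := Ideal.span {p : MvPolynomial (Fin m ⊕ Fin m) K |
          ∃ (i : Fin n) (j : Fin m), mu i ≤ j.val ∧ j.val < lam i ∧
            p = X (Sum.inl (Fin.castLE hnm i)) * X (Sum.inr j)} with hI
  set L := Ideal.span {p : MvPolynomial (Fin m ⊕ Fin m) K |
    ∃ j : Fin m, j.val < k ∧ p = X (Sum.inr j) - X (Sum.inl j)} with hL
  have hphi : ∀ (i : Fin n) (j : Fin m),
      ferrersPhi K m k (X (Sum.inl (Fin.castLE hnm i)) * X (Sum.inr j)) =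
        monomial (Finsupp.single (Sum.inl (Fin.castLE hnm i)) 1 +
          Finsupp.single (ferrersZ k j) 1) (1 : K) := by
    intro i j
    rw [ferrersPhi, map_mul, aeval_X, aeval_X, Sum.elim_inl, Sum.elim_inr, X, X, monomial_mul,
      one_mul]
  have hsub : ∀ g, g - ferrersPhi K m k g ∈ L := by
    intro g
    have : (Ideal.Quotient.mkₐ K L).comp (ferrersPhi K m k) = Ideal.Quotient.mkₐ K L := by
      apply MvPolynomial.algHom_ext
      rintro (j | j)
      · simp [ferrersPhi]
      · simp only [ferrersPhi, AlgHom.comp_apply, aeval_X, Sum.elim_inr, ferrersZ]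
        split_ifs with h
        · symm
          rw [Ideal.Quotient.mkₐ_eq_mk, Ideal.Quotient.eq]
          exact Ideal.subset_span ⟨j, h, rfl⟩
        · rfl
    have h2 := DFunLike.congr_fun this g
    rw [← Ideal.Quotient.eq]
    exact h2.symm
  constructor
  · intro hf
    rw [← Ideal.mem_comap]
    refine (sup_le ?_ ?_ : I ⊔ L ≤ _) hf
    · rw [hI, Ideal.span_le]
      rintro _ ⟨i, j, h1, h2, rfl⟩
      refine Ideal.subset_span ⟨_, ⟨i, j, h1, h2, rfl⟩, ?_⟩
      exact (hphi i j).symm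
    · rw [hL, Ideal.span_le]
      rintro _ ⟨j, h1, rfl⟩
      simp [ferrersPhi, ferrersZ, h1]
  · intro hf
    have h1 : Ideal.span ((fun s => monomial s (1 : K)) '' ferrersS hnm lam mu k) ≤ I ⊔ L := by
      rw [Ideal.span_le]
      rintro _ ⟨_, ⟨i, j, h1, h2, rfl⟩, rfl⟩
      have ha : X (Sum.inl (Fin.castLE hnm i)) * X (Sum.inr j) ∈ I ⊔ L :=
        Ideal.mem_sup_left (Ideal.subset_span ⟨i, j, h1, h2, rfl⟩)
      have hb := Ideal.mem_sup_right (S := I)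
        (hsub (X (Sum.inl (Fin.castLE hnm i)) * X (Sum.inr j)))
      have hc := sub_mem ha hb
      rw [sub_sub_cancel] at hc
      rwa [hphi i j] at hc
    have := add_mem (h1 hf) (Ideal.mem_sup_right (S := I) (hsub f))
    rwa [add_sub_cancel] at this

lemma ferrers_mk_mem {A : Type*} [CommRing A] (I J : Ideal A) (f : A) :
    (Ideal.Quotient.mk I f : A ⧸ I) ∈ (J • ⊤ : Submodule A (A ⧸ I)) ↔ f ∈ I ⊔ J := by
  have h : (J • ⊤ : Submodule A (A ⧸ I)) = Submodule.map (Submodule.mkQ I) J := by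
    have h0 : (⊤ : Submodule A (A ⧸ I)) = Submodule.map (Submodule.mkQ I) ⊤ := by
      rw [Submodule.map_top, Submodule.range_mkQ]
    rw [h0, ← Submodule.map_smul'']
    congr 1
    simp
  rw [h, ← Submodule.comap_map_mkQ I J, Submodule.mem_comap]
  rfl

lemma ferrers_regular_quot {A : Type*} [CommRing A] (I J : Ideal A) (r : A)
    (h : ∀ f, r * f ∈ I ⊔ J → f ∈ I ⊔ J) :
    IsSMulRegular ((A ⧸ I) ⧸ (J • ⊤ : Submodule A (A ⧸ I))) r := by
  rw [isSMulRegular_quotient_iff_mem_of_smul_mem]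
  intro q hq
  obtain ⟨f, rfl⟩ := Ideal.Quotient.mk_surjective q
  exact (ferrers_mk_mem I J f).2 (h f ((ferrers_mk_mem I J (r * f)).1 hq))

/-- Assume `μ_i ≥ i − 1` for all `i`. Then in
`R' = K[x_1,…,x_m,y_1,…,y_m]` (here `Sum.inl` indexes the `x`'s and `Sum.inr`
the `y`'s), the sequence `y_1 − x_1, …, y_m − x_m` is a regular sequence on
`R'/(I_{λ−μ}R')`, where `I_{λ−μ}R'` is generated by the monomials `x_i y_j`
with `1 ≤ i ≤ n`, `μ_i < j ≤ λ_i`.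
Indices: `i : Fin n`/`j : Fin m` correspond to the 1-based indices `i.val+1`/`j.val+1`. -/
theorem ferrers_linear_forms_regular_sequence
    (K : Type*) [Field K] (n m : ℕ) (hn : 1 ≤ n) (hnm : n ≤ m)
    (lam mu : Fin n → ℕ)
    (hlam_top : lam ⟨0, hn⟩ = m)
    (hlam_anti : Antitone lam)
    (hlam_pos : 1 ≤ lam ⟨n - 1, by omega⟩)
    (hmu_mono : Monotone mu)
    (hmu_lt : mu ⟨n - 1, by omega⟩ < lam ⟨n - 1, by omega⟩)
    (hmu_ge : ∀ i : Fin n, i.val ≤ mu i) :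
    RingTheory.Sequence.IsRegular
      (MvPolynomial (Fin m ⊕ Fin m) K ⧸
        Ideal.span {p : MvPolynomial (Fin m ⊕ Fin m) K |
          ∃ (i : Fin n) (j : Fin m), mu i ≤ j.val ∧ j.val < lam i ∧
            p = X (Sum.inl (Fin.castLE hnm i)) * X (Sum.inr j)})
      (List.ofFn fun j : Fin m =>
        (X (Sum.inr j) - X (Sum.inl j) : MvPolynomial (Fin m ⊕ Fin m) K)) := by
  have htake : ∀ k : ℕ, Ideal.ofList ((List.ofFn fun j : Fin m =>
        (X (Sum.inr j) - X (Sum.inl j) : MvPolynomial (Fin m ⊕ Fin m) K)).take k) =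
      Ideal.span {p | ∃ j : Fin m, j.val < k ∧ p = X (Sum.inr j) - X (Sum.inl j)} := by
    intro k
    unfold Ideal.ofList
    congr 1
    ext p
    simp only [Set.mem_ofPred_eq, List.mem_take_iff_getElem, List.getElem_ofFn, List.length_ofFn]
    constructor
    · rintro ⟨i, hi, rfl⟩
      exact ⟨⟨i, by omega⟩, by simp; omega, rfl⟩
    · rintro ⟨j, hj, rfl⟩
      exact ⟨j.val, by have := j.isLt; omega, rfl⟩
  constructor
  · constructor
    intro k hk
    rw [List.length_ofFn] at hk
    rw [List.getElem_ofFn]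
    apply ferrers_regular_quot
    intro f hq'
    rw [htake, ferrers_mem_iff] at hq' ⊢
    obtain ⟨s1, s2, s3⟩ := ferrersS_step hnm lam mu hlam_anti hmu_ge ⟨k, hk⟩
    refine ferrers_nzd _ (Sum.inr ⟨k, hk⟩) (Sum.inl ⟨k, hk⟩) (by simp) s1 s2 s3 _ ?_
    simpa [ferrersPhi, ferrersZ] using hq'
  · intro htop
    have h1 : (Ideal.Quotient.mk _ 1 : MvPolynomial (Fin m ⊕ Fin m) K ⧸
        Ideal.span {p : MvPolynomial (Fin m ⊕ Fin m) K |
          ∃ (i : Fin n) (j : Fin m), mu i ≤ j.val ∧ j.val < lam i ∧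
            p = X (Sum.inl (Fin.castLE hnm i)) * X (Sum.inr j)}) ∈
        (⊤ : Submodule (MvPolynomial (Fin m ⊕ Fin m) K) _) := Submodule.mem_top
    rw [htop, ferrers_mk_mem] at h1
    have h2 := htake m
    rw [List.take_of_length_le (by simp)] at h2
    rw [h2] at h1
    have h3 : (1 : MvPolynomial (Fin m ⊕ Fin m) K) ∈
        RingHom.ker (constantCoeff : MvPolynomial (Fin m ⊕ Fin m) K →+* K) := by
      revert h1
      apply SetLike.le_def.1
      apply sup_le
      · rw [Ideal.span_le]
        rintro _ ⟨i, j, _, _, rfl⟩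
        simp
      · rw [Ideal.span_le]
        rintro _ ⟨j, _, rfl⟩
        simp
    simp at h3
end

section
/- Assume μ_i ≥ i − 1 for all i = 1,…,n. Then the height of the specialized ideal Ī_{λ−μ} in S = K[x_1,…,x_m] equals min{ min_{1≤j≤n} (λ_j − μ_j + j − 1), n }. -/
open MvPolynomial

/-- The height of an ideal: the infimum of the heights of the prime ideals
containing it. -/
noncomputable def idealHeight {A : Type*} [CommRing A] (I : Ideal A) : ℕ∞ :=
  sInf (Order.height '' {p : PrimeSpectrum A | I ≤ p.asIdeal})

lemma spanX_isPrime {K : Type*} [Field K] {m : ℕ} (s : Set (Fin m)) :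
    (Ideal.span (X '' s : Set (MvPolynomial (Fin m) K))).IsPrime := by
  classical
  let φ : MvPolynomial (Fin m) K →ₐ[K] MvPolynomial (Fin m) K :=
    aeval (fun i => if i ∈ s then 0 else X i)
  have key : ∀ p, p - φ p ∈ Ideal.span (X '' s : Set (MvPolynomial (Fin m) K)) := by
    intro p
    induction p using MvPolynomial.induction_on with
    | C a => simp [φ]
    | add p q hp hq =>
      have := Ideal.add_mem _ hp hq
      rw [map_add]
      convert this using 1
      ring
    | mul_X p i hp =>
      have hX : (X i : MvPolynomial (Fin m) K) - φ (X i) ∈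
          Ideal.span (X '' s : Set (MvPolynomial (Fin m) K)) := by
        by_cases hi : i ∈ s
        · simp only [φ, aeval_X, hi, if_true, sub_zero]
          exact Ideal.subset_span ⟨i, hi, rfl⟩
        · simp [φ, hi]
      have := Ideal.add_mem _ (Ideal.mul_mem_right (X i) _ hp) (Ideal.mul_mem_left _ (φ p) hX)
      rw [map_mul]
      convert this using 1
      ring
  have hker : Ideal.span (X '' s : Set (MvPolynomial (Fin m) K)) = RingHom.ker φ := by
    apply le_antisymm
    · rw [Ideal.span_le]
      rintro _ ⟨i, hi, rfl⟩
      simp [RingHom.mem_ker, φ, hi]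
    · intro p hp
      have := key p
      rwa [(RingHom.mem_ker).1 hp, sub_zero] at this
  rw [hker]
  exact RingHom.ker_isPrime φ

lemma card_le_height_spanX {K : Type*} [Field K] {m : ℕ} (s : Finset (Fin m)) :
    (s.card : ℕ∞) ≤ (Ideal.span (X '' (s : Set (Fin m)) : Set (MvPolynomial (Fin m) K))).height := by
  classical
  induction s using Finset.induction_on with
  | empty => simp
  | insert a s ha ih =>
    have h1 := spanX_isPrime (K := K) (s : Set (Fin m))
    have h2 := spanX_isPrime (K := K) ((insert a s : Finset (Fin m)) : Set (Fin m))
    rw [Finset.card_insert_of_notMem ha]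
    push_cast
    refine (add_le_add_left ih 1).trans ?_
    rw [← Finset.coe_insert]
    apply Ideal.height_add_one_le_of_lt_of_isPrime
    refine lt_of_le_of_ne (Ideal.span_mono (Set.image_mono (by simp))) ?_
    intro heq
    have hm : (X a : MvPolynomial (Fin m) K) ∈
        Ideal.span (X '' ((insert a s : Finset (Fin m)) : Set (Fin m))) :=
      Ideal.subset_span ⟨a, by simp, rfl⟩
    rw [← heq, mem_ideal_span_X_image] at hm
    obtain ⟨i, hi, hne⟩ := hm (Finsupp.single a 1) (by simp [support_X])
    have : i ≠ a := by rintro rfl; exact ha hi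
    exact hne (by simp [Finsupp.single_apply, this.symm])

lemma height_spanX_le_card {K : Type*} [Field K] {m : ℕ} (s : Finset (Fin m)) :
    (Ideal.span (X '' (s : Set (Fin m)) : Set (MvPolynomial (Fin m) K))).height ≤ s.card := by
  classical
  have h1 := spanX_isPrime (K := K) (s : Set (Fin m))
  have := Ideal.height_le_card_of_mem_minimalPrimes_span (R := MvPolynomial (Fin m) K)
    (s := X '' (s : Set (Fin m))) (s.finite_toSet.image _)
    (p := Ideal.span (X '' (s : Set (Fin m))))
    (by rw [Ideal.minimalPrimes_eq_subsingleton_self]; rfl)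
  refine this.trans ?_
  have h3 := Set.ncard_image_le (f := (X : Fin m → MvPolynomial (Fin m) K)) s.finite_toSet
  rw [Set.ncard_coe_finset] at h3
  exact_mod_cast h3

lemma idealHeight_le_of_cover {K : Type*} [Field K] {m : ℕ} (s : Finset (Fin m))
    (I : Ideal (MvPolynomial (Fin m) K)) (h : I ≤ Ideal.span (X '' (s : Set (Fin m)))) :
    idealHeight I ≤ s.card := by
  refine le_trans (sInf_le ⟨⟨_, spanX_isPrime (s : Set (Fin m))⟩, h, rfl⟩) ?_
  rw [← PrimeSpectrum.height_eq_orderHeight]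
  exact height_spanX_le_card s

lemma card_le_of_mem {K : Type*} [Field K] {m : ℕ} (s : Finset (Fin m))
    (p : PrimeSpectrum (MvPolynomial (Fin m) K)) (h : ∀ i ∈ s, X i ∈ p.asIdeal) :
    (s.card : ℕ∞) ≤ Order.height p := by
  rw [← PrimeSpectrum.height_eq_orderHeight]
  refine (card_le_height_spanX (K := K) s).trans (Ideal.height_mono ?_)
  rw [Ideal.span_le]
  rintro _ ⟨i, hi, rfl⟩
  exact h i hi

lemma card_filter_fin (m a b c : ℕ) (hac : a ≤ b) (hbc : b ≤ c) (hcm : c ≤ m) :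
    (Finset.univ.filter (fun j : Fin m => j.val < a ∨ (b ≤ j.val ∧ j.val < c))).card
      = c - b + a := by
  rw [← Finset.card_map Fin.valEmbedding]
  have : (Finset.univ.filter (fun j : Fin m => j.val < a ∨ (b ≤ j.val ∧ j.val < c))).map
      Fin.valEmbedding = Finset.range a ∪ Finset.Ico b c := by
    ext x
    simp only [Finset.mem_map, Finset.mem_filter, Finset.mem_univ, true_and,
      Fin.valEmbedding_apply, Finset.mem_union, Finset.mem_range, Finset.mem_Ico]
    constructor
    · rintro ⟨j, hj, rfl⟩; exact hj
    · intro hx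
      exact ⟨⟨x, by omega⟩, hx, rfl⟩
  rw [this, Finset.card_union_of_disjoint, Finset.card_range, Nat.card_Ico, add_comm]
  rw [Finset.disjoint_left]
  intro x hx hx'
  simp only [Finset.mem_range, Finset.mem_Ico] at hx hx'
  omega

/-- Assume `μ_i ≥ i − 1` for all `i`. Then the height of the
specialized ideal `Ī_{λ−μ} ⊆ S = K[x_1,…,x_m]` equals
`min{ min_{1≤j≤n} (λ_j − μ_j + j − 1), n }`.
Indices: `i : Fin n`/`j : Fin m` correspond to the 1-based indices `i.val+1`/`j.val+1`,
so the 1-based quantity `λ_j − μ_j + j − 1` reads `lam i - mu i + i.val`. -/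
theorem specialized_ferrers_height
    (K : Type*) [Field K] (n m : ℕ) (hn : 1 ≤ n) (hnm : n ≤ m)
    (lam mu : Fin n → ℕ)
    (hlam_top : lam ⟨0, hn⟩ = m)
    (hlam_anti : Antitone lam)
    (hlam_pos : 1 ≤ lam ⟨n - 1, by omega⟩)
    (hmu_mono : Monotone mu)
    (hmu_lt : mu ⟨n - 1, by omega⟩ < lam ⟨n - 1, by omega⟩)
    (hmu_ge : ∀ i : Fin n, i.val ≤ mu i) :
    idealHeight
      (Ideal.span {p : MvPolynomial (Fin m) K |
        ∃ (i : Fin n) (j : Fin m), mu i ≤ j.val ∧ j.val < lam i ∧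
          p = X (Fin.castLE hnm i) * X j}) =
      (min (sInf {h : ℕ | ∃ i : Fin n, h = lam i - mu i + i.val}) n : ℕ) := by
  have hlt : ∀ i : Fin n, mu i < lam i := fun i => by
    have hi : i ≤ ⟨n - 1, by omega⟩ := by rw [Fin.le_def]; simp; omega
    exact (hmu_mono hi).trans_lt (hmu_lt.trans_le (hlam_anti hi))
  have hle : ∀ i : Fin n, lam i ≤ m := fun i => by
    rw [← hlam_top]; exact hlam_anti (by rw [Fin.le_def]; simp)
  have hne : {h : ℕ | ∃ i : Fin n, h = lam i - mu i + i.val}.Nonempty := ⟨_, ⟨0, hn⟩, rfl⟩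
  apply le_antisymm
  · obtain ⟨i, hi⟩ := Nat.sInf_mem hne
    have hA : ∀ (a b c k : ℕ), a ≤ b → b ≤ c → c ≤ m → c - b + a = k →
        (∀ (i : Fin n) (j : Fin m), mu i ≤ j.val → j.val < lam i →
          i.val < a ∨ (b ≤ j.val ∧ j.val < c)) →
        idealHeight
          (Ideal.span {p : MvPolynomial (Fin m) K |
            ∃ (i : Fin n) (j : Fin m), mu i ≤ j.val ∧ j.val < lam i ∧
              p = X (Fin.castLE hnm i) * X j}) ≤ (k : ℕ) := by
      intro a b c k hab hbc hcm hk hcov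
      rw [← hk, ← card_filter_fin m a b c hab hbc hcm]
      apply idealHeight_le_of_cover
      rw [Ideal.span_le]
      rintro _ ⟨i, j, h1, h2, rfl⟩
      rcases hcov i j h1 h2 with h | h
      · exact Ideal.mul_mem_right _ _ (Ideal.subset_span ⟨_, by simp [h], rfl⟩)
      · exact Ideal.mul_mem_left _ _ (Ideal.subset_span ⟨_, by simp [h], rfl⟩)
    rcases min_choice (sInf {h : ℕ | ∃ i : Fin n, h = lam i - mu i + i.val}) n with h | h
    · rw [h, hi]
      refine hA i.val (mu i) (lam i) _ (hmu_ge i) (hlt i).le (hle i) rfl ?_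
      intro i' j h1 h2
      by_cases hc : i'.val < i.val
      · exact Or.inl hc
      · have hii : i ≤ i' := by rw [Fin.le_def]; omega
        exact Or.inr ⟨(hmu_mono hii).trans h1, h2.trans_le (hlam_anti hii)⟩
    · rw [h]
      exact hA n n n n le_rfl le_rfl hnm (by omega) fun i' _ _ _ => Or.inl i'.2
  · refine le_sInf ?_
    rintro _ ⟨p, hp, rfl⟩
    have hp : _ ≤ p.asIdeal := hp
    by_cases hall : ∀ i : Fin n, X (Fin.castLE hnm i) ∈ p.asIdeal
    · have := card_le_of_mem (Finset.univ.filter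
        (fun j : Fin m => j.val < n ∨ (n ≤ j.val ∧ j.val < n))) p (by
          intro j hj
          simp only [Finset.mem_filter, Finset.mem_univ, true_and] at hj
          exact hall ⟨j.val, by omega⟩)
      rw [card_filter_fin m n n n le_rfl le_rfl hnm] at this
      refine le_trans ?_ this
      norm_cast
      omega
    · push Not at hall
      obtain ⟨i, hi, hmin⟩ := WellFounded.has_min (wellFounded_lt (α := Fin n))
        {i | X (Fin.castLE hnm i) ∉ p.asIdeal} hall
      have := card_le_of_mem (Finset.univ.filter
        (fun j : Fin m => j.val < i.val ∨ (mu i ≤ j.val ∧ j.val < lam i))) p (by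
          intro j hj
          simp only [Finset.mem_filter, Finset.mem_univ, true_and] at hj
          rcases hj with hj | hj
          · by_contra hc
            exact hmin ⟨j.val, by omega⟩ hc hj
          · have : X (Fin.castLE hnm i) * X j ∈ p.asIdeal :=
              hp (Ideal.subset_span ⟨i, j, hj.1, hj.2, rfl⟩)
            exact (p.isPrime.mem_or_mem this).resolve_left hi)
      rw [card_filter_fin m i.val (mu i) (lam i) (hmu_ge i) (hlt i).le (hle i)] at this
      refine le_trans ?_ this
      have h1 : sInf {h : ℕ | ∃ i : Fin n, h = lam i - mu i + i.val} ≤ lam i - mu i + i.val :=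
        Nat.sInf_le ⟨i, rfl⟩
      exact_mod_cast (min_le_left _ _).trans h1
end

section
/- Assume μ_i ≥ i − 1 for all i = 1,…,n, and set d := m − max_{1≤j≤n} (λ_j − μ_j + j − 1). Then the depth of S/Ī_{λ−μ} equals d; concretely: every list of elements of the irrelevant maximal ideal 𝔪 = (x_1,…,x_m) of S that is a regular sequence on the S-module S/Ī_{λ−μ} has length at most d, and there exists such a regular sequence of length exactly d. -/
open MvPolynomial

namespace FerrersDepth

section General

variable {R : Type*} [CommRing R]

/-- `a` is a nonzerodivisor modulo the ideal `I`. -/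
def RegMod (I : Ideal R) (a : R) : Prop := ∀ f, a * f ∈ I → f ∈ I

/-- There is a regular sequence of length `k` on `R ⧸ I` with entries in `m`. -/
def DepthGe (m : Ideal R) : ℕ → Ideal R → Prop
  | 0, _ => True
  | k + 1, I => ∃ c ∈ m, RegMod I c ∧ DepthGe m k (I ⊔ Ideal.span {c})

lemma mem_sup_span {I : Ideal R} {a x : R} :
    x ∈ I ⊔ Ideal.span {a} ↔ ∃ y, x - a * y ∈ I := by
  rw [Submodule.mem_sup]
  constructor
  · rintro ⟨i, hi, z, hz, rfl⟩
    obtain ⟨y, rfl⟩ := Ideal.mem_span_singleton'.1 hz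
    exact ⟨y, by convert hi using 1; ring⟩
  · rintro ⟨y, hy⟩
    exact ⟨_, hy, a * y, Ideal.mul_mem_right _ _ (Ideal.mem_span_singleton_self a), by ring⟩

lemma regMod_iff {I : Ideal R} {a : R} : RegMod I a ↔ IsSMulRegular (R ⧸ I) a := by
  rw [isSMulRegular_quotient_iff_mem_of_smul_mem]; rfl

/-- Simultaneous prime avoidance. -/
lemma exists_regMod [IsNoetherianRing R] (J : Ideal R) (Is : Finset (Ideal R))
    (h : ∀ I ∈ Is, ∀ u, (∀ j ∈ J, j * u ∈ I) → u ∈ I) :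
    ∃ a ∈ J, ∀ I ∈ Is, RegMod I a := by
  classical
  let T : Set (Ideal R) := ⋃ I ∈ Is, associatedPrimes R (R ⧸ I)
  have hT : T.Finite := Set.Finite.biUnion Is.finite_toSet
    (fun I _ => associatedPrimes.finite R (R ⧸ I))
  by_contra hcon
  push Not at hcon
  have hsub : (J : Set R) ⊆ ⋃ P ∈ (↑hT.toFinset : Set (Ideal R)), ((id P : Ideal R) : Set R) := by
    intro a ha
    obtain ⟨I, hI, hn⟩ := hcon a ha
    rw [regMod_iff] at hn
    have h1 : a ∈ ({r : R | IsSMulRegular (R ⧸ I) r}ᶜ : Set R) := hn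
    rw [← biUnion_associatedPrimes_eq_compl_regular] at h1
    simp only [Set.mem_iUnion] at h1 ⊢
    obtain ⟨P, hP, haP⟩ := h1
    refine ⟨P, ?_, haP⟩
    simp only [Set.Finite.coe_toFinset, T, Set.mem_iUnion]
    exact ⟨I, hI, hP⟩
  rw [Ideal.subset_union_prime ⊥ ⊥] at hsub
  · obtain ⟨P, hP, hJP⟩ := hsub
    simp only [Set.Finite.mem_toFinset, T, Set.mem_iUnion] at hP
    obtain ⟨I, hI, hP⟩ := hP
    obtain ⟨hpr, x, hx⟩ := isAssociatedPrime_iff.1 hP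
    obtain ⟨u, rfl⟩ := Ideal.Quotient.mk_surjective x
    have key : ∀ s, s ∈ P ↔ s * u ∈ I := by
      intro s
      rw [hx, Submodule.mem_colon_singleton, Submodule.mem_bot, ← Ideal.Quotient.eq_zero_iff_mem]
      rfl
    have : u ∈ I := h I hI u (fun j hj => (key j).1 (hJP hj))
    apply hpr.ne_top
    rw [Ideal.eq_top_iff_one, key]
    simpa using this
  · intro P hP _ _
    simp only [Set.Finite.mem_toFinset, T, Set.mem_iUnion] at hP
    obtain ⟨I, hI, hP⟩ := hP
    exact hP.isPrime

lemma RegMod.swap {I : Ideal R} {a c : R} (ha : RegMod I a)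
    (hc : RegMod (I ⊔ Ideal.span {a}) c) : RegMod (I ⊔ Ideal.span {c}) a := by
  intro x hx
  obtain ⟨y, hy⟩ := mem_sup_span.1 hx
  have h1 : y ∈ I ⊔ Ideal.span {a} := by
    apply hc
    rw [mem_sup_span]
    exact ⟨x, by convert I.neg_mem hy using 1; ring⟩
  obtain ⟨z, hz⟩ := mem_sup_span.1 h1
  rw [mem_sup_span]
  refine ⟨z, ha _ ?_⟩
  have := I.add_mem hy (I.mul_mem_left c hz)
  convert this using 1; ring

lemma kaplansky {m I : Ideal R} {a b : R} (ham : a ∈ m)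
    (ha : RegMod I a) (hb : RegMod I b)
    (h : ∀ u, (∀ j ∈ m, j * u ∈ I ⊔ Ideal.span {a}) → u ∈ I ⊔ Ideal.span {a}) :
    ∀ u, (∀ j ∈ m, j * u ∈ I ⊔ Ideal.span {b}) → u ∈ I ⊔ Ideal.span {b} := by
  intro u hu
  obtain ⟨v, hv⟩ := mem_sup_span.1 (hu a ham)
  -- a u = b v
  have h1 : v ∈ I ⊔ Ideal.span {a} := by
    apply h
    intro j hj
    obtain ⟨w, hw⟩ := mem_sup_span.1 (hu j hj)
    rw [mem_sup_span]
    refine ⟨w, hb _ ?_⟩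
    have := I.sub_mem (I.mul_mem_left a hw) (I.mul_mem_left j hv)
    convert this using 1; ring
  obtain ⟨w, hw⟩ := mem_sup_span.1 h1
  rw [mem_sup_span]
  refine ⟨w, ha _ ?_⟩
  have := I.add_mem hv (I.mul_mem_left b hw)
  convert this using 1; ring

lemma no_socle_of_regMod {m I : Ideal R} {c : R} (hcm : c ∈ m) (hc : RegMod I c) :
    ∀ u, (∀ j ∈ m, j * u ∈ I) → u ∈ I := fun u hu => hc u (hu c hcm)

/-- Theorem of Rees, elementary form. -/
lemma rees [IsNoetherianRing R] {m : Ideal R} (k : ℕ) : ∀ (I : Ideal R) (a b : R), a ∈ m → b ∈ m →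
    RegMod I a → RegMod I b → DepthGe m k (I ⊔ Ideal.span {a}) →
    DepthGe m k (I ⊔ Ideal.span {b}) := by
  classical
  induction k with
  | zero => intros; trivial
  | succ k ih =>
    intro I a b ham hbm ha hb h
    obtain ⟨c0, hc0m, hc0, hd⟩ := h
    have s1 := no_socle_of_regMod hc0m hc0
    have s2 := kaplansky ham ha hb s1
    obtain ⟨c, hcm, hc⟩ := exists_regMod m {I, I ⊔ Ideal.span {a}, I ⊔ Ideal.span {b}} (by
      intro L hL
      simp only [Finset.mem_insert, Finset.mem_singleton] at hL
      rcases hL with rfl | rfl | rfl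
      · exact no_socle_of_regMod ham ha
      · exact s1
      · exact s2)
    have hca := hc (I ⊔ Ideal.span {a}) (by simp)
    have hcb := hc (I ⊔ Ideal.span {b}) (by simp)
    have h1 := ih _ c0 c hc0m hcm hc0 hca hd
    rw [sup_right_comm] at h1
    have h2 := ih _ a b ham hbm (ha.swap hca) (hb.swap hcb) h1
    rw [sup_right_comm] at h2
    exact ⟨c, hcm, hcb, h2⟩

lemma DepthGe.of_regMod [IsNoetherianRing R] {m I : Ideal R} {k : ℕ} {c : R}
    (h : DepthGe m (k + 1) I) (hcm : c ∈ m) (hc : RegMod I c) :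
    DepthGe m k (I ⊔ Ideal.span {c}) := by
  obtain ⟨c0, hc0m, hc0, hd⟩ := h
  exact rees k I c0 c hc0m hcm hc0 hc hd

lemma DepthGe.mono {m : Ideal R} {k l : ℕ} (hkl : k ≤ l) {I : Ideal R} (h : DepthGe m l I) :
    DepthGe m k I := by
  induction k generalizing l I with
  | zero => trivial
  | succ k ih =>
    obtain ⟨l, rfl⟩ : ∃ l', l = l' + 1 := ⟨l - 1, by omega⟩
    obtain ⟨c, hcm, hc, hd⟩ := h
    exact ⟨c, hcm, hc, ih (by omega) hd⟩

/-- Depth lemma for `0 → R/A → R/I → R/(I+x) → 0`, `A = I : x`. -/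
lemma depth_lemma [IsNoetherianRing R] {m : Ideal R} (x : R) (k : ℕ) : ∀ (I A : Ideal R),
    (∀ f, x * f ∈ I ↔ f ∈ A) → DepthGe m k A → DepthGe m k (I ⊔ Ideal.span {x}) →
    DepthGe m k I := by
  classical
  induction k with
  | zero => intros; trivial
  | succ k ih =>
    intro I A hA h1 h2
    obtain ⟨c1, hc1m, hc1, -⟩ := id h1
    obtain ⟨c2, hc2m, hc2, -⟩ := id h2
    obtain ⟨c, hcm, hc⟩ := exists_regMod m {A, I ⊔ Ideal.span {x}} (by
      intro L hL
      simp only [Finset.mem_insert, Finset.mem_singleton] at hL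
      rcases hL with rfl | rfl
      · exact no_socle_of_regMod hc1m hc1
      · exact no_socle_of_regMod hc2m hc2)
    have hcA := hc A (by simp)
    have hcx := hc (I ⊔ Ideal.span {x}) (by simp)
    have hI : RegMod I c := by
      intro f hf
      obtain ⟨g, hg⟩ := mem_sup_span.1 (hcx f (Ideal.mem_sup_left hf))
      have : x * (c * g) ∈ I := by
        have := I.sub_mem hf (I.mul_mem_left c hg)
        convert this using 1; ring
      have := (hA g).2 (hcA _ ((hA _).1 this))
      convert I.add_mem hg this using 1; ring
    refine ⟨c, hcm, hI, ih _ (A ⊔ Ideal.span {c}) ?_ (h1.of_regMod hcm hcA) ?_⟩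
    · intro f
      rw [mem_sup_span, mem_sup_span]
      constructor
      · rintro ⟨g, hg⟩
        have : g ∈ I ⊔ Ideal.span {x} := by
          apply hcx
          rw [mem_sup_span]
          exact ⟨f, by convert I.neg_mem hg using 1; ring⟩
        obtain ⟨h, hh⟩ := mem_sup_span.1 this
        refine ⟨h, (hA _).1 ?_⟩
        have := I.add_mem hg (I.mul_mem_left c hh)
        convert this using 1; ring
      · rintro ⟨g, hg⟩
        refine ⟨x * g, ?_⟩
        convert (hA _).2 hg using 1; ring
    · have := h2.of_regMod hcm hcx
      rwa [sup_right_comm] at this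

lemma exists_prime_colon [IsNoetherianRing R] {m B : Ideal R} [m.IsPrime] (hB : B ≤ m) :
    ∃ (P : Ideal R) (w : R), P.IsPrime ∧ B ≤ P ∧ P ≤ m ∧ ∀ s, s * w ∈ B ↔ s ∈ P := by
  obtain ⟨P, hP, hPm⟩ := Ideal.exists_minimalPrimes_le hB
  have h1 : P ∈ associatedPrimes R (R ⧸ B) := by
    apply Module.associatedPrimes.minimalPrimes_annihilator_subset_associatedPrimes
    rwa [Ideal.annihilator_quotient]
  obtain ⟨hpr, x, hx⟩ := isAssociatedPrime_iff.1 h1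
  obtain ⟨u, rfl⟩ := Ideal.Quotient.mk_surjective x
  refine ⟨P, u, hpr, hP.1.2, hPm, fun s => ?_⟩
  rw [hx, Submodule.mem_colon_singleton, Submodule.mem_bot, ← Ideal.Quotient.eq_zero_iff_mem]
  rfl

lemma exists_colon_step [IsNoetherianRing R] {m I P : Ideal R} [hm : m.IsMaximal] {r u : R}
    (hrm : r ∈ m) (hr : RegMod I r) (hPu : ∀ s, s * u ∈ I ↔ s ∈ P) (hPm : P ≤ m) :
    ∃ v, (∀ p ∈ P, p * v ∈ I) ∧ ∀ s, s * v ∈ I ⊔ Ideal.span {r} → s ∈ m := by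
  by_contra hcon
  push Not at hcon
  let U : Ideal R :=
    { carrier := {v | ∀ p ∈ P, p * v ∈ I}
      add_mem' := fun {a b} ha hb p hp => by rw [mul_add]; exact I.add_mem (ha p hp) (hb p hp)
      zero_mem' := fun p _ => by simp
      smul_mem' := fun c v hv p hp => by
        have := I.mul_mem_left c (hv p hp)
        convert this using 1; simp only [smul_eq_mul]; ring }
  have hle : U ≤ I ⊔ m • U := by
    intro v hv
    obtain ⟨s, hs, hsm⟩ := hcon v hv
    obtain ⟨z, hz⟩ := mem_sup_span.1 hs
    have hzU : z ∈ U := by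
      intro p hp
      apply hr
      have := I.sub_mem (I.mul_mem_left s (hv p hp)) (I.mul_mem_left p hz)
      convert this using 1; ring
    obtain ⟨t, i, him, hti⟩ := hm.exists_inv hsm
    have e : v = t * (s * v - r * z) + (t * r * z + i * v) := by
      linear_combination -v * hti
    rw [e]
    refine Submodule.add_mem_sup (I.mul_mem_left t hz) (add_mem ?_ ?_)
    · exact Submodule.smul_mem_smul (m.mul_mem_left t hrm) hzU
    · exact Submodule.smul_mem_smul him hv
  obtain ⟨q, hq1, hq⟩ := Submodule.exists_sub_one_mem_and_smul_le_of_fg_of_le_sup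
    (IsNoetherian.noetherian U) le_rfl hle
  have huU : u ∈ U := fun p hp => (hPu p).2 hp
  have hqu : q * u ∈ I := hq (Submodule.smul_mem_pointwise_smul u q U huU)
  have hqm := hPm ((hPu q).1 hqu)
  exact hm.ne_top ((Ideal.eq_top_iff_one m).2 (by simpa using m.sub_mem hqm hq1))

lemma depth_le_dim_aux [IsNoetherianRing R] {m : Ideal R} [hm : m.IsMaximal] (k : ℕ) :
    ∀ (I P : Ideal R) (u : R), P.IsPrime → P ≤ m → (∀ s, s * u ∈ I ↔ s ∈ P) → DepthGe m k I →
      (k : WithBot ℕ∞) ≤ ringKrullDim (R ⧸ P) := by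
  induction k with
  | zero =>
    intro I P u hP _ _ _
    have : Nontrivial (R ⧸ P) := Ideal.Quotient.nontrivial_iff.2 hP.ne_top
    exact_mod_cast ringKrullDim_nonneg_of_nontrivial
  | succ k ih =>
    intro I P u hP hPm hPu h
    obtain ⟨r, hrm, hr, hd⟩ := h
    obtain ⟨v, hv1, hv2⟩ := exists_colon_step hrm hr hPu hPm
    let B : Ideal R :=
      { carrier := {s | s * v ∈ I ⊔ Ideal.span {r}}
        add_mem' := fun {a b} ha hb => by
          simp only [Set.mem_ofPred_eq, add_mul] at *; exact add_mem ha hb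
        zero_mem' := by simp
        smul_mem' := fun c s hs => by
          simp only [Set.mem_ofPred_eq, smul_eq_mul, mul_assoc] at *
          exact Ideal.mul_mem_left _ _ hs }
    obtain ⟨P', w, hP', hBP', hP'm, hw⟩ := exists_prime_colon (m := m) (B := B) hv2
    have h1 := ih (I ⊔ Ideal.span {r}) P' (w * v) hP' hP'm (fun s => by
      rw [← hw, ← mul_assoc]; rfl) hd
    have hPP' : P ≤ P' := fun p hp => hBP' (Ideal.mem_sup_left (hv1 p hp))
    have hrP' : r ∈ P' := hBP' (Ideal.mem_sup_right
      (Ideal.mul_mem_right _ _ (Ideal.mem_span_singleton_self r)))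
    have hrP : r ∉ P := fun hrP => by
      have := hr u ((hPu r).2 hrP)
      exact hP.ne_top ((Ideal.eq_top_iff_one P).2 ((hPu 1).1 (by simpa using this)))
    have h2 : ringKrullDim (R ⧸ P') + 1 ≤ ringKrullDim (R ⧸ P) := by
      refine ringKrullDim_succ_le_of_surjective (Ideal.Quotient.factor hPP')
        (Ideal.Quotient.factor_surjective hPP') (r := Ideal.Quotient.mk P r) ?_ ?_
      · rw [mem_nonZeroDivisors_iff_ne_zero]
        rwa [Ne, Ideal.Quotient.eq_zero_iff_mem]
      · simpa [Ideal.Quotient.eq_zero_iff_mem] using hrP'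
    refine le_trans ?_ h2
    push_cast
    gcongr

lemma depth_le_dim [IsNoetherianRing R] {m : Ideal R} [hm : m.IsMaximal] {k : ℕ}
    {I J : Ideal R} {u : R} (hJ : ∀ j ∈ J, j * u ∈ I) (hu : ∀ s, s * u ∈ I → s ∈ m)
    (h : DepthGe m k I) : (k : WithBot ℕ∞) ≤ ringKrullDim (R ⧸ J) := by
  let B : Ideal R :=
    { carrier := {s | s * u ∈ I}
      add_mem' := fun {a b} ha hb => by
        simp only [Set.mem_ofPred_eq, add_mul] at *; exact add_mem ha hb
      zero_mem' := by simp
      smul_mem' := fun c s hs => by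
        simp only [Set.mem_ofPred_eq, smul_eq_mul, mul_assoc] at *
        exact Ideal.mul_mem_left _ _ hs }
  obtain ⟨P, w, hP, hBP, hPm, hw⟩ := exists_prime_colon (m := m) (B := B) hu
  have h1 := depth_le_dim_aux k I P (w * u) hP hPm (fun s => by
      rw [← hw, ← mul_assoc]; rfl) h
  have hJP : J ≤ P := fun j hj => hBP (hJ j hj)
  exact h1.trans (ringKrullDim_le_of_surjective _ (Ideal.Quotient.factor_surjective hJP))

/-- `(R/I)/r(R/I) ≃ R/(I + r)`. -/
noncomputable def quotEquiv (I : Ideal R) (r : R) :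
    QuotSMulTop r (R ⧸ I) ≃ₗ[R] (R ⧸ (I ⊔ Ideal.span {r})) :=
  LinearEquiv.trans (Submodule.quotEquivOfEq _ _ (by
    ext x
    obtain ⟨x, rfl⟩ := Submodule.mkQ_surjective _ x
    constructor
    · intro h
      obtain ⟨y, -, hy⟩ := h
      obtain ⟨y, rfl⟩ := Submodule.mkQ_surjective _ y
      refine ⟨r * y, Ideal.mem_sup_right
        (Ideal.mul_mem_right _ _ (Ideal.mem_span_singleton_self r)), hy⟩
    · rintro ⟨y, hy, hyx⟩
      obtain ⟨z, hz⟩ := mem_sup_span.1 hy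
      refine ⟨Submodule.mkQ I z, trivial, ?_⟩
      rw [← hyx]
      symm
      exact (Submodule.Quotient.eq I).2 hz))
    (Submodule.quotientQuotientEquivQuotient I (I ⊔ Ideal.span {r}) le_sup_left)

lemma depthGe_of_weaklyRegular {m : Ideal R} (rs : List R) : ∀ (I : Ideal R), (∀ r ∈ rs, r ∈ m) →
    RingTheory.Sequence.IsWeaklyRegular (R ⧸ I) rs → DepthGe m rs.length I := by
  induction rs with
  | nil => intros; trivial
  | cons r rs ih =>
    intro I hm h
    rw [RingTheory.Sequence.isWeaklyRegular_cons_iff] at h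
    refine ⟨r, hm r (by simp), regMod_iff.2 h.1, ih _ (fun s hs => hm s (by simp [hs])) ?_⟩
    exact ((quotEquiv I r).isWeaklyRegular_congr rs).1 h.2

lemma weaklyRegular_of_depthGe {m : Ideal R} (k : ℕ) : ∀ (I : Ideal R), DepthGe m k I →
    ∃ rs : List R, (∀ r ∈ rs, r ∈ m) ∧ RingTheory.Sequence.IsWeaklyRegular (R ⧸ I) rs ∧
      rs.length = k := by
  induction k with
  | zero => intro I _; exact ⟨[], by simp, by simp, rfl⟩
  | succ k ih =>
    intro I h
    obtain ⟨c, hcm, hc, hd⟩ := h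
    obtain ⟨rs, h1, h2, h3⟩ := ih _ hd
    refine ⟨c :: rs, by simpa using ⟨hcm, h1⟩, ?_, by simp [h3]⟩
    rw [RingTheory.Sequence.isWeaklyRegular_cons_iff]
    exact ⟨regMod_iff.1 hc, ((quotEquiv I c).isWeaklyRegular_congr rs).2 h2⟩

lemma regular_of_weaklyRegular {m I : Ideal R} (hm : m ≠ ⊤) (hI : I ≤ m) {rs : List R}
    (hrs : ∀ r ∈ rs, r ∈ m) (h : RingTheory.Sequence.IsWeaklyRegular (R ⧸ I) rs) :
    RingTheory.Sequence.IsRegular (R ⧸ I) rs := by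
  refine ⟨h, fun htop => hm ?_⟩
  have h1 : (⊤ : Submodule R (R ⧸ I)) ≤ Submodule.map (Submodule.mkQ I) m := by
    rw [htop, Submodule.smul_le]
    intro r hr n _
    obtain ⟨y, rfl⟩ := Submodule.mkQ_surjective _ n
    have hle : Ideal.ofList rs ≤ m := Ideal.span_le.2 (fun r hr => hrs r hr)
    exact ⟨r * y, m.mul_mem_right _ (hle hr), rfl⟩
  obtain ⟨y, hy, hyx⟩ := h1 (show Submodule.mkQ I 1 ∈ _ from trivial)
  have : y - 1 ∈ I := (Submodule.Quotient.eq I).1 hyx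
  rw [Ideal.eq_top_iff_one]
  simpa using m.sub_mem hy (hI this)

end General

section Poly

variable {K : Type*} [Field K] {m : ℕ}

/-- The irrelevant maximal ideal. -/
noncomputable abbrev irr (K : Type*) [Field K] (m : ℕ) : Ideal (MvPolynomial (Fin m) K) :=
  Ideal.span (Set.range (X : Fin m → MvPolynomial (Fin m) K))

/-- The ideal generated by a set of variables. -/
noncomputable abbrev varIdeal (K : Type*) [Field K] {m : ℕ} (V : Finset (Fin m)) :
    Ideal (MvPolynomial (Fin m) K) :=
  Ideal.span (X '' (V : Set (Fin m)))

lemma mem_irr {f : MvPolynomial (Fin m) K} : f ∈ irr K m ↔ coeff 0 f = 0 := by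
  rw [irr, ← Set.image_univ, mem_ideal_span_X_image]
  constructor
  · intro h
    by_contra hc
    obtain ⟨i, -, hi⟩ := h 0 (mem_support_iff.2 hc)
    simp at hi
  · intro h v hv
    by_contra hc
    push Not at hc
    have : v = 0 := by ext i; exact hc i trivial
    subst this
    exact (mem_support_iff.1 hv) h

lemma irr_eq : irr K m = RingHom.ker (constantCoeff : MvPolynomial (Fin m) K →+* K) := by
  ext f
  rw [mem_irr, RingHom.mem_ker, constantCoeff_eq]

instance irr_max : (irr K m).IsMaximal := by
  rw [irr_eq]
  exact RingHom.ker_isMaximal_of_surjective _ (fun a => ⟨C a, by simp⟩)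

lemma regMod_varIdeal {V : Finset (Fin m)} {w : Fin m} (hw : w ∉ V) :
    RegMod (varIdeal K V) (X w) := by
  intro f hf
  rw [mem_ideal_span_X_image] at hf ⊢
  intro v hv
  obtain ⟨i, hi, h⟩ := hf (Finsupp.single w 1 + v) (by
    rw [mem_support_iff, coeff_X_mul]; exact mem_support_iff.1 hv)
  refine ⟨i, hi, ?_⟩
  have : w ≠ i := fun h => hw (h ▸ hi)
  simpa [this] using h

lemma depthGe_varIdeal (k : ℕ) : ∀ (V : Finset (Fin m)), k + V.card ≤ m →
    DepthGe (irr K m) k (varIdeal K V) := by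
  induction k with
  | zero => intros; trivial
  | succ k ih =>
    intro V hV
    obtain ⟨w, hw⟩ : ∃ w, w ∉ V := by
      by_contra hc
      push Not at hc
      have : V = Finset.univ := by ext; simp [hc]
      rw [this] at hV
      simp at hV
    refine ⟨X w, Ideal.subset_span ⟨w, rfl⟩, regMod_varIdeal hw, ?_⟩
    have := ih (insert w V) (by rw [Finset.card_insert_of_notMem hw]; omega)
    convert this using 1
    rw [varIdeal, varIdeal, Finset.coe_insert, Set.image_insert_eq, Ideal.span_insert, sup_comm]

lemma dim_varIdeal (V : Finset (Fin m)) :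
    ringKrullDim (MvPolynomial (Fin m) K ⧸ varIdeal K V) ≤ ((m - V.card : ℕ) : WithBot ℕ∞) := by
  let W := {x : Fin m // x ∉ V}
  let φ : MvPolynomial W K →ₐ[K] (MvPolynomial (Fin m) K ⧸ varIdeal K V) :=
    aeval (fun w => Ideal.Quotient.mk _ (X w.1))
  have hφ : Function.Surjective φ := by
    rw [← AlgHom.range_eq_top, eq_top_iff]
    rintro x -
    obtain ⟨p, rfl⟩ := Ideal.Quotient.mkₐ_surjective K _ x
    induction p using MvPolynomial.induction_on with
    | C a => exact ⟨C a, by simp [φ]⟩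
    | add p q hp hq => rw [map_add]; exact add_mem hp hq
    | mul_X p i hp =>
      rw [map_mul]
      refine mul_mem hp ?_
      by_cases hi : i ∈ V
      · have : Ideal.Quotient.mkₐ K (varIdeal K V) (X i) = 0 :=
          Ideal.Quotient.eq_zero_iff_mem.2 (Ideal.subset_span ⟨i, hi, rfl⟩)
        rw [this]; exact zero_mem _
      · exact ⟨X ⟨i, hi⟩, by simp [φ]⟩
  refine (ringKrullDim_le_of_surjective φ.toRingHom hφ).trans ?_
  rw [MvPolynomial.ringKrullDim_of_isNoetherianRing, ringKrullDim_eq_zero_of_field, zero_add]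
  have : Nat.card W = m - V.card := by
    rw [Nat.card_eq_fintype_card]
    simp [W]
  rw [this]

end Poly

section Ferrers

variable {K : Type*} [Field K] {n m : ℕ} (hnm : n ≤ m) (lam mu : Fin n → ℕ)

/-- exponents of the generators of the ideal `(x_0, …, x_{t-1}) + (rows ≥ t)`. -/
def expo (t : ℕ) : Set (Fin m →₀ ℕ) :=
  {e | (∃ k : Fin m, k.val < t ∧ e = Finsupp.single k 1) ∨
    ∃ (i : Fin n) (j : Fin m), t ≤ i.val ∧ mu i ≤ j.val ∧ j.val < lam i ∧
      e = Finsupp.single (Fin.castLE hnm i) 1 + Finsupp.single j 1}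

/-- the ideal `(x_0, …, x_{t-1}) + (rows ≥ t)`. -/
noncomputable def rowIdeal (K : Type*) [Field K] (t : ℕ) : Ideal (MvPolynomial (Fin m) K) :=
  Ideal.span ((fun s => monomial s (1 : K)) '' expo hnm lam mu t)

lemma mem_rowIdeal {t : ℕ} {f : MvPolynomial (Fin m) K} :
    f ∈ rowIdeal hnm lam mu K t ↔ ∀ v ∈ f.support, ∃ e ∈ expo hnm lam mu t, e ≤ v :=
  mem_ideal_span_monomial_image

lemma X_mul_X_eq (i j : Fin m) : (X i * X j : MvPolynomial (Fin m) K) =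
    monomial (Finsupp.single i 1 + Finsupp.single j 1) 1 := by
  rw [X, X, monomial_mul, one_mul]

lemma rowIdeal_zero : rowIdeal hnm lam mu K 0 =
    Ideal.span {p : MvPolynomial (Fin m) K |
              ∃ (i : Fin n) (j : Fin m), mu i ≤ j.val ∧ j.val < lam i ∧
                p = X (Fin.castLE hnm i) * X j} := by
  unfold rowIdeal
  congr 1
  ext p
  constructor
  · rintro ⟨e, he, rfl⟩
    rcases he with ⟨k, hk, -⟩ | ⟨i, j, -, h1, h2, rfl⟩
    · omega
    · exact ⟨i, j, h1, h2, (X_mul_X_eq _ _).symm⟩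
  · rintro ⟨i, j, h1, h2, rfl⟩
    exact ⟨_, Or.inr ⟨i, j, Nat.zero_le _, h1, h2, rfl⟩, (X_mul_X_eq _ _).symm⟩

lemma X_mem_rowIdeal {t : ℕ} {k : Fin m} (hk : k.val < t) : X k ∈ rowIdeal hnm lam mu K t :=
  Ideal.subset_span ⟨_, Or.inl ⟨k, hk, rfl⟩, rfl⟩

lemma XX_mem_rowIdeal {t : ℕ} {i : Fin n} {j : Fin m} (ht : t ≤ i.val) (h1 : mu i ≤ j.val)
    (h2 : j.val < lam i) : X (Fin.castLE hnm i) * X j ∈ rowIdeal hnm lam mu K t :=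
  Ideal.subset_span ⟨_, Or.inr ⟨i, j, ht, h1, h2, rfl⟩, (X_mul_X_eq _ _).symm⟩

lemma rowIdeal_succ {t : ℕ} (ht : t < n) : rowIdeal hnm lam mu K t ⊔
    Ideal.span {X (Fin.castLE hnm ⟨t, ht⟩)} = rowIdeal hnm lam mu K (t + 1) := by
  apply le_antisymm
  · refine sup_le (Ideal.span_le.2 ?_) ((Ideal.span_singleton_le_iff_mem _).2
      (X_mem_rowIdeal hnm lam mu (by simp)))
    rintro _ ⟨e, ⟨k, hk, rfl⟩ | ⟨i, j, hi, h1, h2, rfl⟩, rfl⟩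
    · exact X_mem_rowIdeal hnm lam mu (by omega)
    · simp only [← X_mul_X_eq, SetLike.mem_coe]
      rcases Nat.lt_or_ge i.val (t + 1) with h | h
      · exact Ideal.mul_mem_right _ _ (X_mem_rowIdeal hnm lam mu h)
      · exact XX_mem_rowIdeal hnm lam mu h h1 h2
  · refine Ideal.span_le.2 ?_
    rintro _ ⟨e, ⟨k, hk, rfl⟩ | ⟨i, j, hi, h1, h2, rfl⟩, rfl⟩
    · rcases Nat.lt_or_ge k.val t with h | h
      · exact Ideal.mem_sup_left (X_mem_rowIdeal hnm lam mu h)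
      · have : k = Fin.castLE hnm ⟨t, ht⟩ := Fin.ext (by simp; omega)
        subst this
        exact Ideal.mem_sup_right (Ideal.mem_span_singleton_self _)
    · simp only [← X_mul_X_eq, SetLike.mem_coe]
      exact Ideal.mem_sup_left (XX_mem_rowIdeal hnm lam mu (by omega) h1 h2)

lemma rowIdeal_last : rowIdeal hnm lam mu K n =
    varIdeal K (Finset.univ.filter (fun k : Fin m => k.val < n)) := by
  unfold rowIdeal varIdeal
  congr 1
  ext p
  constructor
  · rintro ⟨e, ⟨k, hk, rfl⟩ | ⟨i, j, hi, -⟩, rfl⟩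
    · exact ⟨k, by simpa using hk, rfl⟩
    · omega
  · rintro ⟨k, hk, rfl⟩
    exact ⟨_, Or.inl ⟨k, by simpa using hk, rfl⟩, rfl⟩

/-- the variables `x_k` (`k < t`) and those of the row `i`. -/
def rowVars (m : ℕ) (t a b : ℕ) : Finset (Fin m) :=
  Finset.univ.filter (fun k : Fin m => k.val < t ∨ (a ≤ k.val ∧ k.val < b))

lemma card_rowVars {t a b : ℕ} (h1 : t ≤ a) (h2 : a ≤ b) (h3 : b ≤ m) :
    (rowVars m t a b).card = t + (b - a) := by
  have : (rowVars m t a b).map Fin.valEmbedding = Finset.range t ∪ Finset.Ico a b := by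
    ext x
    simp only [rowVars, Finset.mem_map, Finset.mem_filter, Finset.mem_univ, true_and,
      Fin.valEmbedding_apply, Finset.mem_union, Finset.mem_range, Finset.mem_Ico]
    constructor
    · rintro ⟨k, hk, rfl⟩; exact hk
    · intro h; exact ⟨⟨x, by omega⟩, h, rfl⟩
  rw [← Finset.card_map Fin.valEmbedding, this, Finset.card_union_of_disjoint]
  · simp
  · rw [Finset.disjoint_left]
    intro x hx hx'
    simp at hx hx'
    omega

lemma rowIdeal_colon (hlam : Antitone lam) (hmu : Monotone mu) (hge : ∀ i : Fin n, i.val ≤ mu i)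
    {t : ℕ} (ht : t < n) (f : MvPolynomial (Fin m) K) :
    X (Fin.castLE hnm ⟨t, ht⟩) * f ∈ rowIdeal hnm lam mu K t ↔
      f ∈ varIdeal K (rowVars m t (mu ⟨t, ht⟩) (lam ⟨t, ht⟩)) := by
  set T : Fin m := Fin.castLE hnm ⟨t, ht⟩ with hT
  have hTv : T.val = t := rfl
  constructor
  · intro h
    rw [mem_rowIdeal] at h
    rw [mem_ideal_span_X_image]
    intro v hv
    obtain ⟨e, he, hev⟩ := h (Finsupp.single T 1 + v) (by
      rw [mem_support_iff, coeff_X_mul]; exact mem_support_iff.1 hv)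
    rcases he with ⟨k, hk, rfl⟩ | ⟨i, j, hi, h1, h2, rfl⟩
    · refine ⟨k, by simp [rowVars, hk], ?_⟩
      have := hev k
      have hne : T ≠ k := fun h => by rw [← h] at hk; omega
      simp [hne] at this
      omega
    · have hti : (⟨t, ht⟩ : Fin n) ≤ i := hi
      have a1 := hmu hti
      have a2 := hlam hti
      refine ⟨j, by simp [rowVars]; right; omega, ?_⟩
      have := hev j
      by_cases hne : T = j
      · have h3 := hge i
        have : i = ⟨t, ht⟩ := Fin.ext (by rw [← hne] at h1; simp; omega)
        have h4 : Fin.castLE hnm i = j := by rw [this]; exact hne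
        have := hev j
        simp [h4, hne] at this
        omega
      · simp [hne] at this
        omega
  · intro h
    have hle : varIdeal K (rowVars m t (mu ⟨t, ht⟩) (lam ⟨t, ht⟩)) ≤
        Submodule.comap (LinearMap.mulLeft (MvPolynomial (Fin m) K) (X T)) (rowIdeal hnm lam mu K t) := by
      refine Ideal.span_le.2 ?_
      rintro _ ⟨k, hk, rfl⟩
      simp [rowVars] at hk
      change X T * X k ∈ rowIdeal hnm lam mu K t
      rcases hk with hk | hk
      · exact Ideal.mul_mem_left _ _ (X_mem_rowIdeal hnm lam mu hk)
      · exact XX_mem_rowIdeal hnm lam mu le_rfl hk.1 hk.2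
    exact hle h

lemma depthGe_rowIdeal (hlam : Antitone lam) (hmu : Monotone mu) (hge : ∀ i : Fin n, i.val ≤ mu i)
    (hlm : ∀ i, lam i ≤ m) (hml : ∀ i, mu i < lam i)
    {d : ℕ} (hdn : d + n ≤ m)
    (hd : ∀ i : Fin n, d + (lam i - mu i + i.val) ≤ m) (s : ℕ) :
    ∀ t, t + s = n → DepthGe (irr K m) d (rowIdeal hnm lam mu K t) := by
  induction s with
  | zero =>
    intro t ht
    obtain rfl : t = n := by omega
    rw [rowIdeal_last]
    apply depthGe_varIdeal
    have : Finset.univ.filter (fun k : Fin m => k.val < t) = rowVars m t t t := by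
      ext k; simp [rowVars]
    rw [this, card_rowVars le_rfl le_rfl hnm]
    omega
  | succ s ih =>
    intro t ht
    have htn : t < n := by omega
    refine depth_lemma (X (Fin.castLE hnm ⟨t, htn⟩)) d _ _
      (rowIdeal_colon hnm lam mu hlam hmu hge htn) ?_ ?_
    · apply depthGe_varIdeal
      rw [card_rowVars (show t ≤ mu ⟨t, htn⟩ from hge ⟨t, htn⟩) (hml _).le (hlm _)]
      have : d + (lam ⟨t, htn⟩ - mu ⟨t, htn⟩ + t) ≤ m := hd ⟨t, htn⟩
      omega
    · rw [rowIdeal_succ]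
      exact ih _ (by omega)

lemma coeff_zero_of_mul_X {s : MvPolynomial (Fin m) K} {i : Fin m}
    (h : s * X i ∈ rowIdeal hnm lam mu K 0) : s ∈ irr K m := by
  rw [mem_irr]
  by_contra hc
  rw [mem_rowIdeal] at h
  obtain ⟨e, he, hev⟩ := h (0 + Finsupp.single i 1) (by
    rw [mem_support_iff, coeff_mul_X]; exact hc)
  rcases he with ⟨k, hk, rfl⟩ | ⟨a, b, -, h1, h2, rfl⟩
  · omega
  · have := Finsupp.degree_mono hev
    simp at this

lemma depth_le (hlam : Antitone lam) (hmu : Monotone mu) (hge : ∀ i : Fin n, i.val ≤ mu i)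
    (hlm : ∀ i, lam i ≤ m) (hml : ∀ i, mu i < lam i)
    {d : ℕ} (h : DepthGe (irr K m) d (rowIdeal hnm lam mu K 0)) (i : Fin n) :
    d + (lam i - mu i + i.val) ≤ m := by
  classical
  have g1 := hge i
  have g2 := hml i
  have g3 := hlm i
  set I := rowIdeal hnm lam mu K 0 with hI
  have hXX : ∀ (k j : Fin m), k.val ≤ i.val → mu i ≤ j.val → j.val < lam i → X k * X j ∈ I := by
    intro k j hk h1 h2
    have hkn : k.val < n := by omega
    have hki : (⟨k.val, hkn⟩ : Fin n) ≤ i := hk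
    have a1 := hmu hki
    have a2 := hlam hki
    exact XX_mem_rowIdeal hnm lam mu (i := ⟨k.val, hkn⟩) (Nat.zero_le _) (by omega) (by omega)
  rcases Nat.eq_or_lt_of_le g1 with heq | hlt
  · -- an honest annihilated element
    have key : (d : WithBot ℕ∞) ≤
        ringKrullDim (MvPolynomial (Fin m) K ⧸ varIdeal K (rowVars m 0 0 (lam i))) := by
      refine depth_le_dim (m := irr K m) (I := I) (u := X (Fin.castLE hnm i)) ?_
        (fun s hs => coeff_zero_of_mul_X hnm lam mu hs) h
      intro j hj
      have hle : varIdeal K (rowVars m 0 0 (lam i)) ≤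
          Submodule.comap (LinearMap.mulRight (MvPolynomial (Fin m) K) (X (Fin.castLE hnm i))) I := by
        refine Ideal.span_le.2 ?_
        rintro _ ⟨k, hk, rfl⟩
        simp [rowVars] at hk
        change X k * X (Fin.castLE hnm i) ∈ I
        rcases Nat.le_total k.val i.val with hk' | hk'
        · exact hXX _ _ hk' (by simp; omega) (by simp; omega)
        · rw [mul_comm]
          exact hXX _ _ (by simp) (by omega) hk
      exact hle hj
    have := key.trans (dim_varIdeal _)
    rw [card_rowVars le_rfl (Nat.zero_le _) g3] at this
    have : d ≤ m - (0 + (lam i - 0)) := by exact_mod_cast this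
    omega
  · set V := rowVars m (i.val + 1) (mu i) (lam i) with hV
    have hcard : V.card = i.val + 1 + (lam i - mu i) := card_rowVars hlt g2.le g3
    have hbound : i.val + 1 + (lam i - mu i) ≤ m := by omega
    by_cases hreg : ∃ a ∈ varIdeal K V, RegMod I a
    · obtain ⟨a, haV, ha⟩ := hreg
      have hVeq : varIdeal K V = varIdeal K (rowVars m (i.val + 1) 0 0) ⊔
          varIdeal K (rowVars m 0 (mu i) (lam i)) := by
        rw [varIdeal, varIdeal, varIdeal, ← Ideal.span_union, ← Set.image_union]
        congr 2
        ext k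
        simp [rowVars, hV]
      have haV' := haV
      rw [hVeq] at haV'
      obtain ⟨a1, ha1, a2, ha2, hsum⟩ := Submodule.mem_sup.1 haV'
      -- rows annihilate a2, columns annihilate a1
      have c1 : ∀ k : Fin m, k.val ≤ i.val → X k * a2 ∈ I := by
        intro k hk
        have hle : varIdeal K (rowVars m 0 (mu i) (lam i)) ≤
            Submodule.comap (LinearMap.mulLeft (MvPolynomial (Fin m) K) (X k)) I := by
          refine Ideal.span_le.2 ?_
          rintro _ ⟨j, hj, rfl⟩
          simp [rowVars] at hj
          exact hXX k j hk hj.1 hj.2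
        exact hle ha2
      have c2 : ∀ j : Fin m, mu i ≤ j.val → j.val < lam i → X j * a1 ∈ I := by
        intro j h1 h2
        have hle : varIdeal K (rowVars m (i.val + 1) 0 0) ≤
            Submodule.comap (LinearMap.mulLeft (MvPolynomial (Fin m) K) (X j)) I := by
          refine Ideal.span_le.2 ?_
          rintro _ ⟨k, hk, rfl⟩
          simp [rowVars] at hk
          change X j * X k ∈ I
          rw [mul_comm]
          exact hXX k j (by omega) h1 h2
        exact hle ha1
      have haI : a ∈ irr K m := by
        refine (Ideal.span_mono ?_ : varIdeal K V ≤ irr K m) haV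
        exact Set.image_subset_range _ _
      rcases Nat.eq_zero_or_pos d with h0 | h0
      · omega
      obtain ⟨d', rfl⟩ : ∃ d', d = d' + 1 := ⟨d - 1, by omega⟩
      have h' := h.of_regMod haI ha
      have key : (d' : WithBot ℕ∞) ≤ ringKrullDim (MvPolynomial (Fin m) K ⧸ varIdeal K V) := by
        refine depth_le_dim (m := irr K m) (I := I ⊔ Ideal.span {a}) (u := a1) ?_ ?_ h'
        · intro j hj
          have hle : varIdeal K V ≤
              Submodule.comap (LinearMap.mulRight (MvPolynomial (Fin m) K) a1) (I ⊔ Ideal.span {a}) := by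
            refine Ideal.span_le.2 ?_
            rintro _ ⟨k, hk, rfl⟩
            simp [rowVars, hV] at hk
            change X k * a1 ∈ I ⊔ Ideal.span {a}
            rcases hk with hk | hk
            · rw [mem_sup_span]
              refine ⟨X k, ?_⟩
              convert I.neg_mem (c1 k (by omega)) using 1
              rw [← hsum]; ring
            · exact Ideal.mem_sup_left (c2 k hk.1 hk.2)
          exact hle hj
        · intro s hs
          obtain ⟨w, hw⟩ := mem_sup_span.1 hs
          have e1 : (s - w) * X (Fin.castLE hnm i) ∈ I := by
            apply ha
            have := I.add_mem (I.mul_mem_left (X (Fin.castLE hnm i)) hw)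
              (I.mul_mem_left s (c1 (Fin.castLE hnm i) le_rfl))
            convert this using 1
            rw [← hsum]; ring
          have hj : mu i < m := by omega
          have e2 : w * X (⟨mu i, hj⟩ : Fin m) ∈ I := by
            apply ha
            have := I.sub_mem (I.mul_mem_left s (c2 ⟨mu i, hj⟩ le_rfl g2))
              (I.mul_mem_left (X (⟨mu i, hj⟩ : Fin m)) hw)
            convert this using 1
            ring
          have := add_mem (coeff_zero_of_mul_X hnm lam mu e1) (coeff_zero_of_mul_X hnm lam mu e2)
          simpa using this
      have := key.trans (dim_varIdeal _)
      rw [hcard] at this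
      have : d' ≤ m - (i.val + 1 + (lam i - mu i)) := by exact_mod_cast this
      omega
    · have : ∃ u, (∀ j ∈ varIdeal K V, j * u ∈ I) ∧ u ∉ I := by
        by_contra hc
        push Not at hc
        apply hreg
        obtain ⟨a, ha, h⟩ := exists_regMod (varIdeal K V) {I} (by
          intro L hL
          rw [Finset.mem_singleton] at hL
          subst hL
          exact hc)
        exact ⟨a, ha, h I (by simp)⟩
      obtain ⟨u, hu, huI⟩ := this
      rw [hI, mem_rowIdeal] at huI
      push Not at huI
      obtain ⟨v, hv, hvI⟩ := huI
      have key : (d : WithBot ℕ∞) ≤ ringKrullDim (MvPolynomial (Fin m) K ⧸ varIdeal K V) := by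
        refine depth_le_dim (m := irr K m) (I := I) (u := monomial v 1) ?_ ?_ h
        · intro j hj
          have hle : varIdeal K V ≤ Submodule.comap (LinearMap.mulRight (MvPolynomial (Fin m) K) (monomial v 1)) I := by
            refine Ideal.span_le.2 ?_
            rintro _ ⟨k, hk, rfl⟩
            change X k * monomial v 1 ∈ I
            have h1 := hu (X k) (Ideal.subset_span ⟨k, hk, rfl⟩)
            rw [hI, mem_rowIdeal] at h1 ⊢
            intro x hx
            apply h1
            rw [X, monomial_mul, mem_support_iff, coeff_monomial] at hx
            have : Finsupp.single k 1 + v = x := by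
              by_contra hc
              simp [hc] at hx
            subst this
            rw [mem_support_iff, coeff_X_mul]
            exact mem_support_iff.1 hv
          exact hle hj
        · intro s hs
          rw [mem_irr]
          by_contra hc
          rw [hI, mem_rowIdeal] at hs
          obtain ⟨e, he, hev⟩ := hs (0 + v) (by
            rw [mem_support_iff, coeff_mul_monomial, mul_one]; exact hc)
          rw [zero_add] at hev
          exact hvI e he hev
      have := key.trans (dim_varIdeal _)
      rw [hcard] at this
      have : d ≤ m - (i.val + 1 + (lam i - mu i)) := by exact_mod_cast this
      omega

end Ferrers

end FerrersDepth

/-- Assume `μ_i ≥ i − 1` for all `i`, and set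
`d := m − max_{1≤j≤n} (λ_j − μ_j + j − 1)`. Then the depth of `S/Ī_{λ−μ}`
(`S = K[x_1,…,x_m]`) equals `d`: every list of elements of the irrelevant
maximal ideal `𝔪 = (x_1,…,x_m)` that is a regular sequence on `S/Ī_{λ−μ}` has
length at most `d`, and there exists such a regular sequence of length `d`.
Indices: `i : Fin n`/`j : Fin m` correspond to the 1-based indices `i.val+1`/`j.val+1`,
so the 1-based quantity `λ_j − μ_j + j − 1` reads `lam i - mu i + i.val`. -/
theorem specialized_ferrers_depth
    (K : Type*) [Field K] (n m : ℕ) (hn : 1 ≤ n) (hnm : n ≤ m)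
    (lam mu : Fin n → ℕ)
    (hlam_top : lam ⟨0, hn⟩ = m)
    (hlam_anti : Antitone lam)
    (hlam_pos : 1 ≤ lam ⟨n - 1, by omega⟩)
    (hmu_mono : Monotone mu)
    (hmu_lt : mu ⟨n - 1, by omega⟩ < lam ⟨n - 1, by omega⟩)
    (hmu_ge : ∀ i : Fin n, i.val ≤ mu i)
    (d : ℕ)
    (hd : d = m - sSup {h : ℕ | ∃ i : Fin n, h = lam i - mu i + i.val}) :
    (∀ rs : List (MvPolynomial (Fin m) K),
        (∀ r ∈ rs, r ∈ Ideal.span (Set.range (X : Fin m → MvPolynomial (Fin m) K))) →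
        RingTheory.Sequence.IsRegular
          (MvPolynomial (Fin m) K ⧸
            Ideal.span {p : MvPolynomial (Fin m) K |
              ∃ (i : Fin n) (j : Fin m), mu i ≤ j.val ∧ j.val < lam i ∧
                p = X (Fin.castLE hnm i) * X j}) rs →
        rs.length ≤ d) ∧
    (∃ rs : List (MvPolynomial (Fin m) K),
        (∀ r ∈ rs, r ∈ Ideal.span (Set.range (X : Fin m → MvPolynomial (Fin m) K))) ∧
        RingTheory.Sequence.IsRegular
          (MvPolynomial (Fin m) K ⧸
            Ideal.span {p : MvPolynomial (Fin m) K |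
              ∃ (i : Fin n) (j : Fin m), mu i ≤ j.val ∧ j.val < lam i ∧
                p = X (Fin.castLE hnm i) * X j}) rs ∧
        rs.length = d) := by
  have hn' : n - 1 < n := by omega
  have hlm : ∀ i, lam i ≤ m := fun i => hlam_top ▸ hlam_anti (Fin.le_def.2 (Nat.zero_le _))
  have hml : ∀ i, mu i < lam i := fun i => by
    have hi : i ≤ (⟨n - 1, hn'⟩ : Fin n) := Fin.le_def.2 (by simp; omega)
    exact lt_of_le_of_lt (hmu_mono hi) (lt_of_lt_of_le hmu_lt (hlam_anti hi))
  have hbdd : BddAbove {h : ℕ | ∃ i : Fin n, h = lam i - mu i + i.val} := by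
    refine ⟨m + n, ?_⟩
    rintro _ ⟨i, rfl⟩
    have := hlm i
    omega
  have hne : {h : ℕ | ∃ i : Fin n, h = lam i - mu i + i.val}.Nonempty := ⟨_, ⟨0, hn⟩, rfl⟩
  obtain ⟨i₀, hi₀⟩ := Nat.sSup_mem hne hbdd
  have hle : ∀ i : Fin n, lam i - mu i + i.val ≤
      sSup {h : ℕ | ∃ i : Fin n, h = lam i - mu i + i.val} :=
    fun i => le_csSup hbdd ⟨i, rfl⟩
  have b1 := hlm i₀
  have b2 := hml i₀
  have b3 := hmu_ge i₀
  have b4 := hle ⟨n - 1, hn'⟩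
  have b5 := hml ⟨n - 1, hn'⟩
  simp only at b4
  rw [← FerrersDepth.rowIdeal_zero hnm lam mu]
  constructor
  · intro rs hrs hreg
    have h := FerrersDepth.depthGe_of_weaklyRegular rs _ hrs hreg.toIsWeaklyRegular
    have := FerrersDepth.depth_le hnm lam mu hlam_anti hmu_mono hmu_ge hlm hml h i₀
    omega
  · have h := FerrersDepth.depthGe_rowIdeal (K := K) (d := d) hnm lam mu hlam_anti hmu_mono hmu_ge
      hlm hml (by omega) (fun i => by have := hle i; omega) n 0 (by omega)
    obtain ⟨rs, h1, h2, h3⟩ := FerrersDepth.weaklyRegular_of_depthGe d _ h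
    refine ⟨rs, h1, FerrersDepth.regular_of_weaklyRegular
      (FerrersDepth.irr_max (K := K) (m := m)).ne_top ?_ h1 h2, h3⟩
    rw [FerrersDepth.rowIdeal_zero]
    refine Ideal.span_le.2 ?_
    rintro _ ⟨i, j, -, -, rfl⟩
    exact Ideal.mul_mem_right _ _ (Ideal.subset_span ⟨_, rfl⟩)
end

section
/- Under the stated hypotheses on the graph G (λ_1 = m, λ nonincreasing, μ nondecreasing, and Condition (4.1)), the height of the edge ideal I_G in S equals min{ min_{1≤j≤n} (λ_j − μ_j + j − 1), n }. -/
open MvPolynomial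

/-- Kill the variables in `s`. -/
noncomputable def killVars (K : Type*) [Field K] {m : ℕ} (s : Finset (Fin m)) :
    MvPolynomial (Fin m) K →ₐ[K] MvPolynomial (Fin m) K :=
  aeval (fun i => if i ∈ s then 0 else X i)

lemma ker_killVars (K : Type*) [Field K] {m : ℕ} (s : Finset (Fin m)) :
    RingHom.ker (killVars K s).toRingHom =
      Ideal.span ((fun i => (X i : MvPolynomial (Fin m) K)) '' (s : Set (Fin m))) := by
  apply le_antisymm
  · intro p hp
    have key : ∀ q : MvPolynomial (Fin m) K, q - killVars K s q ∈
        Ideal.span ((fun i => (X i : MvPolynomial (Fin m) K)) '' (s : Set (Fin m))) := by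
      intro q
      induction q using MvPolynomial.induction_on with
      | C a => simp [killVars]
      | add p q hp hq =>
        have := Ideal.add_mem _ hp hq
        rw [map_add]
        convert this using 1
        ring
      | mul_X p i hp =>
        rw [map_mul]
        have h2 : killVars K s (X i) = if i ∈ s then 0 else X i := by simp [killVars]
        rw [h2]
        split_ifs with h
        · rw [mul_zero, sub_zero]
          exact Ideal.mul_mem_left _ _ (Ideal.subset_span ⟨i, h, rfl⟩)
        · rw [← sub_mul]
          exact Ideal.mul_mem_right _ _ hp
    have h := key p
    have h0 : killVars K s p = 0 := hp
    rwa [h0, sub_zero] at h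
  · rw [Ideal.span_le]
    rintro _ ⟨i, hi, rfl⟩
    have hi' : i ∈ s := hi
    change killVars K s (X i) = 0
    simp [killVars, hi']

/-- The prime generated by the variables in `s`. -/
noncomputable def varPrime (K : Type*) [Field K] {m : ℕ} (s : Finset (Fin m)) :
    PrimeSpectrum (MvPolynomial (Fin m) K) :=
  ⟨RingHom.ker (killVars K s).toRingHom, RingHom.ker_isPrime _⟩

lemma X_mem_varPrime (K : Type*) [Field K] {m : ℕ} (s : Finset (Fin m)) (i : Fin m) :
    X i ∈ (varPrime K s).asIdeal ↔ i ∈ s := by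
  change killVars K s (X i) = 0 ↔ _
  simp [killVars]

lemma varPrime_le (K : Type*) [Field K] {m : ℕ} (s : Finset (Fin m))
    (p : PrimeSpectrum (MvPolynomial (Fin m) K)) (h : ∀ i ∈ s, X i ∈ p.asIdeal) :
    varPrime K s ≤ p := by
  change RingHom.ker (killVars K s).toRingHom ≤ p.asIdeal
  rw [ker_killVars, Ideal.span_le]
  rintro _ ⟨i, hi, rfl⟩
  exact h i hi

lemma card_le_height_varPrime (K : Type*) [Field K] {m : ℕ} (s : Finset (Fin m)) :
    (s.card : ℕ∞) ≤ Order.height (varPrime K s) := by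
  induction s using Finset.induction_on with
  | empty => simp
  | insert a s ha ih =>
    rw [Finset.card_insert_of_notMem ha]
    have hlt : varPrime K s < varPrime K (insert a s) := by
      refine lt_of_le_not_ge (varPrime_le K s _ fun i hi => ?_) fun hle => ?_
      · rw [X_mem_varPrime]; exact Finset.mem_insert_of_mem hi
      · have h1 : (X a : MvPolynomial (Fin m) K) ∈ (varPrime K (insert a s)).asIdeal := by
          rw [X_mem_varPrime]; exact Finset.mem_insert_self _ _
        have h2 := (PrimeSpectrum.asIdeal_le_asIdeal _ _).2 hle h1
        exact ha ((X_mem_varPrime K s a).1 h2)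
    push_cast
    exact (add_le_add_left ih 1).trans (Order.height_add_one_le hlt)

lemma height_varPrime_le (K : Type*) [Field K] {m : ℕ} (s : Finset (Fin m)) :
    Order.height (varPrime K s) ≤ s.card := by
  classical
  rw [← PrimeSpectrum.height_eq_orderHeight]
  have hspan : (varPrime K s).asIdeal =
      Ideal.span ((s.image (fun i => (X i : MvPolynomial (Fin m) K)) : Finset _) : Set _) := by
    rw [Finset.coe_image]; exact ker_killVars K s
  have hmem : (varPrime K s).asIdeal ∈ (Ideal.span
      ((s.image (fun i => (X i : MvPolynomial (Fin m) K)) : Finset _) : Set _)).minimalPrimes := by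
    rw [← hspan, Ideal.minimalPrimes_eq_subsingleton_self]
    rfl
  refine (Ideal.height_le_card_of_mem_minimalPrimes_span_finset hmem).trans ?_
  exact_mod_cast Finset.card_image_le

/-- Under the hypotheses of Proposition 4.2 (graph `E` on
`{1,…,m}`, symmetric, loops allowed, no isolated vertex; `n`, `λ`, `μ` as in
the text; `λ_1 = m`, `λ` nonincreasing, `μ` nondecreasing, Condition (4.1)),
the height of the edge ideal `I_G ⊆ S = K[x_1,…,x_m]` equals
`min{ min_{1≤j≤n} (λ_j − μ_j + j − 1), n }`.
Vertices are `Fin m` (1-based label `v.val + 1`); `i : Fin n` has 1-based label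
`i.val + 1`, so the quantity `λ_j − μ_j + j − 1` reads `lam i - mu i + i.val`. -/
theorem edge_ideal_height
    (K : Type*) [Field K] (m : ℕ) (hm : 1 ≤ m)
    (E : Fin m → Fin m → Prop)
    (hsymm : ∀ i j, E i j → E j i)
    (hcover : ∀ i, ∃ j, E i j)
    (n : ℕ) (hn : 1 ≤ n) (hnm : n ≤ m)
    (hn_mem : ∃ j : Fin m, n - 1 ≤ j.val ∧ E ⟨n - 1, by omega⟩ j)
    (hn_max : ∀ i j : Fin m, n ≤ i.val → i.val ≤ j.val → ¬ E i j)
    (lam mu : Fin n → ℕ)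
    (hlam_mem : ∀ i : Fin n, ∃ j : Fin m, j.val + 1 = lam i ∧ E (Fin.castLE hnm i) j)
    (hlam_max : ∀ (i : Fin n) (j : Fin m), E (Fin.castLE hnm i) j → j.val < lam i)
    (hmu_mem : ∀ i : Fin n, ∃ j : Fin m, j.val = mu i ∧ i.val ≤ j.val ∧ E (Fin.castLE hnm i) j)
    (hmu_min : ∀ (i : Fin n) (j : Fin m), i.val ≤ j.val → E (Fin.castLE hnm i) j → mu i ≤ j.val)
    (hlam_top : lam ⟨0, hn⟩ = m)
    (hlam_anti : Antitone lam)
    (hmu_mono : Monotone mu)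
    (hcond : ∀ (i : Fin n) (j : Fin m), mu i ≤ j.val → j.val < lam i → E (Fin.castLE hnm i) j) :
    idealHeight
      (Ideal.span {p : MvPolynomial (Fin m) K |
        ∃ i j : Fin m, E i j ∧ p = X i * X j}) =
      (min (sInf {h : ℕ | ∃ i : Fin n, h = lam i - mu i + i.val}) n : ℕ) := by
  classical
  have hkn : ∀ i j : Fin m, E i j → i.val ≤ j.val → ∃ h : i.val < n,
      mu ⟨i.val, h⟩ ≤ j.val ∧ j.val < lam ⟨i.val, h⟩ := by
    intro i j hE hij
    have h : i.val < n := by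
      by_contra h
      exact hn_max i j (by omega) hij hE
    exact ⟨h, hmu_min ⟨i.val, h⟩ j hij hE, hlam_max ⟨i.val, h⟩ j hE⟩
  have hmulam : ∀ i : Fin n, i.val ≤ mu i ∧ mu i < lam i ∧ lam i ≤ m := by
    intro i
    obtain ⟨j, hj, hij, hE⟩ := hmu_mem i
    have := hlam_max i j hE
    obtain ⟨k, hk, -⟩ := hlam_mem i
    have := k.isLt
    omega
  -- upper bound from a vertex cover
  have upper : ∀ s : Finset (Fin m), (∀ i j : Fin m, E i j → i.val ≤ j.val → i ∈ s ∨ j ∈ s) →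
      idealHeight (Ideal.span {p : MvPolynomial (Fin m) K |
        ∃ i j : Fin m, E i j ∧ p = X i * X j}) ≤ (s.card : ℕ∞) := by
    intro s hs
    refine le_trans (sInf_le ⟨varPrime K s, ?_, rfl⟩) (height_varPrime_le K s)
    rw [Set.mem_setOf_eq]
    rw [Ideal.span_le]
    rintro _ ⟨i, j, hE, rfl⟩
    have : i ∈ s ∨ j ∈ s := by
      rcases le_total i.val j.val with h | h
      · exact hs i j hE h
      · exact (hs j i (hsymm _ _ hE) h).symm
    rcases this with h | h
    · exact Ideal.mul_mem_right _ _ ((X_mem_varPrime K s i).2 h)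
    · exact Ideal.mul_mem_left _ _ ((X_mem_varPrime K s j).2 h)
  have cardIcc : ∀ (a b : ℕ), b ≤ m →
      (Finset.univ.filter (fun v : Fin m => a ≤ v.val ∧ v.val < b)).card = b - a := by
    intro a b hb
    rw [← Nat.card_Ico, ← Finset.card_map Fin.valEmbedding]
    congr 1
    ext x
    simp only [Finset.mem_map, Finset.mem_filter, Finset.mem_univ, true_and,
      Fin.valEmbedding_apply, Finset.mem_Ico]
    constructor
    · rintro ⟨v, hv, rfl⟩; exact hv
    · intro hx; exact ⟨⟨x, by omega⟩, hx, rfl⟩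
  apply le_antisymm
  · rcases min_choice (sInf {h : ℕ | ∃ i : Fin n, h = lam i - mu i + i.val}) n with h | h
    · rw [h]
      obtain ⟨i, hi⟩ := Nat.sInf_mem (s := {h : ℕ | ∃ i : Fin n, h = lam i - mu i + i.val})
        ⟨_, ⟨0, hn⟩, rfl⟩
      rw [hi]
      refine (upper (Finset.univ.filter (fun v : Fin m => mu i ≤ v.val ∧ v.val < lam i) ∪
        Finset.univ.filter (fun v : Fin m => 0 ≤ v.val ∧ v.val < i.val)) ?_).trans ?_
      · intro a b hE hab
        obtain ⟨ha, h1, h2⟩ := hkn a b hE hab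
        simp only [Finset.mem_union, Finset.mem_filter, Finset.mem_univ, true_and]
        by_cases hai : a.val < i.val
        · left; right; omega
        · right; left
          have hle : i ≤ ⟨a.val, ha⟩ := by rw [Fin.le_def]; simp; omega
          have h3 := hmu_mono hle
          have h4 := hlam_anti hle
          omega
      · have := Finset.card_union_le
          (Finset.univ.filter (fun v : Fin m => mu i ≤ v.val ∧ v.val < lam i))
          (Finset.univ.filter (fun v : Fin m => 0 ≤ v.val ∧ v.val < i.val))
        rw [cardIcc _ _ (hmulam i).2.2, cardIcc _ _ (by have := i.isLt; omega)] at this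
        exact_mod_cast this
    · rw [h]
      refine (upper (Finset.univ.filter (fun v : Fin m => 0 ≤ v.val ∧ v.val < n)) ?_).trans ?_
      · intro a b hE hab
        obtain ⟨ha, -, -⟩ := hkn a b hE hab
        left; simp [ha]
      · rw [cardIcc _ _ hnm]; simp
  · refine le_sInf ?_
    rintro _ ⟨p, hp, rfl⟩
    have hp' : Ideal.span {p : MvPolynomial (Fin m) K |
        ∃ i j : Fin m, E i j ∧ p = X i * X j} ≤ p.asIdeal := hp
    have hcov : ∀ i j : Fin m, E i j → X i ∈ p.asIdeal ∨ X j ∈ p.asIdeal := by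
      intro i j hE
      exact p.isPrime.mem_or_mem (hp' (Ideal.subset_span ⟨i, j, hE, rfl⟩))
    have lower : ∀ s : Finset (Fin m), (∀ i ∈ s, X i ∈ p.asIdeal) →
        (s.card : ℕ∞) ≤ Order.height p := fun s hs =>
      (card_le_height_varPrime K s).trans (Order.height_mono (varPrime_le K s p hs))
    by_cases hall : ∀ v : Fin m, v.val < n → X v ∈ p.asIdeal
    · refine le_trans ?_ (lower (Finset.univ.filter (fun v : Fin m => 0 ≤ v.val ∧ v.val < n)) ?_)
      · rw [cardIcc _ _ hnm]
        exact_mod_cast min_le_right _ _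
      · intro v hv
        simp at hv
        exact hall v hv
    · push Not at hall
      have hex : ∃ k : ℕ, ∃ v : Fin m, v.val = k ∧ k < n ∧ X v ∉ p.asIdeal := by
        obtain ⟨v, h1, h2⟩ := hall
        exact ⟨v.val, v, rfl, h1, h2⟩
      obtain ⟨v, hv, hkn', hvp⟩ := Nat.find_spec hex
      have hmin := fun k (hk : k < Nat.find hex) => Nat.find_min hex hk
      rw [← hv] at hkn' hmin
      let i : Fin n := ⟨v.val, hkn'⟩
      have hiv : Fin.castLE hnm i = v := rfl
      have hivv : i.val = v.val := rfl
      have hb := hmulam i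
      refine le_trans ?_ (lower (Finset.univ.filter (fun v : Fin m => mu i ≤ v.val ∧ v.val < lam i) ∪
        Finset.univ.filter (fun v : Fin m => 0 ≤ v.val ∧ v.val < i.val)) ?_)
      · rw [Finset.card_union_of_disjoint, cardIcc _ _ hb.2.2,
          cardIcc _ _ (by have := i.isLt; omega)]
        · have : sInf {h : ℕ | ∃ i : Fin n, h = lam i - mu i + i.val} ≤ lam i - mu i + i.val :=
            Nat.sInf_le ⟨i, rfl⟩
          exact_mod_cast (min_le_left _ _).trans this
        · rw [Finset.disjoint_left]
          intro a ha hb'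
          simp only [Finset.mem_filter, Finset.mem_univ, true_and] at ha hb'
          omega
      · intro a ha
        simp only [Finset.mem_union, Finset.mem_filter, Finset.mem_univ, true_and] at ha
        rcases ha with ⟨h1, h2⟩ | ⟨-, h1⟩
        · exact (hcov v a (hiv ▸ hcond i a h1 h2)).resolve_left hvp
        · by_contra hna
          exact hmin a.val h1 ⟨a, rfl, by omega, hna⟩
end

section
/- Under the stated hypotheses on the graph G (λ_1 = m, λ nonincreasing, μ nondecreasing, and Condition (4.1)), the ring S/I_G is Cohen–Macaulay if and only if min_{1≤j≤n} (λ_j − μ_j + j − 1) = max_{1≤j≤n} (λ_j − μ_j + j − 1) ≤ n; here Cohen–Macaulayness is expressed as: there exists a list of elements of the maximal ideal 𝔪 = (x_1,…,x_m) of S that is a regular sequence on the S-module S/I_G and whose length equals the Krull dimension of the ring S/I_G. -/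
open MvPolynomial

namespace EdgeCM

/-- Ideal-level version of weak regularity on `R ⧸ J`. -/
def WR {R : Type*} [CommRing R] : Ideal R → List R → Prop
  | _, [] => True
  | J, r :: rs => (∀ s, r * s ∈ J → s ∈ J) ∧ WR (J ⊔ Ideal.span {r}) rs

open scoped Pointwise in
lemma wr_iff {R : Type*} [CommRing R] (rs : List R) : ∀ (J : Ideal R),
    RingTheory.Sequence.IsWeaklyRegular (R ⧸ J) rs ↔ WR J rs := by
  induction rs with
  | nil => intro J; simp [WR]
  | cons r rs ih =>
    intro J
    rw [RingTheory.Sequence.isWeaklyRegular_cons_iff, WR, ← ih]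
    refine and_congr ?_ ?_
    · rw [isSMulRegular_iff_right_eq_zero_of_smul]
      constructor
      · intro h s hs
        have := h (Ideal.Quotient.mk J s) (by
          rw [← Ideal.Quotient.mk_eq_mk, ← Submodule.Quotient.mk_smul, Ideal.Quotient.mk_eq_mk]
          exact Ideal.Quotient.eq_zero_iff_mem.2 hs)
        exact Ideal.Quotient.eq_zero_iff_mem.1 this
      · intro h x hx
        obtain ⟨s, rfl⟩ := Ideal.Quotient.mk_surjective x
        rw [← Ideal.Quotient.mk_eq_mk, ← Submodule.Quotient.mk_smul, Ideal.Quotient.mk_eq_mk] at hx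
        exact Ideal.Quotient.eq_zero_iff_mem.2 (h s (Ideal.Quotient.eq_zero_iff_mem.1 hx))
    · have e1 : (r • ⊤ : Submodule R (R ⧸ J)) = Submodule.map J.mkQ (Ideal.span {r}) := by
        ext x
        obtain ⟨s, rfl⟩ := Ideal.Quotient.mk_surjective x
        simp only [Submodule.mem_map, Submodule.mem_smul_pointwise_iff_exists]
        constructor
        · rintro ⟨y, -, hy⟩
          obtain ⟨t, rfl⟩ := Ideal.Quotient.mk_surjective y
          exact ⟨r * t, Ideal.mul_mem_right _ _ (Ideal.mem_span_singleton_self r), hy⟩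
        · rintro ⟨y, hy, h⟩
          obtain ⟨t, rfl⟩ := Ideal.mem_span_singleton.1 hy
          exact ⟨Ideal.Quotient.mk J t, trivial, h⟩
      let e : QuotSMulTop r (R ⧸ J) ≃ₗ[R] R ⧸ (J ⊔ Ideal.span {r}) :=
        (Submodule.quotEquivOfEq _ _ e1).trans
          (Submodule.quotientQuotientEquivQuotientSup J (Ideal.span {r}))
      exact e.isWeaklyRegular_congr rs

lemma wr_ext {R : Type*} [CommRing R] (x : R) (rs : List R) : ∀ (J J' : Ideal R),
    (∀ a, a ∈ J' ↔ a * x ∈ J) → WR J' rs → WR (J ⊔ Ideal.span {x}) rs → WR J rs := by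
  induction rs with
  | nil => intros; trivial
  | cons r rs ih =>
    intro J J' hJ h1 h2
    obtain ⟨a1, a2⟩ := h1
    obtain ⟨b1, b2⟩ := h2
    have key : ∀ s, r * s ∈ J ⊔ Ideal.span {x} → ∃ j ∈ J, ∃ u, s = j + u * x := by
      intro s hs
      obtain ⟨j, hj, y, hy, e⟩ := Submodule.mem_sup.1 (b1 s hs)
      obtain ⟨u, rfl⟩ := Ideal.mem_span_singleton'.1 hy
      exact ⟨j, hj, u, e.symm⟩
    refine ⟨?_, ih _ (J' ⊔ Ideal.span {r}) ?_ a2 ?_⟩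
    · intro s hs
      obtain ⟨j, hj, u, rfl⟩ := key s (Ideal.mem_sup_left hs)
      have : r * u ∈ J' := by
        rw [hJ]
        have h := J.sub_mem hs (J.mul_mem_left r hj)
        convert h using 1; ring
      exact J.add_mem hj ((hJ u).1 (a1 u this))
    · intro a
      constructor
      · intro ha
        obtain ⟨j, hj, y, hy, rfl⟩ := Submodule.mem_sup.1 ha
        rw [add_mul]
        exact Ideal.add_mem _ (Ideal.mem_sup_left ((hJ j).1 hj))
          (Ideal.mem_sup_right (Ideal.mul_mem_right _ _ hy))
      · intro ha
        obtain ⟨j, hj, y, hy, e⟩ := Submodule.mem_sup.1 ha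
        obtain ⟨b, rfl⟩ := Ideal.mem_span_singleton'.1 hy
        have hb : r * b ∈ J ⊔ Ideal.span {x} := by
          have : r * b = a * x - j := by rw [← e]; ring
          rw [this]
          exact Ideal.sub_mem _ (Ideal.mem_sup_right (Ideal.mul_mem_left _ _
            (Ideal.mem_span_singleton_self x))) (Ideal.mem_sup_left hj)
        obtain ⟨j', hj', u, rfl⟩ := key b hb
        have h3 : a - r * u ∈ J' := by
          rw [hJ]
          have h := J.add_mem hj (J.mul_mem_left r hj')
          convert h using 1
          linear_combination -e
        have : a = (a - r * u) + u * r := by ring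
        rw [this]
        exact Ideal.add_mem _ (Ideal.mem_sup_left h3) (Ideal.mem_sup_right
          (Ideal.mul_mem_left _ _ (Ideal.mem_span_singleton_self r)))
    · rw [sup_right_comm]; exact b2

section Koszul
variable {m : ℕ} {R : Type*} [CommRing R]

/-- Koszul sign. -/
def sg (R : Type*) [CommRing R] {m : ℕ} (i : Fin m) (A : Finset (Fin m)) : R :=
  (-1) ^ (A.filter (· < i)).card

lemma sg_mul_self (i : Fin m) (A : Finset (Fin m)) : sg R i A * sg R i A = 1 := by
  unfold sg; rw [← pow_add, ← two_mul, pow_mul]; simp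

lemma sg_insert (i j : Fin m) (A : Finset (Fin m)) (hj : j ∉ A) :
    sg R i (insert j A) = (if j < i then -1 else 1) * sg R i A := by
  unfold sg
  rw [Finset.filter_insert]
  split_ifs with h
  · rw [Finset.card_insert_of_notMem (by simp [hj])]; ring
  · simp

lemma sg_erase (i j : Fin m) (A : Finset (Fin m)) (hj : j ∈ A) :
    sg R i (A.erase j) = (if j < i then -1 else 1) * sg R i A := by
  have := sg_insert (R := R) i j (A.erase j) (by simp)
  rw [Finset.insert_erase hj] at this
  rw [this]; split_ifs <;> ring

/-- contraction -/
def lo (R : Type*) [CommRing R] {m : ℕ} (i : Fin m) :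
    Module.End R (Finset (Fin m) → R) where
  toFun z A := if i ∈ A then 0 else sg R i A * z (insert i A)
  map_add' x y := by ext A; simp only [Pi.add_apply]; split_ifs <;> ring
  map_smul' c y := by
    ext A; simp only [Pi.smul_apply, smul_eq_mul, RingHom.id_apply]; split_ifs <;> ring

/-- exterior multiplication -/
def up (R : Type*) [CommRing R] {m : ℕ} (i : Fin m) :
    Module.End R (Finset (Fin m) → R) where
  toFun z A := if i ∈ A then sg R i A * z (A.erase i) else 0
  map_add' x y := by ext A; simp only [Pi.add_apply]; split_ifs <;> ring
  map_smul' c y := by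
    ext A; simp only [Pi.smul_apply, smul_eq_mul, RingHom.id_apply]; split_ifs <;> ring

lemma lo_apply (i : Fin m) (z : Finset (Fin m) → R) (A) :
    lo R i z A = if i ∈ A then 0 else sg R i A * z (insert i A) := rfl
lemma up_apply (i : Fin m) (z : Finset (Fin m) → R) (A) :
    up R i z A = if i ∈ A then sg R i A * z (A.erase i) else 0 := rfl

lemma lo_lo_self (i : Fin m) : lo R i * lo R i = 0 := by
  ext1 z; ext A; simp [lo_apply]

lemma lo_lo (i j : Fin m) : lo R i * lo R j + lo R j * lo R i = 0 := by
  by_cases hij : i = j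
  · subst hij; simp [lo_lo_self]
  apply LinearMap.ext; intro z; ext A
  have hji : ¬ j = i := fun h => hij h.symm
  simp only [LinearMap.add_apply, Module.End.mul_apply, Pi.add_apply, lo_apply, Finset.mem_insert,
    LinearMap.zero_apply, Pi.zero_apply, hij, hji, false_or]
  by_cases hi : i ∈ A <;> by_cases hj : j ∈ A <;> simp only [hi, hj, if_true, if_false] <;>
    try ring1
  rw [sg_insert _ _ _ hi, sg_insert _ _ _ hj, Finset.insert_comm]
  rcases lt_or_gt_of_ne hij with h | h <;> simp [h, not_lt_of_gt h] <;> ring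

lemma lo_up (i j : Fin m) : lo R i * up R j + up R j * lo R i = if i = j then 1 else 0 := by
  apply LinearMap.ext; intro z; ext A
  by_cases hij : i = j
  · subst hij
    simp only [LinearMap.add_apply, Module.End.mul_apply, Pi.add_apply, lo_apply, up_apply,
      if_true, Module.End.one_apply]
    by_cases hi : i ∈ A
    · simp only [hi, if_true, Finset.notMem_erase, if_false, Finset.insert_erase hi]
      rw [sg_erase _ _ _ hi]; simp only [lt_irrefl, if_false]
      linear_combination z A * sg_mul_self (R := R) i A
    · simp only [hi, if_false, Finset.mem_insert_self, if_true, Finset.erase_insert hi]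
      rw [sg_insert _ _ _ hi]; simp only [lt_irrefl, if_false]
      linear_combination z A * sg_mul_self (R := R) i A
  have hji : ¬ j = i := fun h => hij h.symm
  simp only [LinearMap.add_apply, Module.End.mul_apply, Pi.add_apply, lo_apply, up_apply,
    Finset.mem_insert, Finset.mem_erase, LinearMap.zero_apply, Pi.zero_apply, hij, hji, false_or,
    if_false, ne_eq, not_false_eq_true, true_and]
  by_cases hi : i ∈ A <;> by_cases hj : j ∈ A <;> simp only [hi, hj, if_true, if_false] <;>
    try ring1
  rw [sg_insert _ _ _ hi, sg_erase _ _ _ hj, Finset.erase_insert_of_ne hij]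
  rcases lt_or_gt_of_ne hij with h | h <;> simp [h, not_lt_of_gt h] <;> ring

/-- partial Koszul differential -/
def dd (x : Fin m → R) (s : Finset (Fin m)) : Module.End R (Finset (Fin m) → R) :=
  ∑ i ∈ s, x i • lo R i

lemma dd_lo (x : Fin m → R) (s : Finset (Fin m)) (i : Fin m) :
    dd x s * lo R i + lo R i * dd x s = 0 := by
  unfold dd
  rw [Finset.sum_mul, Finset.mul_sum, ← Finset.sum_add_distrib]
  refine Finset.sum_eq_zero fun j _ => ?_
  rw [smul_mul_assoc, mul_smul_comm, ← smul_add, lo_lo, smul_zero]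

lemma dd_sq (x : Fin m → R) (s : Finset (Fin m)) : dd x s * dd x s = 0 := by
  induction s using Finset.induction_on with
  | empty => simp [dd]
  | insert a s ha ih =>
    have e : dd x (insert a s) = x a • lo R a + dd x s := by
      unfold dd; rw [Finset.sum_insert ha]
    rw [e, add_mul, mul_add, mul_add, ih, smul_mul_smul_comm, lo_lo_self, smul_zero, zero_add,
      add_zero, smul_mul_assoc, mul_smul_comm, ← smul_add, add_comm, dd_lo, smul_zero]

lemma dd_up (x : Fin m → R) (s : Finset (Fin m)) (j : Fin m) :
    dd x s * up R j + up R j * dd x s = if j ∈ s then x j • 1 else 0 := by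
  unfold dd
  rw [Finset.sum_mul, Finset.mul_sum, ← Finset.sum_add_distrib]
  rw [Finset.sum_congr rfl (g := fun i => if i = j then x j • 1 else 0)]
  · simp
  · intro i _
    rw [smul_mul_assoc, mul_smul_comm, ← smul_add, lo_up]
    split_ifs with h
    · rw [h]
    · simp

lemma dd_apply (x : Fin m → R) (s : Finset (Fin m)) (z) (A) :
    dd x s z A = ∑ i ∈ s, x i * lo R i z A := by
  simp [dd, LinearMap.sum_apply, Finset.sum_apply]

lemma lo_mem (J : Ideal R) (i : Fin m) (z : Finset (Fin m) → R) (hz : ∀ A, z A ∈ J) (A) :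
    lo R i z A ∈ J := by
  rw [lo_apply]; split_ifs
  · exact J.zero_mem
  · exact J.mul_mem_left _ (hz _)

lemma up_mem (J : Ideal R) (i : Fin m) (z : Finset (Fin m) → R) (hz : ∀ A, z A ∈ J) (A) :
    up R i z A ∈ J := by
  rw [up_apply]; split_ifs
  · exact J.mul_mem_left _ (hz _)
  · exact J.zero_mem

lemma dd_mem (J : Ideal R) (x : Fin m → R) (s) (z : Finset (Fin m) → R) (hz : ∀ A, z A ∈ J) (A) :
    dd x s z A ∈ J := by
  rw [dd_apply]
  exact J.sum_mem fun i _ => J.mul_mem_left _ (lo_mem J i z hz A)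

lemma koszul (x : Fin m → R) (rs : List R) : ∀ (J : Ideal R),
    (∀ r ∈ rs, r ∈ Ideal.span (Set.range x)) → WR J rs →
    ∀ z : Finset (Fin m) → R, (∀ A, A.card + rs.length ≤ m → z A = 0) →
      (∀ A, dd x Finset.univ z A ∈ J) →
      ∃ w : Finset (Fin m) → R, ∀ A, z A - dd x Finset.univ w A ∈ J := by
  induction rs with
  | nil =>
    intro J _ _ z hz _
    refine ⟨0, fun A => ?_⟩
    rw [hz A (by simpa using Finset.card_le_univ A)]
    simp
  | cons r rs ih =>
    intro J hrs hJ z hz hdz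
    obtain ⟨h1, h2⟩ := hJ
    obtain ⟨c, hc⟩ := (Ideal.mem_span_range_iff_exists_fun).1 (hrs r (by simp))
    let H : Module.End R (Finset (Fin m) → R) := ∑ i, c i • up R i
    have hH : dd x Finset.univ * H + H * dd x Finset.univ = r • 1 := by
      simp only [H]
      rw [Finset.sum_mul, Finset.mul_sum, ← Finset.sum_add_distrib, ← hc, Finset.sum_smul]
      refine Finset.sum_congr rfl fun i _ => ?_
      rw [smul_mul_assoc, mul_smul_comm, ← smul_add, dd_up]
      simp [smul_smul]
    have Happ : ∀ y A, H y A = ∑ i, c i * up R i y A := by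
      intro y A; simp [H, LinearMap.sum_apply, Finset.sum_apply]
    have hHz : ∀ A, dd x Finset.univ (H z) A + H (dd x Finset.univ z) A = r * z A := by
      intro A
      have := congrFun (LinearMap.congr_fun hH z) A
      simpa using this
    have hHd : ∀ A, H (dd x Finset.univ z) A ∈ J := by
      intro A; rw [Happ]
      exact J.sum_mem fun i _ => J.mul_mem_left _ (up_mem J i _ hdz A)
    obtain ⟨v, hv⟩ := ih (J ⊔ Ideal.span {r}) (fun s hs => hrs s (by simp [hs])) h2 (H z) (by
      intro A hA
      rw [Happ]
      refine Finset.sum_eq_zero fun i _ => ?_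
      rw [up_apply]
      split_ifs with hi
      · rw [hz _ (by
          have := Finset.card_erase_add_one hi
          simp only [List.length_cons]; omega)]
        simp
      · simp) (by
      intro A
      have : dd x Finset.univ (H z) A = r * z A - H (dd x Finset.univ z) A := by
        rw [← hHz]; ring
      rw [this]
      exact Ideal.sub_mem _ (Ideal.mem_sup_right (Ideal.mul_mem_right _ _
        (Ideal.mem_span_singleton_self r))) (Ideal.mem_sup_left (hHd A)))
    have : ∀ A, ∃ b, (H z) A - dd x Finset.univ v A - r * b ∈ J := by
      intro A
      obtain ⟨j, hj, y, hy, e⟩ := Submodule.mem_sup.1 (hv A)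
      obtain ⟨u, rfl⟩ := Ideal.mem_span_singleton'.1 hy
      refine ⟨u, ?_⟩
      rw [← e]; convert hj using 1; ring
    choose w' hw' using this
    refine ⟨w', fun A => h1 _ ?_⟩
    have h3 := dd_mem J x Finset.univ (H z - dd x Finset.univ v - r • w') hw' A
    have h4 : dd x Finset.univ (dd x Finset.univ v) = 0 := by
      have := LinearMap.congr_fun (dd_sq x Finset.univ) v
      simpa using this
    rw [map_sub, map_sub, h4, map_smul] at h3
    have h5 := J.add_mem h3 (hHd A)
    convert h5 using 1
    simp only [Pi.sub_apply, Pi.zero_apply, Pi.smul_apply, smul_eq_mul]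
    rw [mul_sub, ← hHz]; ring

end Koszul

section Cycle
variable {m : ℕ} {K : Type*} [Field K]

lemma coeff_X_mul_single (u v : Fin m) (p : MvPolynomial (Fin m) K) :
    coeff (Finsupp.single v 1) (X u * p) = if u = v then coeff 0 p else 0 := by
  rw [coeff_X_mul']
  by_cases h : u = v
  · subst h; simp
  · simp [h]

lemma forward (I : Ideal (MvPolynomial (Fin m) K))
    (hI : ∀ f ∈ I, ∀ v, coeff (Finsupp.single v 1) f = 0)
    (i : Fin m) (P : Finset (Fin m))
    (h1 : ∀ b ∈ P, ¬ b < i → (X i * X b : MvPolynomial (Fin m) K) ∈ I)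
    (h2 : ∀ a b, a < i → b ∈ P → ¬ b < i → (X a * X b : MvPolynomial (Fin m) K) ∈ I)
    (b₀ : Fin m) (hb₀ : b₀ ∈ P) (hb₀i : ¬ b₀ < i)
    (rs : List (MvPolynomial (Fin m) K))
    (hrs : ∀ r ∈ rs, r ∈ Ideal.span (Set.range (X : Fin m → MvPolynomial (Fin m) K)))
    (hwr : WR I rs) : P.card + rs.length ≤ m := by
  by_contra hcard
  let S := MvPolynomial (Fin m) K
  let x : Fin m → S := X
  let δ : Finset (Fin m) → S := Pi.single P 1
  let s₁ : Finset (Fin m) := Finset.univ.filter (· < i)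
  let s₂ : Finset (Fin m) := Finset.univ.filter (fun b => ¬ b < i)
  have hsplit : dd x Finset.univ = dd x s₁ + dd x s₂ := by
    simp only [dd, s₁, s₂]
    rw [Finset.sum_filter_add_sum_filter_not]
  have hδ : ∀ A, A ≠ P → δ A = 0 := fun A h => Pi.single_eq_of_ne h _
  let y : Finset (Fin m) → S := dd x s₁ δ
  let z : Finset (Fin m) → S := x i • δ - up S i y
  have hyc : ∀ A, A.card + 1 ≠ P.card → y A = 0 := by
    intro A hA
    simp only [y]
    rw [dd_apply]
    refine Finset.sum_eq_zero fun a _ => ?_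
    rw [lo_apply]
    split_ifs with h
    · simp
    · rw [hδ _ (by rintro rfl; rw [Finset.card_insert_of_notMem h] at hA; exact hA rfl)]; simp
  have hzc : ∀ A, A.card ≠ P.card → z A = 0 := by
    intro A hA
    simp only [z, Pi.sub_apply, Pi.smul_apply]
    rw [hδ A (by rintro rfl; exact hA rfl), up_apply]
    split_ifs with h
    · rw [hyc _ (by rw [Finset.card_erase_add_one h]; exact hA)]; simp
    · simp
  have hyi : ∀ A v, ¬ v < i → coeff (Finsupp.single v 1) (y A) = 0 := by
    intro A v hv
    simp only [y]
    rw [dd_apply, coeff_sum]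
    refine Finset.sum_eq_zero fun a ha => ?_
    rw [coeff_X_mul_single, if_neg]
    rintro rfl
    exact hv (by simpa [s₁] using ha)
  have hsgc : ∀ (v : Fin m) A, sg S v A = C (sg K v A) := by
    intro v A; simp [sg]
  have hupi : ∀ A v, ¬ v < i → coeff (Finsupp.single v 1) (up S i y A) = 0 := by
    intro A v hv
    rw [up_apply]
    split_ifs with h
    · rw [hsgc, coeff_C_mul, hyi _ _ hv, mul_zero]
    · simp
  have hz : ∀ A, dd x Finset.univ z A ∈ I := by
    have e1 : dd x Finset.univ (up S i y) = x i • y - up S i (dd x Finset.univ y) := by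
      have := LinearMap.congr_fun (dd_up x Finset.univ i) y
      simp only [LinearMap.add_apply, Module.End.mul_apply, Finset.mem_univ, if_true,
        LinearMap.smul_apply, Module.End.one_apply] at this
      rw [← this]; abel
    have e2 : dd x Finset.univ y = dd x s₂ y := by
      rw [hsplit, LinearMap.add_apply]
      have := LinearMap.congr_fun (dd_sq x s₁) δ
      simp only [Module.End.mul_apply, LinearMap.zero_apply] at this
      simp only [y]
      rw [this, zero_add]
    have e3 : dd x Finset.univ z = x i • dd x s₂ δ + up S i (dd x s₂ y) := by
      simp only [z]
      rw [map_sub, map_smul, e1, e2, hsplit, LinearMap.add_apply, smul_add]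
      simp only [y]
      abel
    intro A
    rw [e3, Pi.add_apply, Pi.smul_apply, smul_eq_mul]
    refine I.add_mem ?_ (up_mem I i _ ?_ A)
    · rw [dd_apply, Finset.mul_sum]
      refine I.sum_mem fun b hb => ?_
      rw [lo_apply]
      split_ifs with h
      · simp
      · by_cases hA : insert b A = P
        · rw [← mul_assoc]
          exact I.mul_mem_right _ (h1 b (hA ▸ Finset.mem_insert_self b A) (by simpa [s₂] using hb))
        · rw [hδ _ hA]; simp
    · intro A
      rw [dd_apply]
      refine I.sum_mem fun b hb => ?_
      rw [lo_apply]
      split_ifs with h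
      · simp
      · simp only [y]
        rw [dd_apply, Finset.mul_sum, Finset.mul_sum]
        refine I.sum_mem fun a ha => ?_
        rw [lo_apply]
        split_ifs with h'
        · simp
        · by_cases hA : insert a (insert b A) = P
          · have := h2 a b (by simpa [s₁] using ha) (hA ▸ by simp) (by simpa [s₂] using hb)
            have e : x b * (sg S b A * (x a * (sg S a (insert b A) * δ (insert a (insert b A))))) =
              (x a * x b) * (sg S b A * (sg S a (insert b A) * δ (insert a (insert b A)))) := by ring
            rw [e]
            exact I.mul_mem_right _ this
          · rw [hδ _ hA]; simp
  obtain ⟨w, hw⟩ := koszul x rs I hrs hwr z (fun A hA => hzc A (by omega)) hz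
  have hc : ∀ A v, coeff (Finsupp.single v 1) (z A) =
      if v ∈ A then 0 else sg K v A * coeff 0 (w (insert v A)) := by
    intro A v
    have h3 := hI _ (hw A) v
    rw [coeff_sub, sub_eq_zero] at h3
    rw [h3, dd_apply, coeff_sum, Finset.sum_eq_single v]
    · rw [coeff_X_mul_single, if_pos rfl, lo_apply]
      split_ifs
      · simp
      · rw [hsgc, coeff_C_mul]
    · intro b _ hb
      rw [coeff_X_mul_single, if_neg hb]
    · simp
  have hzi : ∀ A v, ¬ v < i → coeff (Finsupp.single v 1) (z A) =
      if i = v then coeff 0 (δ A) else 0 := by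
    intro A v hv
    simp only [z, Pi.sub_apply, Pi.smul_apply, smul_eq_mul]
    rw [coeff_sub, hupi _ _ hv, sub_zero, coeff_X_mul_single]
  have q1 := hzi P i (lt_irrefl _)
  rw [hc, if_pos rfl] at q1
  have hδP : δ P = 1 := Pi.single_eq_same _ _
  rw [hδP, coeff_zero_one] at q1
  by_cases hiP : i ∈ P
  · rw [if_pos hiP] at q1; exact zero_ne_one q1
  rw [if_neg hiP] at q1
  have hbi : i ≠ b₀ := by rintro rfl; exact hiP hb₀
  have q2 := hzi ((insert i P).erase b₀) b₀ hb₀i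
  rw [hc, if_neg hbi, if_neg (by simp), Finset.insert_erase (by simp [hb₀])] at q2
  rcases mul_eq_zero.1 q2 with h | h
  · have := sg_mul_self (R := K) b₀ ((insert i P).erase b₀)
    rw [h] at this; simp at this
  · rw [h] at q1; simp at q1

end Cycle

section Dim
variable {m : ℕ} {K : Type*} [Field K]

lemma dim_poly (A : Finset (Fin m)) :
    ringKrullDim (MvPolynomial {v : Fin m // v ∉ A} K) = ((m - A.card : ℕ) : WithBot ℕ∞) := by
  rw [MvPolynomial.ringKrullDim_of_isNoetherianRing, ringKrullDim_eq_zero_of_field, zero_add]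
  congr 1
  rw [Nat.card_eq_fintype_card, Fintype.card_subtype_compl]
  simp

lemma dim_ge (I : Ideal (MvPolynomial (Fin m) K)) (A : Finset (Fin m))
    (h : I ≤ Ideal.span (X '' (A : Set (Fin m)))) :
    ((m - A.card : ℕ) : WithBot ℕ∞) ≤ ringKrullDim (MvPolynomial (Fin m) K ⧸ I) := by
  rw [← dim_poly (K := K)]
  let f : MvPolynomial (Fin m) K →+* MvPolynomial {v : Fin m // v ∉ A} K :=
    (aeval (R := K) (fun v => if h : v ∈ A then (0 : MvPolynomial {v : Fin m // v ∉ A} K)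
      else X ⟨v, h⟩)).toRingHom
  have hf : ∀ a ∈ I, f a = 0 := by
    intro a ha
    have : Ideal.span (X '' (A : Set (Fin m))) ≤ RingHom.ker f := by
      rw [Ideal.span_le]
      rintro _ ⟨v, hv, rfl⟩
      simp only [SetLike.mem_coe, RingHom.mem_ker]
      have hv' : v ∈ A := hv
      simp [f, hv']
    exact this (h ha)
  refine ringKrullDim_le_of_surjective (Ideal.Quotient.lift I f hf)
    (Ideal.Quotient.lift_surjective_of_surjective _ _ ?_)
  intro p
  refine ⟨rename Subtype.val p, ?_⟩
  change aeval _ (rename _ p) = p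
  rw [aeval_rename]
  have : ((fun v => if h : v ∈ A then (0 : MvPolynomial {v : Fin m // v ∉ A} K)
      else X ⟨v, h⟩) ∘ Subtype.val) = X := by
    funext v; simp [v.2]
  rw [this, aeval_X_left_apply]

lemma dim_var_le (A : Finset (Fin m)) :
    ringKrullDim (MvPolynomial (Fin m) K ⧸ Ideal.span
      (X '' (A : Set (Fin m)) : Set (MvPolynomial (Fin m) K))) ≤ ((m - A.card : ℕ) : WithBot ℕ∞) := by
  rw [← dim_poly (K := K)]
  let J := Ideal.span (X '' (A : Set (Fin m)) : Set (MvPolynomial (Fin m) K))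
  let g : MvPolynomial {v : Fin m // v ∉ A} K →ₐ[K] (MvPolynomial (Fin m) K ⧸ J) :=
    (Ideal.Quotient.mkₐ K J).comp (rename Subtype.val)
  refine ringKrullDim_le_of_surjective g.toRingHom ?_
  intro q
  obtain ⟨p, rfl⟩ := Ideal.Quotient.mk_surjective q
  change (Ideal.Quotient.mk J p) ∈ g.range
  induction p using MvPolynomial.induction_on with
  | C a => exact ⟨C a, by simp only [g, AlgHom.toRingHom_eq_coe, RingHom.coe_coe, AlgHom.comp_apply, rename_C]; rfl⟩
  | add p q hp hq => rw [map_add]; exact add_mem hp hq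
  | mul_X p v hp =>
    rw [map_mul]
    refine mul_mem hp ?_
    by_cases hv : v ∈ A
    · have hX : (X v : MvPolynomial (Fin m) K) ∈ J := Ideal.subset_span ⟨v, hv, rfl⟩
      rw [Ideal.Quotient.eq_zero_iff_mem.2 hX]
      exact zero_mem _
    · exact ⟨X ⟨v, hv⟩, by simp [g]⟩

lemma dim_le (I : Ideal (MvPolynomial (Fin m) K)) (c : ℕ)
    (h : ∀ Q : Ideal (MvPolynomial (Fin m) K), Q.IsPrime → I ≤ Q → ∃ A : Finset (Fin m),
      A.card = c ∧ ∀ v ∈ A, X v ∈ Q) :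
    ringKrullDim (MvPolynomial (Fin m) K ⧸ I) ≤ ((m - c : ℕ) : WithBot ℕ∞) := by
  rw [ringKrullDim_quotient]
  refine iSup_le fun p => ?_
  obtain ⟨A, hA, hQ⟩ := h p.head.1.asIdeal p.head.1.isPrime p.head.2
  refine le_trans ?_ (hA ▸ dim_var_le (K := K) A)
  rw [ringKrullDim_quotient]
  let q : LTSeries (PrimeSpectrum.zeroLocus (Ideal.span
      (X '' (A : Set (Fin m)) : Set (MvPolynomial (Fin m) K)) : Set (MvPolynomial (Fin m) K))) :=
    { length := p.length
      toFun := fun i => ⟨(p i).1, by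
        have h1 : p.head ≤ p i := p.head_le i
        have h2 : p.head.1.asIdeal ≤ (p i).1.asIdeal := h1
        rw [PrimeSpectrum.mem_zeroLocus]
        refine (Ideal.span_le.2 ?_ : _ ≤ (p i).1.asIdeal)
        rintro _ ⟨v, hv, rfl⟩
        exact h2 (hQ v hv)⟩
      step := fun i => p.step i }
  exact Order.LTSeries.length_le_krullDim q

lemma var_prime (A : Finset (Fin m)) (u : Fin m) (hu : u ∉ A) (s : MvPolynomial (Fin m) K)
    (hs : X u * s ∈ Ideal.span (X '' (A : Set (Fin m)) : Set (MvPolynomial (Fin m) K))) :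
    s ∈ Ideal.span (X '' (A : Set (Fin m)) : Set (MvPolynomial (Fin m) K)) := by
  rw [mem_ideal_span_X_image] at hs ⊢
  intro e he
  obtain ⟨v, hv, hne⟩ := hs (e + Finsupp.single u 1) (by
    rw [mem_support_iff] at he ⊢
    rwa [add_comm, coeff_X_mul])
  refine ⟨v, hv, ?_⟩
  have : u ≠ v := by rintro rfl; exact hu hv
  simpa [Finsupp.single_apply, this] using hne

/-- linear forms congruent to distinct variables are regular modulo a variable ideal -/
lemma wr_var {ι : Type*} (θ : ι → MvPolynomial (Fin m) K) (l : List ι) (u : ι → Fin m) :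
    ∀ (A : Finset (Fin m)), l.Nodup → (∀ a ∈ l, ∀ b ∈ l, u a = u b → a = b) →
    (∀ a ∈ l, u a ∉ A) →
    (∀ a ∈ l, θ a - X (u a) ∈ Ideal.span (X '' (A : Set (Fin m)) : Set (MvPolynomial (Fin m) K))) →
    WR (Ideal.span (X '' (A : Set (Fin m)) : Set (MvPolynomial (Fin m) K))) (l.map θ) := by
  induction l with
  | nil => intros; trivial
  | cons t l ih =>
    intro A hnd hinj hA hθ
    have ht := hθ t (by simp)
    have e : Ideal.span (X '' (A : Set (Fin m)) : Set (MvPolynomial (Fin m) K)) ⊔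
        Ideal.span {θ t} = Ideal.span (X '' ((insert (u t) A : Finset (Fin m)) : Set (Fin m))) := by
      apply le_antisymm
      · refine sup_le (Ideal.span_mono (Set.image_mono (by simp))) ?_
        rw [Ideal.span_le, Set.singleton_subset_iff]
        have := Ideal.add_mem _ (Ideal.span_mono (Set.image_mono
          (by simp : (A : Set (Fin m)) ⊆ (insert (u t) A : Finset (Fin m)))) ht)
          (Ideal.subset_span (⟨u t, by simp, rfl⟩ : X (u t) ∈
            X '' ((insert (u t) A : Finset (Fin m)) : Set (Fin m))))
        simpa using this
      · rw [Ideal.span_le]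
        rintro _ ⟨v, hv, rfl⟩
        rcases Finset.mem_insert.1 (Finset.mem_coe.1 hv) with rfl | hv
        · have := Ideal.sub_mem _ (Ideal.mem_sup_right (Ideal.mem_span_singleton_self (θ t)))
            (Ideal.mem_sup_left ht)
          simpa using this
        · exact Ideal.mem_sup_left (Ideal.subset_span ⟨v, hv, rfl⟩)
    rw [List.map_cons]
    refine ⟨?_, ?_⟩
    · intro s hs
      refine var_prime A (u t) (hA t (by simp)) s ?_
      have := Ideal.sub_mem _ hs (Ideal.mul_mem_right s _ ht)
      convert this using 1; ring
    · rw [e]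
      refine ih _ (List.nodup_cons.1 hnd).2 (fun a ha b hb => hinj a (by simp [ha]) b (by simp [hb]))
        ?_ ?_
      · intro a ha hmem
        rcases Finset.mem_insert.1 hmem with h | h
        · have := hinj a (by simp [ha]) t (by simp) h
          subst this
          exact (List.nodup_cons.1 hnd).1 ha
        · exact hA a (by simp [ha]) h
      · intro a ha
        exact Ideal.span_mono (Set.image_mono (by simp)) (hθ a (by simp [ha]))

end Dim

section Comb

lemma color {α : Type*} [DecidableEq α] (C : ℕ → Finset α) (n : ℕ)
    (hstep : ∀ i < n, C i = C (i + 1) ∨ ∃ u v, v ∈ C (i + 1) ∧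
      C i = insert u ((C (i + 1)).erase v) ∧ ∀ j, i < j → j ≤ n → u ∉ C j) :
    ∃ c : α → α, ∀ j ≤ n, Set.BijOn c (C j) (C n) := by
  have key : ∀ k ≤ n, ∃ c : α → α, ∀ j ≤ n, n - k ≤ j → Set.BijOn c (C j) (C n) := by
    intro k
    induction k with
    | zero =>
      intro _
      refine ⟨id, fun j hj hj' => ?_⟩
      obtain rfl : j = n := by omega
      exact Set.bijOn_id _
    | succ k ih =>
      intro hk
      obtain ⟨c, hc⟩ := ih (by omega)
      have hi : n - (k + 1) + 1 = n - k := by omega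
      rcases hstep (n - (k + 1)) (by omega) with h | ⟨u, v, hv, h, hu⟩
      · refine ⟨c, fun j hj hj' => ?_⟩
        by_cases hjk : n - k ≤ j
        · exact hc j hj hjk
        · obtain rfl : j = n - (k + 1) := by omega
          rw [h, hi]
          exact hc _ (by omega) le_rfl
      · refine ⟨Function.update c u (c v), fun j hj hj' => ?_⟩
        by_cases hjk : n - k ≤ j
        · refine (hc j hj hjk).congr ?_
          intro a ha
          rw [Function.update_of_ne]
          rintro rfl
          exact hu j (by omega) hj ha
        · obtain rfl : j = n - (k + 1) := by omega
          rw [hi] at hv h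
          have hb := hc (n - k) (by omega) le_rfl
          have hun : u ∉ C (n - k) := hu _ (by omega) (by omega)
          have hne : ∀ a ∈ C (n - k), Function.update c u (c v) a = c a := by
            intro a ha
            rw [Function.update_of_ne]
            rintro rfl; exact hun ha
          rw [h]
          refine ⟨?_, ?_, ?_⟩
          · intro a ha
            rcases Finset.mem_insert.1 (Finset.mem_coe.1 ha) with rfl | ha
            · rw [Function.update_self]; exact hb.mapsTo hv
            · have ha' := Finset.mem_of_mem_erase ha
              rw [hne a ha']; exact hb.mapsTo ha'
          · intro a ha₀ b hb₀ hab
            rcases Finset.mem_insert.1 (Finset.mem_coe.1 ha₀) with ha | ha <;>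
            rcases Finset.mem_insert.1 (Finset.mem_coe.1 hb₀) with hb' | hb'
            · rw [ha, hb']
            · rw [ha, Function.update_self, hne b (Finset.mem_of_mem_erase hb')] at hab
              exact absurd (hb.injOn hv (Finset.mem_of_mem_erase hb') hab).symm
                (Finset.ne_of_mem_erase hb')
            · rw [hb', Function.update_self, hne a (Finset.mem_of_mem_erase ha)] at hab
              exact absurd (hb.injOn (Finset.mem_of_mem_erase ha) hv hab)
                (Finset.ne_of_mem_erase ha)
            · rw [hne a (Finset.mem_of_mem_erase ha), hne b (Finset.mem_of_mem_erase hb')] at hab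
              exact hb.injOn (Finset.mem_of_mem_erase ha) (Finset.mem_of_mem_erase hb') hab
          · intro t ht
            obtain ⟨a, ha, rfl⟩ := hb.surjOn ht
            by_cases hav : a = v
            · subst hav
              exact ⟨u, by simp, by simp⟩
            · exact ⟨a, by simp [hav, Finset.mem_coe.1 ha], hne a ha⟩
  obtain ⟨c, hc⟩ := key n le_rfl
  exact ⟨c, fun j hj => hc j hj (by omega)⟩

/-- the combinatorial data of the graph -/
structure Data (m n : ℕ) (E : Fin m → Fin m → Prop) (M L : ℕ → ℕ) : Prop where
  hn : 1 ≤ n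
  hnm : n ≤ m
  hsymm : ∀ i j, E i j → E j i
  hE : ∀ k l : Fin m, k ≤ l → (E k l ↔ k.val < n ∧ M k ≤ l.val ∧ l.val < L k)
  hM : ∀ i j, i ≤ j → j < n → M i ≤ M j
  hL : ∀ i j, i ≤ j → j < n → L j ≤ L i
  h1 : ∀ i < n, i ≤ M i
  h2 : ∀ i < n, M i < L i
  h3 : ∀ i < n, L i ≤ m
  hMn : M n = n
  hLn : L n = n

/-- the vertex covers -/
def PP (m : ℕ) (M L : ℕ → ℕ) (i : ℕ) : Finset (Fin m) :=
  Finset.univ.filter (fun v => v.val < i ∨ (M i ≤ v.val ∧ v.val < L i))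

lemma mem_PP {m : ℕ} {M L : ℕ → ℕ} {i : ℕ} {v : Fin m} :
    v ∈ PP m M L i ↔ v.val < i ∨ (M i ≤ v.val ∧ v.val < L i) := by simp [PP]

lemma card_PP {m : ℕ} {M L : ℕ → ℕ} {i : ℕ} (h1 : i ≤ M i) (h2 : M i ≤ L i) (h3 : L i ≤ m) :
    (PP m M L i).card = L i - M i + i := by
  have : (PP m M L i).map Fin.valEmbedding = Finset.range i ∪ Finset.Ico (M i) (L i) := by
    ext a
    simp only [Finset.mem_map, mem_PP, Fin.valEmbedding_apply, Finset.mem_union, Finset.mem_range,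
      Finset.mem_Ico]
    constructor
    · rintro ⟨v, hv, rfl⟩; exact hv
    · intro h; exact ⟨⟨a, by omega⟩, h, rfl⟩
  rw [← Finset.card_map Fin.valEmbedding, this, Finset.card_union_of_disjoint]
  · simp; omega
  · rw [Finset.disjoint_left]; intro a ha hb
    simp at ha hb; omega

/-- edge ideal -/
noncomputable abbrev EI (K : Type*) [Field K] {m : ℕ} (E : Fin m → Fin m → Prop) :
    Ideal (MvPolynomial (Fin m) K) :=
  Ideal.span {p : MvPolynomial (Fin m) K | ∃ i j : Fin m, E i j ∧ p = X i * X j}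

/-- exponents -/
def TT {m : ℕ} (E : Fin m → Fin m → Prop) (i : ℕ) : Set (Fin m →₀ ℕ) :=
  {s | (∃ k : Fin m, k.val < i ∧ s = Finsupp.single k 1) ∨
    ∃ k l : Fin m, E k l ∧ s = Finsupp.single k 1 + Finsupp.single l 1}

/-- chain of ideals -/
noncomputable def II (K : Type*) [Field K] {m : ℕ} (E : Fin m → Fin m → Prop) (i : ℕ) :
    Ideal (MvPolynomial (Fin m) K) :=
  Ideal.span ((fun s => monomial s (1 : K)) '' TT E i)

variable {m n : ℕ} {K : Type*} [Field K] {E : Fin m → Fin m → Prop} {M L : ℕ → ℕ}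

lemma XX (k l : Fin m) : (monomial (Finsupp.single k 1 + Finsupp.single l 1) (1 : K)) = X k * X l := by
  simp [X, monomial_mul]

lemma mem_II {i : ℕ} {f : MvPolynomial (Fin m) K} :
    f ∈ II K E i ↔ ∀ e ∈ f.support, ∃ s ∈ TT E i, s ≤ e := mem_ideal_span_monomial_image

lemma II_zero : II K E 0 = EI K E := by
  unfold II
  congr 1
  ext p
  constructor
  · rintro ⟨s, (⟨k, hk, _⟩ | ⟨k, l, h, rfl⟩), rfl⟩
    · omega
    · exact ⟨k, l, h, XX k l⟩
  · rintro ⟨k, l, h, rfl⟩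
    exact ⟨_, Or.inr ⟨k, l, h, rfl⟩, XX k l⟩

lemma II_succ (i : Fin m) : II K E i ⊔ Ideal.span {X i} = II K E (i + 1) := by
  unfold II
  rw [← Ideal.span_union]
  congr 1
  ext p
  constructor
  · rintro (⟨s, (⟨k, hk, rfl⟩ | h), rfl⟩ | rfl)
    · exact ⟨_, Or.inl ⟨k, by omega, rfl⟩, rfl⟩
    · exact ⟨_, Or.inr h, rfl⟩
    · exact ⟨_, Or.inl ⟨i, by omega, rfl⟩, rfl⟩
  · rintro ⟨s, (⟨k, hk, rfl⟩ | h), rfl⟩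
    · by_cases hki : k = i
      · subst hki; exact Or.inr rfl
      · exact Or.inl ⟨_, Or.inl ⟨k, by
          have : k.val ≠ i.val := fun h => hki (Fin.ext h)
          omega, rfl⟩, rfl⟩
    · exact Or.inl ⟨_, Or.inr h, rfl⟩

lemma coeff_EI {f : MvPolynomial (Fin m) K} (hf : f ∈ EI K E) (v : Fin m) :
    coeff (Finsupp.single v 1) f = 0 := by
  by_contra h
  rw [← II_zero, mem_II] at hf
  obtain ⟨s, (⟨k, hk, _⟩ | ⟨k, l, _, rfl⟩), hs⟩ := hf _ (mem_support_iff.2 h)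
  · omega
  · have a := hs k
    have b := hs l
    simp only [Finsupp.add_apply, Finsupp.single_apply, if_true] at a b
    by_cases h1 : v = k
    · by_cases h2 : v = l
      · subst h1; subst h2; simp at a
      · rw [if_neg h2] at b; omega
    · rw [if_neg h1] at a; omega

namespace Data

lemma edge (D : Data m n E M L) {k l : Fin m} (h1 : k.val < n) (h2 : M k ≤ l.val)
    (h3 : l.val < L k) : E k l :=
  (D.hE k l (Fin.le_def.2 (le_trans (D.h1 k h1) h2))).2 ⟨h1, h2, h3⟩

lemma edge_PP (D : Data m n E M L) {i : ℕ} {k l : Fin m} (h : E k l) :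
    k ∈ PP m M L i ∨ l ∈ PP m M L i := by
  wlog hkl : k ≤ l generalizing k l
  · exact (this (D.hsymm _ _ h) (le_of_not_ge hkl)).symm
  obtain ⟨a, b, c⟩ := (D.hE k l hkl).1 h
  rw [mem_PP, mem_PP]
  by_cases hk : k.val < i
  · exact Or.inl (Or.inl hk)
  · have := D.hM i k (by omega) a
    have := D.hL i k (by omega) a
    exact Or.inr (Or.inr ⟨by omega, by omega⟩)

lemma EI_le (D : Data m n E M L) {i : ℕ} :
    EI K E ≤ Ideal.span (X '' (PP m M L i : Set (Fin m))) := by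
  rw [Ideal.span_le]
  rintro _ ⟨k, l, h, rfl⟩
  rcases D.edge_PP h with h | h
  · exact Ideal.mul_mem_right _ _ (Ideal.subset_span ⟨k, h, rfl⟩)
  · exact Ideal.mul_mem_left _ _ (Ideal.subset_span ⟨l, h, rfl⟩)

lemma II_n (D : Data m n E M L) :
    II K E n = Ideal.span (X '' (PP m M L n : Set (Fin m))) := by
  apply le_antisymm
  · rw [II, Ideal.span_le]
    rintro _ ⟨s, (⟨k, hk, rfl⟩ | ⟨k, l, h, rfl⟩), rfl⟩
    · exact Ideal.subset_span ⟨k, mem_PP.2 (Or.inl hk), rfl⟩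
    · simp only [XX]
      exact D.EI_le (Ideal.subset_span ⟨k, l, h, rfl⟩)
  · rw [Ideal.span_le]
    rintro _ ⟨k, hk, rfl⟩
    have := mem_PP.1 (Finset.mem_coe.1 hk)
    have h1 := D.hMn
    have h2 := D.hLn
    exact Ideal.subset_span ⟨_, Or.inl ⟨k, by omega, rfl⟩, rfl⟩

lemma colon (D : Data m n E M L) (i : Fin m) (hi : i.val < n) (a : MvPolynomial (Fin m) K) :
    a ∈ Ideal.span (X '' (PP m M L i : Set (Fin m)) : Set (MvPolynomial (Fin m) K)) ↔
      a * X i ∈ II K E i := by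
  constructor
  · intro ha
    have : Ideal.span (X '' (PP m M L i : Set (Fin m)) : Set (MvPolynomial (Fin m) K)) ≤
        Submodule.comap (LinearMap.mulRight (MvPolynomial (Fin m) K) (X i)) (II K E i) := by
      refine Ideal.span_le.2 ?_
      rintro _ ⟨v, hv, rfl⟩
      change X v * X i ∈ II K E i
      rcases mem_PP.1 (Finset.mem_coe.1 hv) with h | ⟨h, h'⟩
      · exact Ideal.mul_mem_right _ _ (Ideal.subset_span ⟨_, Or.inl ⟨v, h, rfl⟩, rfl⟩)
      · exact Ideal.subset_span ⟨_, Or.inr ⟨v, i, D.hsymm _ _ (D.edge hi h h'), rfl⟩, XX _ _⟩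
    exact this ha
  · intro ha
    rw [mem_II] at ha
    rw [mem_ideal_span_X_image]
    intro e he
    obtain ⟨s, hs, hle⟩ := ha (e + Finsupp.single i 1) (by
      rw [mem_support_iff] at he ⊢
      rwa [coeff_mul_X])
    have pos : ∀ v : Fin m, v ≠ i → 1 ≤ s v → e v ≠ 0 := by
      intro v hv h1
      have := hle v
      simp only [Finsupp.add_apply, Finsupp.single_apply, if_neg (Ne.symm hv)] at this
      omega
    rcases hs with ⟨k, hk, rfl⟩ | ⟨k, l, h, rfl⟩
    · refine ⟨k, mem_PP.2 (Or.inl hk), pos k (by rintro rfl; omega) (by simp)⟩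
    · wlog hkl : k ≤ l generalizing k l
      · refine this l k (D.hsymm _ _ h) ?_ ?_ (le_of_not_ge hkl)
        · rwa [add_comm]
        · rwa [add_comm]
      obtain ⟨a1, a2, a3⟩ := (D.hE k l hkl).1 h
      have hkl' : k.val ≤ l.val := hkl
      by_cases hk : k.val < i.val
      · exact ⟨k, mem_PP.2 (Or.inl hk), pos k (by rintro rfl; omega) (by simp)⟩
      have b1 := D.hM i k (by omega) a1
      have b2 := D.hL i k (by omega) a1
      refine ⟨l, mem_PP.2 (Or.inr ⟨by omega, by omega⟩), ?_⟩
      by_cases hl : l = i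
      · have : k = i := Fin.ext (by have := congrArg Fin.val hl; omega)
        subst hl; subst this
        have := hle k
        simp only [Finsupp.add_apply, Finsupp.single_apply, if_true] at this
        omega
      · exact pos l hl (by simp)

lemma prime (D : Data m n E M L) (Q : Ideal (MvPolynomial (Fin m) K)) [Q.IsPrime]
    (hQ : EI K E ≤ Q) : ∃ i ≤ n, ∀ v ∈ PP m M L i, X v ∈ Q := by
  classical
  by_cases h : ∃ i, ∃ hi : i < n, (X ⟨i, lt_of_lt_of_le hi D.hnm⟩ : MvPolynomial (Fin m) K) ∉ Q
  · obtain ⟨hi, hX⟩ := Nat.find_spec h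
    refine ⟨Nat.find h, hi.le, fun v hv => ?_⟩
    rcases mem_PP.1 hv with h' | ⟨h1, h2⟩
    · have := Nat.find_min h h'
      push Not at this
      exact this (by omega)
    · have : (X ⟨Nat.find h, lt_of_lt_of_le hi D.hnm⟩ * X v : MvPolynomial (Fin m) K) ∈ Q :=
        hQ (Ideal.subset_span ⟨_, _, D.edge (k := ⟨Nat.find h, lt_of_lt_of_le hi D.hnm⟩) hi h1 h2, rfl⟩)
      exact (Ideal.IsPrime.mem_or_mem inferInstance this).resolve_left hX
  · push Not at h
    refine ⟨n, le_rfl, fun v hv => ?_⟩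
    have h1 := D.hMn
    have h2 := D.hLn
    have := mem_PP.1 hv
    exact h v.val (by omega)

lemma card (D : Data m n E M L) {i : ℕ} (hi : i < n) : (PP m M L i).card = L i - M i + i :=
  card_PP (D.h1 i hi) (D.h2 i hi).le (D.h3 i hi)

lemma card_n (D : Data m n E M L) : (PP m M L n).card = n := by
  have h1 := D.hMn
  have h2 := D.hLn
  rw [card_PP (by omega) (by omega) (by have := D.hnm; omega)]; omega

lemma fwd (D : Data m n E M L) (rs : List (MvPolynomial (Fin m) K))
    (hrs : ∀ r ∈ rs, r ∈ Ideal.span (Set.range (X : Fin m → MvPolynomial (Fin m) K)))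
    (hwr : WR (EI K E) rs)
    (hlen : (rs.length : WithBot ℕ∞) = ringKrullDim (MvPolynomial (Fin m) K ⧸ EI K E)) :
    ∀ i < n, L i - M i + i = m - rs.length ∧ m - rs.length ≤ n := by
  intro i hi
  have hm : i < m := lt_of_lt_of_le hi D.hnm
  have hlt : M i < m := lt_of_lt_of_le (D.h2 i hi) (D.h3 i hi)
  have A := forward (EI K E) (fun f hf v => coeff_EI hf v) ⟨i, hm⟩ (PP m M L i)
    (by
      intro b hb hbi
      rcases mem_PP.1 hb with h | ⟨h, h'⟩
      · exact absurd h hbi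
      · exact Ideal.subset_span ⟨_, _, D.edge (k := ⟨i, hm⟩) hi h h', rfl⟩)
    (by
      intro a b ha hb hbi
      have ha' : a.val < i := ha
      have b1 := D.hM a i ha'.le hi
      have b2 := D.hL a i ha'.le hi
      rcases mem_PP.1 hb with h | ⟨h, h'⟩
      · exact absurd h hbi
      · exact Ideal.subset_span ⟨_, _, D.edge (k := a) (by omega) (by omega) (by omega), rfl⟩)
    ⟨M i, hlt⟩ (mem_PP.2 (Or.inr ⟨le_rfl, D.h2 i hi⟩))
    (by have := D.h1 i hi; simp [Fin.lt_def]; omega) rs hrs hwr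
  have B := dim_ge (EI K E) (PP m M L i) (D.EI_le (K := K))
  have B' := dim_ge (EI K E) (PP m M L n) (D.EI_le (K := K))
  rw [← hlen, D.card hi] at B
  rw [← hlen, D.card_n] at B'
  rw [D.card hi] at A
  have B2 : m - (L i - M i + i) ≤ rs.length := by exact_mod_cast B
  have B3 : m - n ≤ rs.length := by exact_mod_cast B'
  omega

lemma wrI (D : Data m n E M L) (rs : List (MvPolynomial (Fin m) K))
    (h : ∀ i ≤ n, WR (Ideal.span (X '' (PP m M L i : Set (Fin m)))) rs) :
    WR (EI K E) rs := by
  have : ∀ k ≤ n, WR (II K E (n - k)) rs := by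
    intro k
    induction k with
    | zero => intro _; rw [Nat.sub_zero, D.II_n]; exact h n le_rfl
    | succ k ih =>
      intro hk
      have hm := D.hnm
      refine wr_ext (X ⟨n - (k + 1), by omega⟩) rs _ _
        (D.colon ⟨n - (k + 1), by omega⟩ (by simp; omega)) (h _ (by simp)) ?_
      have e0 := II_succ (K := K) (E := E) (⟨n - (k + 1), by omega⟩ : Fin m)
      simp only at e0
      rw [e0]
      have e : n - (k + 1) + 1 = n - k := by omega
      simp only [e]
      exact ih (by omega)
  have := this n le_rfl
  rwa [Nat.sub_self, II_zero] at this

lemma colors (D : Data m n E M L) (hc : ∀ i < n, L i - M i + i = n) :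
    ∃ c : Fin m → Fin m, ∀ j ≤ n, Set.BijOn c ((PP m M L j)ᶜ : Finset (Fin m))
      ((PP m M L n)ᶜ : Finset (Fin m)) := by
  refine color (fun i => (PP m M L i)ᶜ) n ?_
  intro i hi
  have hMn := D.hMn
  have hLn := D.hLn
  have hnm := D.hnm
  have a1 := D.h1 i hi
  have a2 := D.h2 i hi
  have a3 := D.h3 i hi
  have a4 := hc i hi
  have facts : (M (i+1) = M i + 1 ∧ L (i+1) = L i) ∨ (M (i+1) = M i ∧ L i = L (i+1) + 1) ∨
      (i + 1 = n) := by
    by_cases h : i + 1 = n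
    · right; right; exact h
    · have b1 := D.h1 (i+1) (by omega)
      have b2 := D.h2 (i+1) (by omega)
      have b4 := hc (i+1) (by omega)
      have b5 := D.hM i (i+1) (by omega) (by omega)
      have b6 := D.hL i (i+1) (by omega) (by omega)
      omega
  by_cases hloop : M i = i
  · left
    ext v
    simp only [Finset.mem_compl, mem_PP]
    rcases facts with h | h | h
    · omega
    · have b1 : i + 1 < n ∨ i + 1 = n := by omega
      rcases b1 with b1 | b1
      · have := D.h1 (i+1) b1; omega
      · subst b1; omega
    · subst h; omega
  right
  have hu : ∀ j, i < j → j ≤ n → (⟨i, by omega⟩ : Fin m) ∉ (PP m M L j)ᶜ := by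
    intro j hj _
    simp only [Finset.mem_compl, mem_PP, not_not]
    left; exact hj
  rcases facts with h | h | h
  · refine ⟨⟨i, by omega⟩, ⟨M i, by omega⟩, ?_, ?_, hu⟩
    · simp only [Finset.mem_compl, mem_PP]; omega
    · ext v
      simp only [Finset.mem_compl, mem_PP, Finset.mem_insert, Finset.mem_erase, Fin.ext_iff, ne_eq]
      omega
  · refine ⟨⟨i, by omega⟩, ⟨L (i+1), by omega⟩, ?_, ?_, hu⟩
    · simp only [Finset.mem_compl, mem_PP]; 
      have b1 : i + 1 < n ∨ i + 1 = n := by omega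
      rcases b1 with b1 | b1
      · have := D.h1 (i+1) b1; have := D.h2 (i+1) b1; omega
      · subst b1; omega
    · ext v
      simp only [Finset.mem_compl, mem_PP, Finset.mem_insert, Finset.mem_erase, Fin.ext_iff, ne_eq]
      have b1 : i + 1 < n ∨ i + 1 = n := by omega
      rcases b1 with b1 | b1
      · have := D.h1 (i+1) b1; have := D.h2 (i+1) b1; omega
      · subst b1; omega
  · refine ⟨⟨i, by omega⟩, ⟨M i, by omega⟩, ?_, ?_, hu⟩
    · simp only [Finset.mem_compl, mem_PP]; subst h; omega
    · ext v
      simp only [Finset.mem_compl, mem_PP, Finset.mem_insert, Finset.mem_erase, Fin.ext_iff, ne_eq]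
      subst h; omega

lemma bwd (D : Data m n E M L) (hc : ∀ i < n, L i - M i + i = n) :
    ∃ rs : List (MvPolynomial (Fin m) K),
        (∀ r ∈ rs, r ∈ Ideal.span (Set.range (X : Fin m → MvPolynomial (Fin m) K))) ∧
        RingTheory.Sequence.IsRegular (MvPolynomial (Fin m) K ⧸ EI K E) rs ∧
        (rs.length : WithBot ℕ∞) = ringKrullDim (MvPolynomial (Fin m) K ⧸ EI K E) := by
  obtain ⟨c, hcol⟩ := D.colors hc
  have hnm := D.hnm
  let θ : Fin m → MvPolynomial (Fin m) K := fun t => ∑ v ∈ Finset.univ.filter (fun v => c v = t), X v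
  let l : List (Fin m) := ((PP m M L n)ᶜ : Finset (Fin m)).toList
  have hl : ∀ t ∈ l, t ∈ ((PP m M L n)ᶜ : Finset (Fin m)) := fun t ht => Finset.mem_toList.1 ht
  have hθ : ∀ r ∈ l.map θ, r ∈ Ideal.span (Set.range (X : Fin m → MvPolynomial (Fin m) K)) := by
    intro r hr
    obtain ⟨t, _, rfl⟩ := List.mem_map.1 hr
    exact Ideal.sum_mem _ fun v _ => Ideal.subset_span ⟨v, rfl⟩
  have hcard : ∀ i ≤ n, (PP m M L i).card = n := by
    intro i hi
    rcases hi.lt_or_eq with h | rfl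
    · rw [D.card h, hc i h]
    · exact D.card_n
  refine ⟨l.map θ, hθ, ?_, ?_⟩
  · refine ⟨(wr_iff _ _).2 (D.wrI _ fun i hi => ?_), ?_⟩
    · have hb := hcol i hi
      have : ∀ t, ∃ u, t ∈ ((PP m M L n)ᶜ : Finset (Fin m)) → u ∈ ((PP m M L i)ᶜ : Finset (Fin m)) ∧ c u = t := by
        intro t
        by_cases ht : t ∈ ((PP m M L n)ᶜ : Finset (Fin m))
        · obtain ⟨u, hu, e⟩ := hb.surjOn ht
          exact ⟨u, fun _ => ⟨hu, e⟩⟩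
        · exact ⟨t, fun h => absurd h ht⟩
      choose u hu using this
      refine wr_var θ l u _ (Finset.nodup_toList _) ?_ ?_ ?_
      · intro a ha b hb' hab
        rw [← (hu a (hl a ha)).2, ← (hu b (hl b hb')).2, hab]
      · intro a ha
        exact Finset.mem_compl.1 (hu a (hl a ha)).1
      · intro a ha
        have hmem : u a ∈ Finset.univ.filter (fun v => c v = a) := by simp [(hu a (hl a ha)).2]
        simp only [θ]
        rw [← Finset.add_sum_erase _ _ hmem, add_sub_cancel_left]
        refine Ideal.sum_mem _ fun v hv => ?_
        rw [Finset.mem_erase, Finset.mem_filter] at hv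
        by_cases hvP : v ∈ PP m M L i
        · exact Ideal.subset_span ⟨v, hvP, rfl⟩
        · refine absurd (hb.injOn (Finset.mem_coe.2 (Finset.mem_compl.2 hvP))
            (Finset.mem_coe.2 (hu a (hl a ha)).1) ?_) hv.1
          rw [hv.2.2, (hu a (hl a ha)).2]
    · intro htop
      have hle : Ideal.ofList (l.map θ) ≤ Ideal.span (Set.range (X : Fin m → MvPolynomial (Fin m) K)) :=
        Ideal.span_le.2 fun r hr => hθ r hr
      have h1 : (Ideal.Quotient.mk (EI K E) 1) ∈
          (Ideal.ofList (l.map θ) • ⊤ : Submodule (MvPolynomial (Fin m) K)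
            (MvPolynomial (Fin m) K ⧸ EI K E)) := htop ▸ trivial
      have h2 : ∀ y ∈ (Ideal.ofList (l.map θ) • ⊤ : Submodule (MvPolynomial (Fin m) K)
            (MvPolynomial (Fin m) K ⧸ EI K E)), ∃ f ∈ Ideal.ofList (l.map θ),
            Ideal.Quotient.mk (EI K E) f = y := by
        intro y hy
        refine Submodule.smul_induction_on hy ?_ ?_
        · intro r hr x _
          obtain ⟨f, rfl⟩ := Ideal.Quotient.mk_surjective x
          exact ⟨r * f, Ideal.mul_mem_right _ _ hr, rfl⟩
        · rintro _ _ ⟨f, hf, rfl⟩ ⟨g, hg, rfl⟩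
          exact ⟨f + g, Ideal.add_mem _ hf hg, map_add _ _ _⟩
      obtain ⟨f, hf, e⟩ := h2 _ h1
      have h3 : f - 1 ∈ EI K E := Ideal.Quotient.eq.1 e
      have h4 : EI K E ≤ Ideal.span (Set.range (X : Fin m → MvPolynomial (Fin m) K)) := by
        rw [Ideal.span_le]
        rintro _ ⟨k, l, -, rfl⟩
        exact Ideal.mul_mem_right _ _ (Ideal.subset_span ⟨k, rfl⟩)
      have h5 : (1 : MvPolynomial (Fin m) K) ∈ Ideal.span (Set.range (X : Fin m → MvPolynomial (Fin m) K)) := by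
        have := Ideal.sub_mem _ (hle hf) (h4 h3)
        simpa using this
      have h6 : Ideal.span (Set.range (X : Fin m → MvPolynomial (Fin m) K)) ≤
          RingHom.ker (constantCoeff (σ := Fin m) (R := K)) := by
        rw [Ideal.span_le]
        rintro _ ⟨k, rfl⟩
        simp [RingHom.mem_ker]
      have := h6 h5
      simp [RingHom.mem_ker] at this
  · have hlen : (l.map θ).length = m - n := by
      simp [l, Finset.card_compl, D.card_n]
    rw [hlen]
    apply le_antisymm
    · have := dim_ge (EI K E) (PP m M L n) (D.EI_le (K := K))
      rwa [D.card_n] at this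
    · refine dim_le _ _ fun Q hQ hle => ?_
      obtain ⟨i, hi, h⟩ := D.prime Q hle
      exact ⟨_, hcard i hi, h⟩

end Data
end Comb
end EdgeCM

theorem edge_ideal_cohenMacaulay_iff
    (K : Type*) [Field K] (m : ℕ) (hm : 1 ≤ m)
    (E : Fin m → Fin m → Prop)
    (hsymm : ∀ i j, E i j → E j i)
    (hcover : ∀ i, ∃ j, E i j)
    (n : ℕ) (hn : 1 ≤ n) (hnm : n ≤ m)
    (hn_mem : ∃ j : Fin m, n - 1 ≤ j.val ∧ E ⟨n - 1, by omega⟩ j)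
    (hn_max : ∀ i j : Fin m, n ≤ i.val → i.val ≤ j.val → ¬ E i j)
    (lam mu : Fin n → ℕ)
    (hlam_mem : ∀ i : Fin n, ∃ j : Fin m, j.val + 1 = lam i ∧ E (Fin.castLE hnm i) j)
    (hlam_max : ∀ (i : Fin n) (j : Fin m), E (Fin.castLE hnm i) j → j.val < lam i)
    (hmu_mem : ∀ i : Fin n, ∃ j : Fin m, j.val = mu i ∧ i.val ≤ j.val ∧ E (Fin.castLE hnm i) j)
    (hmu_min : ∀ (i : Fin n) (j : Fin m), i.val ≤ j.val → E (Fin.castLE hnm i) j → mu i ≤ j.val)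
    (hlam_top : lam ⟨0, hn⟩ = m)
    (hlam_anti : Antitone lam)
    (hmu_mono : Monotone mu)
    (hcond : ∀ (i : Fin n) (j : Fin m), mu i ≤ j.val → j.val < lam i → E (Fin.castLE hnm i) j) :
    (∃ rs : List (MvPolynomial (Fin m) K),
        (∀ r ∈ rs, r ∈ Ideal.span (Set.range (X : Fin m → MvPolynomial (Fin m) K))) ∧
        RingTheory.Sequence.IsRegular
          (MvPolynomial (Fin m) K ⧸
            Ideal.span {p : MvPolynomial (Fin m) K |
              ∃ i j : Fin m, E i j ∧ p = X i * X j}) rs ∧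
        (rs.length : WithBot ℕ∞) =
          ringKrullDim
            (MvPolynomial (Fin m) K ⧸
              Ideal.span {p : MvPolynomial (Fin m) K |
                ∃ i j : Fin m, E i j ∧ p = X i * X j})) ↔
      (sInf {h : ℕ | ∃ i : Fin n, h = lam i - mu i + i.val} =
          sSup {h : ℕ | ∃ i : Fin n, h = lam i - mu i + i.val} ∧
        sSup {h : ℕ | ∃ i : Fin n, h = lam i - mu i + i.val} ≤ n) := by
  classical
  let M : ℕ → ℕ := fun i => if h : i < n then mu ⟨i, h⟩ else n
  let L : ℕ → ℕ := fun i => if h : i < n then lam ⟨i, h⟩ else n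
  have eM : ∀ i (h : i < n), M i = mu ⟨i, h⟩ := fun i h => by simp only [M]; rw [dif_pos h]
  have eL : ∀ i (h : i < n), L i = lam ⟨i, h⟩ := fun i h => by simp only [L]; rw [dif_pos h]
  have D : EdgeCM.Data m n E M L := by
    refine ⟨hn, hnm, hsymm, ?_, ?_, ?_, ?_, ?_, ?_, by simp [M], by simp [L]⟩
    · intro k l hkl
      constructor
      · intro h
        have hk : k.val < n := by
          by_contra hk
          exact hn_max k l (by omega) hkl h
        have a := hlam_max ⟨k.val, hk⟩ l h
        have b := hmu_min ⟨k.val, hk⟩ l hkl h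
        rw [eM _ hk, eL _ hk]
        exact ⟨hk, b, a⟩
      · rintro ⟨hk, a, b⟩
        rw [eM _ hk] at a
        rw [eL _ hk] at b
        exact hcond ⟨k.val, hk⟩ l a b
    · intro i j hij hj
      rw [eM j hj, eM i (by omega)]
      exact hmu_mono hij
    · intro i j hij hj
      rw [eL j hj, eL i (by omega)]
      exact hlam_anti hij
    · intro i hi
      rw [eM i hi]
      obtain ⟨j, h1, h2, _⟩ := hmu_mem ⟨i, hi⟩
      simp only at h2
      omega
    · intro i hi
      rw [eM i hi, eL i hi]
      obtain ⟨j, h1, h2, h3⟩ := hmu_mem ⟨i, hi⟩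
      have := hlam_max _ _ h3
      omega
    · intro i hi
      rw [eL i hi]
      obtain ⟨j, h1, _⟩ := hlam_mem ⟨i, hi⟩
      omega
  have hset : ∀ c, (∀ i < n, L i - M i + i = c) →
      {h : ℕ | ∃ i : Fin n, h = lam i - mu i + i.val} = {c} := by
    intro c hc
    ext h
    simp only [Set.mem_setOf_eq, Set.mem_singleton_iff]
    constructor
    · rintro ⟨i, rfl⟩
      rw [← hc i i.2, eM _ i.2, eL _ i.2]
    · rintro rfl
      refine ⟨⟨0, hn⟩, ?_⟩
      rw [← hc 0 hn, eM _ hn, eL _ hn]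
  constructor
  · rintro ⟨rs, hrs, hreg, hlen⟩
    have key := D.fwd rs hrs ((EdgeCM.wr_iff _ _).1 hreg.toIsWeaklyRegular) hlen
    rw [hset (m - rs.length) fun i hi => (key i hi).1]
    simp only [csInf_singleton, csSup_singleton, true_and]
    exact (key 0 hn).2
  · rintro ⟨h1, h2⟩
    apply D.bwd
    have hfin : {h : ℕ | ∃ i : Fin n, h = lam i - mu i + i.val}.Finite := by
      have := Set.finite_range (fun i : Fin n => lam i - mu i + i.val)
      refine this.subset ?_
      rintro _ ⟨i, rfl⟩; exact ⟨i, rfl⟩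
    have hmem : ∀ i (hi : i < n), L i - M i + i ∈ {h : ℕ | ∃ i : Fin n, h = lam i - mu i + i.val} := by
      intro i hi
      exact ⟨⟨i, hi⟩, by rw [eM _ hi, eL _ hi]⟩
    have hup : ∀ i < n, L i - M i + i ≤ sSup {h : ℕ | ∃ i : Fin n, h = lam i - mu i + i.val} :=
      fun i hi => le_csSup hfin.bddAbove (hmem i hi)
    have hlo : ∀ i < n, sInf {h : ℕ | ∃ i : Fin n, h = lam i - mu i + i.val} ≤ L i - M i + i :=
      fun i hi => Nat.sInf_le (hmem i hi)
    intro i hi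
    have a1 := hup i hi
    have a2 := hlo i hi
    have a3 := hup (n - 1) (by omega)
    have a5 := D.h2 (n - 1) (by omega)
    omega
end

section
/- Let G be a threshold graph on {1,…,m} with weight vector w satisfying w_1 ≥ w_2 ≥ ⋯ ≥ w_m, and assume G has no isolated vertices. Then the edge ideal I_G equals the ideal of S generated by the monomials x_i·x_j with 1 ≤ i ≤ n and i < j ≤ λ_i; that is, I_G = Ī_{λ−μ} is the specialization of the generalized Ferrers ideal determined by λ = (λ_1,…,λ_n) and μ = (1, 2, …, n). -/
open MvPolynomial

/-- Let `G` be a threshold graph on `{1,…,m}` with weight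
vector `w` satisfying `w_1 ≥ ⋯ ≥ w_m`, without isolated vertices; let
`n := max{i : i ~ j for some j > i}` and `λ_i := max{j : i ~ j}`. Then the edge
ideal `I_G ⊆ S = K[x_1,…,x_m]` equals the ideal generated by the monomials
`x_i x_j` with `1 ≤ i ≤ n` and `i < j ≤ λ_i`, i.e. `I_G = Ī_{λ−μ}` with
`μ = (1,2,…,n)`.
Vertices are `Fin m` (vertex `v` has 1-based label `v.val + 1`); `i : Fin n`
has 1-based label `i.val + 1`, so `i < j ≤ λ_i` reads `i.val < j.val ∧ j.val < lam i`. -/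
theorem threshold_edge_ideal_eq_specialized_ferrers
    (K : Type*) [Field K]
    (m : ℕ) (hm : 2 ≤ m) (G : SimpleGraph (Fin m)) (w : Fin m → ℝ)
    (hthr : ∀ i j : Fin m, i ≠ j → (G.Adj i j ↔ 0 < w i + w j))
    (hw : Antitone w)
    (hiso : ∀ i, ∃ j, G.Adj i j)
    (n : ℕ) (hn : 1 ≤ n) (hnm : n ≤ m)
    (hn_mem : ∃ j : Fin m, n - 1 < j.val ∧ G.Adj ⟨n - 1, by omega⟩ j)
    (hn_max : ∀ i j : Fin m, n ≤ i.val → i.val < j.val → ¬ G.Adj i j)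
    (lam : Fin n → ℕ)
    (hlam_mem : ∀ i : Fin n, ∃ j : Fin m, j.val + 1 = lam i ∧ G.Adj (Fin.castLE hnm i) j)
    (hlam_max : ∀ (i : Fin n) (j : Fin m), G.Adj (Fin.castLE hnm i) j → j.val < lam i) :
    Ideal.span {p : MvPolynomial (Fin m) K |
        ∃ i j : Fin m, G.Adj i j ∧ p = X i * X j} =
      Ideal.span {p : MvPolynomial (Fin m) K |
        ∃ (i : Fin n) (j : Fin m), i.val < j.val ∧ j.val < lam i ∧
          p = X (Fin.castLE hnm i) * X j} := by
  congr 1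
  ext p
  constructor
  · have key : ∀ i j : Fin m, i.val < j.val → G.Adj i j →
        ∃ (a : Fin n) (b : Fin m), a.val < b.val ∧ b.val < lam a ∧
          (X i * X j : MvPolynomial (Fin m) K) = X (Fin.castLE hnm a) * X b := by
      intro i j hij hadj
      have hi : i.val < n := by
        by_contra h
        exact hn_max i j (by omega) hij hadj
      exact ⟨⟨i.val, hi⟩, j, hij, hlam_max ⟨i.val, hi⟩ j hadj, rfl⟩
    rintro ⟨i, j, hadj, rfl⟩
    rcases lt_or_gt_of_ne (fun h => hadj.ne (Fin.ext h) : i.val ≠ j.val) with h | h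
    · exact key i j h hadj
    · rw [mul_comm]
      exact key j i h hadj.symm
  · rintro ⟨i, j, hij, hj, rfl⟩
    obtain ⟨l, hl, hadj⟩ := hlam_mem i
    refine ⟨Fin.castLE hnm i, j, ?_, rfl⟩
    have hne : Fin.castLE hnm i ≠ j := by
      intro h
      have := congrArg Fin.val h
      simp at this
      omega
    rw [hthr _ _ hne]
    have h1 := (hthr _ _ hadj.ne).1 hadj
    have h2 : w l ≤ w j := hw (Fin.le_def.2 (by omega))
    linarith
end

section
/- Let G be a threshold graph on {1,…,m} with weight vector w satisfying w_1 ≥ w_2 ≥ ⋯ ≥ w_m, and assume G has no isolated vertices. Then the depth of S/I_G equals 1; concretely: every list of elements of the maximal ideal 𝔪 = (x_1,…,x_m) of S that is a regular sequence on the S-module S/I_G has length at most 1, and there exists an element of 𝔪 that is a nonzerodivisor on S/I_G. -/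
open MvPolynomial

lemma edge_aux_lin {K : Type*} [Field K] {m : ℕ} (G : SimpleGraph (Fin m))
    (k : Fin m) (t : MvPolynomial (Fin m) K)
    (h : X k * t ∈ Ideal.span {p : MvPolynomial (Fin m) K |
              ∃ i j : Fin m, G.Adj i j ∧ p = X i * X j}) : constantCoeff t = 0 := by
  have key : ∀ p ∈ Ideal.span {p : MvPolynomial (Fin m) K |
      ∃ i j : Fin m, G.Adj i j ∧ p = X i * X j}, constantCoeff (pderiv k p) = 0 := by
    intro p hp
    induction hp using Submodule.span_induction with
    | mem x hx =>
      obtain ⟨i, j, _, rfl⟩ := hx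
      simp [Derivation.leibniz]
    | zero => simp
    | add x y _ _ hx hy => simp [hx, hy]
    | smul a x hx' hx =>
      have h0 : constantCoeff x = 0 := by
        have : Ideal.span {p : MvPolynomial (Fin m) K |
            ∃ i j : Fin m, G.Adj i j ∧ p = X i * X j} ≤ RingHom.ker constantCoeff := by
          rw [Ideal.span_le]
          rintro _ ⟨i, j, _, rfl⟩
          simp [RingHom.mem_ker]
        exact this hx'
      simp [Derivation.leibniz, hx, h0]
  have := key _ h
  simpa [Derivation.leibniz] using this

lemma edge_aux_split {K : Type*} [Field K] {m : ℕ} (G : SimpleGraph (Fin m)) (z : Fin m)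
    (hz : ∀ j, j ≠ z → G.Adj z j) (r : MvPolynomial (Fin m) K)
    (hr : r ∈ Ideal.span (Set.range (X : Fin m → MvPolynomial (Fin m) K))) :
    ∃ a b, r = X z * a + b ∧ X z * b ∈ Ideal.span {p : MvPolynomial (Fin m) K |
              ∃ i j : Fin m, G.Adj i j ∧ p = X i * X j} := by
  induction hr using Submodule.span_induction with
  | mem x hx =>
    obtain ⟨i, rfl⟩ := hx
    by_cases h : i = z
    · exact ⟨1, 0, by simp [h], by simp⟩
    · exact ⟨0, X i, by simp, Ideal.subset_span ⟨z, i, hz i h, rfl⟩⟩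
  | zero => exact ⟨0, 0, by simp, by simp⟩
  | add x y _ _ hx hy =>
    obtain ⟨a, b, rfl, h⟩ := hx
    obtain ⟨c, d, rfl, h'⟩ := hy
    exact ⟨a + c, b + d, by ring, by rw [mul_add]; exact Ideal.add_mem _ h h'⟩
  | smul q x _ hx =>
    obtain ⟨a, b, rfl, h⟩ := hx
    refine ⟨q * a, q * b, by simp only [smul_eq_mul]; ring, ?_⟩
    rw [mul_left_comm]
    exact Ideal.mul_mem_left _ _ h

lemma edge_aux_nzd {K : Type*} [Field K] {m : ℕ} (G : SimpleGraph (Fin m)) (z : Fin m)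
    (f : MvPolynomial (Fin m) K)
    (h : (∑ i, X i) * f ∈ Ideal.span {p : MvPolynomial (Fin m) K |
              ∃ i j : Fin m, G.Adj i j ∧ p = X i * X j}) :
    f ∈ Ideal.span {p : MvPolynomial (Fin m) K |
              ∃ i j : Fin m, G.Adj i j ∧ p = X i * X j} := by
  classical
  have hset : {p : MvPolynomial (Fin m) K | ∃ i j : Fin m, G.Adj i j ∧ p = X i * X j} =
      (fun s => monomial s (1 : K)) ''
        {s | ∃ i j, G.Adj i j ∧ s = Finsupp.single i 1 + Finsupp.single j 1} := by
    ext p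
    constructor
    · rintro ⟨i, j, hij, rfl⟩
      exact ⟨_, ⟨i, j, hij, rfl⟩, by simp [X, monomial_mul]⟩
    · rintro ⟨_, ⟨i, j, hij, rfl⟩, rfl⟩
      exact ⟨i, j, hij, by simp [X, monomial_mul]⟩
  by_contra hf
  have hex : ∃ e ∈ f.support, ∀ i j, G.Adj i j → e i ≠ 0 → e j = 0 := by
    by_contra hcon
    push Not at hcon
    apply hf
    rw [hset, mem_ideal_span_monomial_image]
    intro e he
    obtain ⟨i, j, hij, hi, hj⟩ := hcon e he
    refine ⟨_, ⟨i, j, hij, rfl⟩, ?_⟩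
    intro k
    have hne := hij.ne
    simp only [Finsupp.add_apply, Finsupp.single_apply]
    split_ifs with h1 h2 h2
    · exact absurd (h1.trans h2.symm) hne
    · subst h1; omega
    · subst h2; omega
    · omega
  obtain ⟨e, he, hind⟩ := hex
  obtain ⟨A, hAne, hA, hAe⟩ : ∃ A : Finset (Fin m), A.Nonempty ∧
      (∀ i j, G.Adj i j → i ∈ A → j ∉ A) ∧ ∀ i, e i ≠ 0 → i ∈ A := by
    by_cases h0 : e = 0
    · refine ⟨{z}, by simp, ?_, by simp [h0]⟩
      intro i j hij hi hj
      rw [Finset.mem_singleton] at hi hj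
      exact hij.ne (hi.trans hj.symm)
    · refine ⟨e.support, Finsupp.support_nonempty_iff.2 h0, ?_, by simp⟩
      intro i j hij hi
      simpa using hind i j hij (by simpa using hi)
  let φ : MvPolynomial (Fin m) K →ₐ[K] MvPolynomial (Fin m) K :=
    aeval (fun i => if i ∈ A then X i else 0)
  have hφX : ∀ i, φ (X i) = if i ∈ A then X i else 0 := fun i => by simp [φ]
  have h1 : φ ((∑ i, X i) * f) = 0 := by
    have : Ideal.span {p : MvPolynomial (Fin m) K |
        ∃ i j : Fin m, G.Adj i j ∧ p = X i * X j} ≤ RingHom.ker φ := by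
      rw [Ideal.span_le]
      rintro _ ⟨i, j, hij, rfl⟩
      simp only [SetLike.mem_coe, RingHom.mem_ker, map_mul, hφX]
      by_cases hi : i ∈ A
      · simp [hA i j hij hi]
      · simp [hi]
    exact this h
  have h2 : φ (∑ i, X i) ≠ 0 := by
    intro h0
    obtain ⟨k, hk⟩ := hAne
    have := congrArg (coeff (Finsupp.single k 1)) h0
    simp [map_sum, hφX, coeff_sum, hk, coeff_X,
      Finsupp.single_left_inj] at this
  have h3 : φ f = 0 := by
    rw [map_mul] at h1
    exact (mul_eq_zero.1 h1).resolve_left h2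
  let J : Ideal (MvPolynomial (Fin m) K) := Ideal.span (X '' {i | i ∉ A})
  have h4 : (Ideal.Quotient.mkₐ K J).comp φ = Ideal.Quotient.mkₐ K J := by
    ext i
    simp only [AlgHom.comp_apply, hφX]
    split_ifs with hi
    · rfl
    · rw [map_zero]
      symm
      exact Ideal.Quotient.eq_zero_iff_mem.2 (Ideal.subset_span ⟨i, hi, rfl⟩)
  have h5 : f ∈ J := by
    have := congrArg (fun g => g f) h4
    simp only [AlgHom.comp_apply, h3, map_zero] at this
    exact Ideal.Quotient.eq_zero_iff_mem.1 this.symm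
  obtain ⟨i, hi, hei⟩ := mem_ideal_span_X_image.1 h5 e he
  exact hi (hAe i hei)

/-- Let `G` be a threshold graph on `{1,…,m}` with weight
vector `w` satisfying `w_1 ≥ ⋯ ≥ w_m`, without isolated vertices. Then the
depth of `S/I_G` equals `1`: every list of elements of the maximal ideal
`𝔪 = (x_1,…,x_m)` of `S = K[x_1,…,x_m]` that is a regular sequence on the
`S`-module `S/I_G` has length at most `1`, and there is an element of `𝔪`
that is a nonzerodivisor on `S/I_G`.
Vertices are `Fin m` (vertex `v` has 1-based label `v.val + 1`); `i : Fin n`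
has 1-based label `i.val + 1`. -/
theorem threshold_edge_ideal_depth_one
    (K : Type*) [Field K]
    (m : ℕ) (hm : 2 ≤ m) (G : SimpleGraph (Fin m)) (w : Fin m → ℝ)
    (hthr : ∀ i j : Fin m, i ≠ j → (G.Adj i j ↔ 0 < w i + w j))
    (hw : Antitone w)
    (hiso : ∀ i, ∃ j, G.Adj i j)
    (n : ℕ) (hn : 1 ≤ n) (hnm : n ≤ m)
    (hn_mem : ∃ j : Fin m, n - 1 < j.val ∧ G.Adj ⟨n - 1, by omega⟩ j)
    (hn_max : ∀ i j : Fin m, n ≤ i.val → i.val < j.val → ¬ G.Adj i j)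
    (lam : Fin n → ℕ)
    (hlam_mem : ∀ i : Fin n, ∃ j : Fin m, j.val + 1 = lam i ∧ G.Adj (Fin.castLE hnm i) j)
    (hlam_max : ∀ (i : Fin n) (j : Fin m), G.Adj (Fin.castLE hnm i) j → j.val < lam i) :
    (∀ rs : List (MvPolynomial (Fin m) K),
        (∀ r ∈ rs, r ∈ Ideal.span (Set.range (X : Fin m → MvPolynomial (Fin m) K))) →
        RingTheory.Sequence.IsRegular
          (MvPolynomial (Fin m) K ⧸
            Ideal.span {p : MvPolynomial (Fin m) K |
              ∃ i j : Fin m, G.Adj i j ∧ p = X i * X j}) rs →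
        rs.length ≤ 1) ∧
    (∃ r : MvPolynomial (Fin m) K,
        r ∈ Ideal.span (Set.range (X : Fin m → MvPolynomial (Fin m) K)) ∧
        IsSMulRegular
          (MvPolynomial (Fin m) K ⧸
            Ideal.span {p : MvPolynomial (Fin m) K |
              ∃ i j : Fin m, G.Adj i j ∧ p = X i * X j}) r) := by
  let z : Fin m := ⟨0, by omega⟩
  have hz : ∀ j, j ≠ z → G.Adj z j := by
    intro j hj
    obtain ⟨k, hk⟩ := hiso j
    have h1 := (hthr j k hk.ne).1 hk
    have h2 : w k ≤ w z := hw (Fin.mk_le_of_le_val (Nat.zero_le _))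
    exact (hthr z j hj.symm).2 (by linarith)
  generalize hI : Ideal.span {p : MvPolynomial (Fin m) K |
              ∃ i j : Fin m, G.Adj i j ∧ p = X i * X j} = I
  constructor
  · intro rs hrs hreg
    match rs, hrs, hreg with
    | [], _, _ => simp
    | [_], _, _ => simp
    | r :: s :: rs, hrs, hreg =>
      exfalso
      have hw := hreg.toIsWeaklyRegular
      rw [RingTheory.Sequence.isWeaklyRegular_cons_iff,
        RingTheory.Sequence.isWeaklyRegular_cons_iff] at hw
      obtain ⟨hr, hs, -⟩ := hw
      rw [isSMulRegular_quotient_iff_mem_of_smul_mem] at hr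
      replace hs := (isSMulRegular_quotient_iff_mem_of_smul_mem _ _).1 hs
      obtain ⟨a, b, hab, hb⟩ := edge_aux_split G z hz r (hrs r (by simp))
      obtain ⟨c, d, hcd, hd⟩ := edge_aux_split G z hz s (hrs s (by simp))
      rw [hI] at hb hd
      have hmem := hs (Ideal.Quotient.mk I (X z * a)) (by
        rw [Submodule.mem_smul_pointwise_iff_exists]
        refine ⟨Ideal.Quotient.mk I (X z * c), trivial, ?_⟩
        refine (Ideal.Quotient.eq (I := I) (x := r * (X z * c)) (y := s * (X z * a))).2 ?_
        have : r * (X z * c) - s * (X z * a) = c * (X z * b) - a * (X z * d) := by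
          rw [hab, hcd]; ring
        rw [this]
        exact Ideal.sub_mem _ (Ideal.mul_mem_left _ _ hb) (Ideal.mul_mem_left _ _ hd))
      rw [Submodule.mem_smul_pointwise_iff_exists] at hmem
      obtain ⟨t', -, ht⟩ := hmem
      obtain ⟨t, rfl⟩ := Ideal.Quotient.mk_surjective t'
      replace ht : r * t - X z * a ∈ I := (Ideal.Quotient.eq (I := I)).1 ht
      let o : Fin m := ⟨1, by omega⟩
      have ho : X z * X o ∈ I := by
        rw [← hI]
        exact Ideal.subset_span ⟨z, o, hz o (by simp [z, o, Fin.ext_iff]), rfl⟩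
      have e1 : X o * t ∈ I := by
        apply hr
        rw [smul_eq_mul]
        have : r * (X o * t) = X o * (r * t - X z * a) + a * (X z * X o) := by ring
        rw [this]
        exact Ideal.add_mem _ (Ideal.mul_mem_left _ _ ht) (Ideal.mul_mem_left _ _ ho)
      have e2 : X z * (t - 1) ∈ I := by
        apply hr
        rw [smul_eq_mul]
        have : r * (X z * (t - 1)) = X z * (r * t - X z * a) - X z * b := by
          linear_combination (-X z) * hab
        rw [this]
        exact Ideal.sub_mem _ (Ideal.mul_mem_left _ _ ht) hb
      rw [← hI] at e1 e2
      have f1 := edge_aux_lin G o t e1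
      have f2 := edge_aux_lin G z _ e2
      simp [f1] at f2
  · refine ⟨∑ i, X i, Ideal.sum_mem _ fun i _ => Ideal.subset_span ⟨i, rfl⟩, ?_⟩
    rw [isSMulRegular_quotient_iff_mem_of_smul_mem]
    intro f hf
    rw [← hI] at hf ⊢
    exact edge_aux_nzd G z f hf
end

section
/- Let I ⊆ S be a strongly stable monomial ideal all of whose minimal generators have degree two, and assume x_1·x_m ∈ I. Then λ_1 = m, λ_1 ≥ λ_2 ≥ ⋯ ≥ λ_n, and I equals the ideal of S generated by the monomials x_i·x_j with 1 ≤ i ≤ n and i ≤ j ≤ λ_i; that is, I = Ī_{λ−μ} is the specialization of the generalized Ferrers ideal determined by λ = (λ_1,…,λ_n) and μ = (0, 1, …, n−1). -/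
open MvPolynomial

/-- Let `I ⊆ S = K[x_1,…,x_m]` be a strongly stable monomial
ideal whose minimal generators all have degree two (expressed by: `I` is
generated by the monomials `x_i x_j` lying in `I`), with `x_1 x_m ∈ I`; let
`n := max{i : x_i x_j ∈ I for some j ≥ i}` and `λ_i := max{j : x_i x_j ∈ I}`.
Then `λ_1 = m`, `λ` is nonincreasing, and `I` equals the ideal generated by the
monomials `x_i x_j` with `1 ≤ i ≤ n` and `i ≤ j ≤ λ_i`; i.e. `I = Ī_{λ−μ}`
with `μ = (0,1,…,n−1)`.
Variables are indexed by `Fin m` (`x_v` has 1-based label `v.val + 1`);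
`i : Fin n` has 1-based label `i.val + 1`, so `i ≤ j ≤ λ_i` reads
`i.val ≤ j.val ∧ j.val < lam i`. Strong stability is expressed on exponent
vectors `u : Fin m →₀ ℕ`. -/
theorem strongly_stable_eq_specialized_ferrers
    (K : Type*) [Field K] (m : ℕ) (hm : 2 ≤ m)
    (I : Ideal (MvPolynomial (Fin m) K))
    (hss : ∀ u : Fin m →₀ ℕ, (monomial u (1 : K)) ∈ I →
      ∀ i j : Fin m, i < j → j ∈ u.support →
        (monomial (u + Finsupp.single i 1 - Finsupp.single j 1) (1 : K)) ∈ I)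
    (hgen : I = Ideal.span {p : MvPolynomial (Fin m) K |
        (∃ i j : Fin m, p = X i * X j) ∧ p ∈ I})
    (n : ℕ) (hn : 1 ≤ n) (hnm : n ≤ m)
    (hn_mem : ∃ j : Fin m, n - 1 ≤ j.val ∧
      (X (⟨n - 1, by omega⟩ : Fin m) * X j : MvPolynomial (Fin m) K) ∈ I)
    (hn_max : ∀ i j : Fin m, n ≤ i.val → i.val ≤ j.val →
      (X i * X j : MvPolynomial (Fin m) K) ∉ I)
    (lam : Fin n → ℕ)
    (hlam_mem : ∀ i : Fin n, ∃ j : Fin m, j.val + 1 = lam i ∧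
      (X (Fin.castLE hnm i) * X j : MvPolynomial (Fin m) K) ∈ I)
    (hlam_max : ∀ (i : Fin n) (j : Fin m),
      (X (Fin.castLE hnm i) * X j : MvPolynomial (Fin m) K) ∈ I → j.val < lam i)
    (hx1m : (X (⟨0, by omega⟩ : Fin m) * X (⟨m - 1, by omega⟩ : Fin m) :
      MvPolynomial (Fin m) K) ∈ I) :
    lam ⟨0, hn⟩ = m ∧
    Antitone lam ∧
    I = Ideal.span {p : MvPolynomial (Fin m) K |
      ∃ (i : Fin n) (j : Fin m), i.val ≤ j.val ∧ j.val < lam i ∧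
        p = X (Fin.castLE hnm i) * X j} := by
  have key : ∀ a b i : Fin m, i ≤ b →
      (X a * X b : MvPolynomial (Fin m) K) ∈ I → (X a * X i : MvPolynomial (Fin m) K) ∈ I := by
    intro a b i hib hab
    rcases hib.eq_or_lt with rfl | hlt
    · exact hab
    have e : ∀ c d : Fin m, (X c * X d : MvPolynomial (Fin m) K)
        = monomial (Finsupp.single c 1 + Finsupp.single d 1) 1 := by
      intro c d
      simp [X, monomial_mul]
    rw [e] at hab ⊢
    have h := hss _ hab i b hlt (by simp)
    have e2 : Finsupp.single a 1 + Finsupp.single b 1 + Finsupp.single i 1 - Finsupp.single b 1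
        = (Finsupp.single a 1 + Finsupp.single i 1 : Fin m →₀ ℕ) := by
      rw [add_right_comm, add_tsub_cancel_right]
    rwa [e2] at h
  refine ⟨?_, ?_, ?_⟩
  · obtain ⟨j, hj, -⟩ := hlam_mem ⟨0, hn⟩
    have h := hlam_max ⟨0, hn⟩ ⟨m - 1, by omega⟩ hx1m
    have := j.isLt
    simp only at h
    omega
  · intro a b hab
    obtain ⟨j, hj, hjI⟩ := hlam_mem b
    rw [mul_comm] at hjI
    have h := key _ (Fin.castLE hnm b) (Fin.castLE hnm a) (Fin.le_def.2 (Fin.le_def.1 hab)) hjI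
    rw [mul_comm] at h
    have := hlam_max a j h
    omega
  · apply le_antisymm
    · refine hgen.le.trans (Ideal.span_le.2 ?_)
      have main : ∀ i j : Fin m, i ≤ j → (X i * X j : MvPolynomial (Fin m) K) ∈ I →
          (X i * X j : MvPolynomial (Fin m) K) ∈ Ideal.span {p : MvPolynomial (Fin m) K |
      ∃ (i : Fin n) (j : Fin m), i.val ≤ j.val ∧ j.val < lam i ∧
        p = X (Fin.castLE hnm i) * X j} := by
        intro i j hij hI
        have hi : i.val < n := by
          by_contra hc
          exact hn_max i j (by omega) hij hI
        refine Ideal.subset_span ?_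
        exact ⟨⟨i.val, hi⟩, j, hij, hlam_max ⟨i.val, hi⟩ j hI, rfl⟩
      rintro p ⟨⟨i, j, rfl⟩, hI⟩
      rcases le_total i j with hij | hij
      · exact main i j hij hI
      · rw [mul_comm] at hI ⊢
        exact main j i hij hI
    · rw [Ideal.span_le]
      rintro p ⟨i, j, hij, hj, rfl⟩
      obtain ⟨k, hk, hkI⟩ := hlam_mem i
      exact key _ k j (by rw [Fin.le_def]; omega) hkI
end

section
/- Let I ⊆ S be a strongly stable monomial ideal all of whose minimal generators have degree two, with x_1·x_m ∈ I. Then S/I is Cohen–Macaulay if and only if I = (x_1,…,x_m)², where Cohen–Macaulayness is expressed as: there exists a list of elements of the maximal ideal 𝔪 = (x_1,…,x_m) of S that is a regular sequence on the S-module S/I and whose length equals the Krull dimension of the ring S/I. -/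
open MvPolynomial

/-- Let `I ⊆ S = K[x_1,…,x_m]` be a strongly stable monomial
ideal whose minimal generators all have degree two (expressed by: `I` is
generated by the monomials `x_i x_j` lying in `I`), with `x_1 x_m ∈ I`. Then
`S/I` is Cohen–Macaulay — i.e. there is a list of elements of
`𝔪 = (x_1,…,x_m)` that is a regular sequence on `S/I` of length equal to the
Krull dimension of `S/I` — if and only if `I = (x_1,…,x_m)²`.
Variables are indexed by `Fin m` (`x_v` has 1-based label `v.val + 1`).
Strong stability is expressed on exponent vectors `u : Fin m →₀ ℕ`. -/
theorem strongly_stable_cohenMacaulay_iff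
    (K : Type*) [Field K] (m : ℕ) (hm : 2 ≤ m)
    (I : Ideal (MvPolynomial (Fin m) K))
    (hss : ∀ u : Fin m →₀ ℕ, (monomial u (1 : K)) ∈ I →
      ∀ i j : Fin m, i < j → j ∈ u.support →
        (monomial (u + Finsupp.single i 1 - Finsupp.single j 1) (1 : K)) ∈ I)
    (hgen : I = Ideal.span {p : MvPolynomial (Fin m) K |
        (∃ i j : Fin m, p = X i * X j) ∧ p ∈ I})
    (hx1m : (X (⟨0, by omega⟩ : Fin m) * X (⟨m - 1, by omega⟩ : Fin m) :
      MvPolynomial (Fin m) K) ∈ I) :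
    (∃ rs : List (MvPolynomial (Fin m) K),
        (∀ r ∈ rs, r ∈ Ideal.span (Set.range (X : Fin m → MvPolynomial (Fin m) K))) ∧
        RingTheory.Sequence.IsRegular (MvPolynomial (Fin m) K ⧸ I) rs ∧
        (rs.length : WithBot ℕ∞) = ringKrullDim (MvPolynomial (Fin m) K ⧸ I)) ↔
      I = (Ideal.span (Set.range (X : Fin m → MvPolynomial (Fin m) K))) ^ 2 := by
  have hP : ∀ p q : Fin m, (X p * X q : MvPolynomial (Fin m) K)
      = monomial (Finsupp.single p 1 + Finsupp.single q 1) 1 := by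
    intro p q
    simp [X, monomial_mul]
  have step : ∀ a b i : Fin m, i ≤ b → (X a * X b : MvPolynomial (Fin m) K) ∈ I →
      (X a * X i : MvPolynomial (Fin m) K) ∈ I := by
    intro a b i hib h
    rcases hib.eq_or_lt with rfl | hlt
    · exact h
    · rw [hP] at h ⊢
      have h2 := hss _ h i b hlt (by simp)
      have e : Finsupp.single a 1 + Finsupp.single b 1 + Finsupp.single i 1 - Finsupp.single b 1
          = (Finsupp.single a 1 + Finsupp.single i 1 : Fin m →₀ ℕ) := by
        rw [add_right_comm]
        exact add_tsub_cancel_right _ _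
      rwa [e] at h2
  -- a ring hom killing all generators in `I` kills `I`
  have kill : ∀ (J : Ideal (MvPolynomial (Fin m) K)),
      (∀ i j : Fin m, (X i * X j : MvPolynomial (Fin m) K) ∈ I → X i * X j ∈ J) → I ≤ J := by
    intro J hJ
    rw [hgen, Ideal.span_le]
    rintro p ⟨⟨i, j, rfl⟩, hp⟩
    exact hJ i j hp
  set z : Fin m := ⟨0, by omega⟩ with hz
  set l : Fin m := ⟨m - 1, by omega⟩ with hl
  have hle : ∀ i : Fin m, i ≤ l := by
    intro i
    rw [Fin.le_def]
    have := i.2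
    simp only [hl]
    omega
  have hz0 : (X z : MvPolynomial (Fin m) K) ∉ I := by
    intro h
    have h1 : I ≤ RingHom.ker (aeval (fun _ => DualNumber.eps) :
        MvPolynomial (Fin m) K →ₐ[K] DualNumber K) := by
      apply kill
      intro i j _
      simp [RingHom.mem_ker]
    have h2 := h1 h
    rw [RingHom.mem_ker, aeval_X] at h2
    have h3 := congrArg TrivSqZeroExt.snd h2
    simp at h3
  have hne : I ≠ ⊤ := fun h => hz0 (h ▸ Submodule.mem_top)
  have : Nontrivial (MvPolynomial (Fin m) K ⧸ I) := Ideal.Quotient.nontrivial_iff.mpr hne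
  have hsoc : ∀ r ∈ Ideal.span (Set.range (X : Fin m → MvPolynomial (Fin m) K)),
      r * X z ∈ I := by
    intro r hr
    induction hr using Submodule.span_induction with
    | mem x hx =>
      obtain ⟨i, rfl⟩ := hx
      rw [mul_comm]
      exact step z l i (hle i) hx1m
    | zero => simp
    | add x y _ _ hx hy => rw [add_mul]; exact I.add_mem hx hy
    | smul a x _ hx => rw [smul_eq_mul, mul_assoc]; exact I.mul_mem_left a hx
  constructor
  · rintro ⟨rs, hrs, hreg, hdim⟩
    have hnil : rs = [] := by
      cases rs with
      | nil => rfl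
      | cons r rs =>
        exfalso
        have h1 := ((RingTheory.Sequence.isRegular_cons_iff _ _ _).mp hreg).1
        apply hz0
        rw [← Ideal.Quotient.eq_zero_iff_mem]
        apply h1
        simp only [smul_zero]
        rw [← Ideal.Quotient.eq_zero_iff_mem.mpr (hsoc r (hrs r (by simp)))]
        rfl
    subst hnil
    have hll : (X l * X l : MvPolynomial (Fin m) K) ∈ I := by
      by_contra hcon
      let f : MvPolynomial (Fin m) K →ₐ[K] Polynomial K :=
        aeval (fun i => if i = l then Polynomial.X else 0)
      have hf : I ≤ RingHom.ker f.toRingHom := by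
        apply kill
        intro i j hij
        rw [RingHom.mem_ker]
        by_cases hi : i = l
        · by_cases hj : j = l
          · subst hi; subst hj; exact absurd hij hcon
          · simp [f, hj]
        · simp [f, hi]
      have hsurj : Function.Surjective (Ideal.Quotient.lift I f.toRingHom hf) := by
        apply Ideal.Quotient.lift_surjective_of_surjective
        intro p
        refine ⟨Polynomial.aeval (X l) p, ?_⟩
        change f (Polynomial.aeval (X l) p) = p
        rw [← Polynomial.aeval_algHom_apply]
        simp [f]
      have h1 := ringKrullDim_le_of_surjective _ hsurj
      rw [← hdim, Polynomial.ringKrullDim_of_isNoetherianRing, ringKrullDim_eq_zero_of_field] at h1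
      norm_num at h1
    apply le_antisymm
    · apply kill
      intro i j _
      rw [pow_two]
      exact Ideal.mul_mem_mul (Ideal.subset_span ⟨i, rfl⟩) (Ideal.subset_span ⟨j, rfl⟩)
    · rw [pow_two, Ideal.span_mul_span', Ideal.span_le]
      rintro _ ⟨_, ⟨i, rfl⟩, _, ⟨j, rfl⟩, rfl⟩
      have h1 := step l l i (hle i) hll
      rw [mul_comm] at h1
      exact step i l j (hle j) h1
  · intro hI
    refine ⟨[], by simp, RingTheory.Sequence.IsRegular.nil _ _, ?_⟩
    have : Ring.KrullDimLE 0 (MvPolynomial (Fin m) K ⧸ I) := by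
      rw [Ring.krullDimLE_zero_iff]
      intro P hPp
      have hc : (P.comap (Ideal.Quotient.mk I)).IsMaximal := by
        have hcp : (P.comap (Ideal.Quotient.mk I)).IsPrime := Ideal.comap_isPrime _ _
        have hle1 : I ≤ P.comap (Ideal.Quotient.mk I) := by
          intro x hx
          rw [Ideal.mem_comap, Ideal.Quotient.eq_zero_iff_mem.mpr hx]
          exact P.zero_mem
        have hle2 : Ideal.span (Set.range (X : Fin m → MvPolynomial (Fin m) K))
            ≤ P.comap (Ideal.Quotient.mk I) := by
          apply hcp.le_of_pow_le (n := 2)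
          rw [← hI]; exact hle1
        have hmax : (Ideal.span (Set.range (X : Fin m → MvPolynomial (Fin m) K))).IsMaximal := by
          have : Ideal.span (Set.range (X : Fin m → MvPolynomial (Fin m) K))
              = RingHom.ker (constantCoeff : MvPolynomial (Fin m) K →+* K) := by
            rw [← Set.image_univ]
            ext p
            rw [mem_ideal_span_X_image, RingHom.mem_ker, constantCoeff_eq]
            constructor
            · intro h
              by_contra h0
              obtain ⟨i, _, hi⟩ := h 0 (mem_support_iff.mpr h0)
              exact hi rfl
            · intro h u hu
              by_contra! h0
              have hu0 : u = 0 := by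
                ext i
                exact h0 i (Set.mem_univ i)
              rw [mem_support_iff, hu0] at hu
              exact hu h
          rw [this]
          exact RingHom.ker_isMaximal_of_surjective _ (fun a => ⟨C a, by simp⟩)
        rw [← hmax.eq_of_le hcp.ne_top hle2]
        exact hmax
      rw [← Ideal.map_comap_of_surjective _ Ideal.Quotient.mk_surjective P]
      exact (Ideal.map_eq_top_or_isMaximal_of_surjective _ Ideal.Quotient.mk_surjective hc).resolve_left
        (by rw [Ideal.map_comap_of_surjective _ Ideal.Quotient.mk_surjective P]; exact hPp.ne_top)
    simpa using (ringKrullDimZero_iff_ringKrullDim_eq_zero.mp this).symm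
end
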